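/- In the antithetic Milstein setting, for every real p ≥ 2 there exists a constant K_p, depending only on p, T, f and g, such that for every N ≥ 1 (with Δt = T/N), E[ max_{0 ≤ n ≤ N} ‖X̄_n − X^c_n‖^p ] ≤ K_p · Δt^p. -/

import Mathlib

open MeasureTheory ProbabilityTheory

/-- `h_{ijk}(x) = ½ ∑_l g_{lj}(x) ∂g_{ik}/∂x_l (x)`. -/
noncomputable def milsteinH {d m : ℕ} (g : (Fin d → ℝ) → Fin d → Fin m → ℝ)
    (x : Fin d → ℝ) (i : Fin d) (j k : Fin m) : ℝ :=
  1 / 2 * ∑ l : Fin d, g x l j * fderiv ℝ (fun y => g y i k) x (Pi.single l 1)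

/-- One step of the Milstein scheme with the Lévy areas omitted:
`x_i ↦ x_i + f_i(x) dt + ∑_j g_{ij}(x) dw_j + ∑_{j,k} h_{ijk}(x)(dw_j dw_k − δ_{jk} dt)`. -/
noncomputable def milsteinStep {d m : ℕ} (f : (Fin d → ℝ) → Fin d → ℝ)
    (g : (Fin d → ℝ) → Fin d → Fin m → ℝ) (dt : ℝ)
    (x : Fin d → ℝ) (dw : Fin m → ℝ) : Fin d → ℝ :=
  fun i => x i + f x i * dt + (∑ j : Fin m, g x i j * dw j)
    + ∑ j : Fin m, ∑ k : Fin m,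
        milsteinH g x i j k * (dw j * dw k - if j = k then dt else 0)

/-! Each of the fine and the antithetic path is at distance `O(√Δt)` from the other in `L^p`, but
their average is much closer to the coarse path. The Lévy area missed by a coarse step is
antisymmetric in the two half increments, hence enters the two paths with opposite signs and is
averaged to a martingale increment proportional to `X^f - X^a`, of size `O(Δt^{3/2})`. Averaging
the two paths inside the coefficients costs only `‖X^f - X^a‖² = O(Δt)`, by a midpoint expansion
for which Lipschitz derivatives suffice. The error of the average thus satisfies a perturbed
linear recursion whose martingale increments are `O(Δt^{3/2})` and whose drift terms are
`O(Δt²)`. As `L^{2k+2}` is 2-smooth, `N` martingale increments add up to `√N` times their size,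
so that a discrete Gronwall lemma gives `O(Δt)`, uniformly in time by Doob's maximal inequality. -/

open scoped NNReal ENNReal

universe u

namespace AntitheticMilstein

section CondCentered

variable {Ω E F : Type*} {m m' mΩ : MeasurableSpace Ω} {μ : Measure Ω}
  [NormedAddCommGroup E] [NormedSpace ℝ E] [CompleteSpace E]
  [NormedAddCommGroup F] [NormedSpace ℝ F] [CompleteSpace F]

/-- A random vector is *centered given `m`* if it is integrable and `𝔼[Y | m] = 0`. These are the
increments of martingales. Since `μ[Y|m]` is `0` by convention when `m` is not a sub-σ-algebra,
`m ≤ mΩ` is part of the definition. -/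
structure CondCentered (m : MeasurableSpace Ω) {mΩ : MeasurableSpace Ω} (μ : Measure Ω)
    (Y : Ω → E) : Prop where
  le : m ≤ mΩ
  integrable : Integrable Y μ
  condExp_eq_zero : μ[Y|m] =ᵐ[μ] 0

namespace CondCentered

variable {Y Z : Ω → E}

omit [CompleteSpace E] in
lemma zero (hm : m ≤ mΩ) : CondCentered m μ (0 : Ω → E) :=
  ⟨hm, integrable_zero _ _ _, by rw [condExp_zero]⟩

lemma add (hY : CondCentered m μ Y) (hZ : CondCentered m μ Z) : CondCentered m μ (Y + Z) where
  le := hY.le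
  integrable := hY.integrable.add hZ.integrable
  condExp_eq_zero := by
    filter_upwards [condExp_add hY.integrable hZ.integrable m, hY.condExp_eq_zero,
      hZ.condExp_eq_zero] with ω h hY hZ
    simp [h, hY, hZ]

lemma const_smul (c : ℝ) (hY : CondCentered m μ Y) : CondCentered m μ (c • Y) where
  le := hY.le
  integrable := hY.integrable.smul c
  condExp_eq_zero := by
    filter_upwards [condExp_smul c Y m, hY.condExp_eq_zero] with ω h hY
    simp [h, hY]

lemma sub (hY : CondCentered m μ Y) (hZ : CondCentered m μ Z) : CondCentered m μ (Y - Z) := by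
  simpa [sub_eq_add_neg] using hY.add (hZ.const_smul (-1))

lemma sum {ι : Type*} {s : Finset ι} {Y : ι → Ω → E} (hm : m ≤ mΩ)
    (hY : ∀ i ∈ s, CondCentered m μ (Y i)) : CondCentered m μ (∑ i ∈ s, Y i) :=
  Finset.sum_induction Y (CondCentered m μ) (fun _ _ => add) (zero hm) hY

lemma clm_comp (L : E →L[ℝ] F) (hY : CondCentered m μ Y) :
    CondCentered m μ (fun ω => L (Y ω)) where
  le := hY.le
  integrable := L.integrable_comp hY.integrable
  condExp_eq_zero := by
    filter_upwards [L.comp_condExp_comm hY.integrable (m := m), hY.condExp_eq_zero] with ω h hY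
    simpa [hY, Function.comp_def] using h.symm

lemma mono [IsFiniteMeasure μ] (hm : m ≤ m') (hY : CondCentered m' μ Y) : CondCentered m μ Y where
  le := hm.trans hY.le
  integrable := hY.integrable
  condExp_eq_zero := by
    filter_upwards [condExp_condExp_of_le (f := Y) (μ := μ) hm hY.le,
      condExp_congr_ae (m := m) hY.condExp_eq_zero] with ω h h'
    rw [← h, h', condExp_zero]

lemma mul_left {z Y : Ω → ℝ} (hz : StronglyMeasurable[m] z) (hY : CondCentered m μ Y)
    (hzY : Integrable (z * Y) μ) : CondCentered m μ (z * Y) where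
  le := hY.le
  integrable := hzY
  condExp_eq_zero := by
    filter_upwards [condExp_mul_of_stronglyMeasurable_left hz hzY hY.integrable,
      hY.condExp_eq_zero] with ω h hY
    simp [h, hY]

lemma smul_of_indep [IsFiniteMeasure μ] {c : Ω → ℝ} {v : Ω → E} (hm : m ≤ mΩ)
    (hc : Measurable c) (hci : Integrable c μ) (hc0 : ∫ ω, c ω ∂μ = 0)
    (hcm : Indep (MeasurableSpace.comap c inferInstance) m μ)
    (hv : StronglyMeasurable[m] v) (hvi : Integrable v μ) : CondCentered m μ (c • v) := by
  have hcv : Integrable (c • v) μ := by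
    borelize E
    exact IndepFun.integrable_smul
      ((IndepFun_iff_Indep _ _ _).2 (indep_of_indep_of_le_right hcm hv.measurable.comap_le))
      hci hvi
  have hc_condExp : μ[c|m] =ᵐ[μ] fun _ => μ[c] :=
    condExp_indep_eq hc.comap_le hm (comap_measurable c).stronglyMeasurable hcm
  refine ⟨hm, hcv, ?_⟩
  filter_upwards [condExp_smul_of_aestronglyMeasurable_right hci hcv hv.aestronglyMeasurable,
    hc_condExp] with ω h h'
  rw [h, Pi.smul_apply', h', hc0, zero_smul, Pi.zero_apply]

lemma integral_eq_zero [IsFiniteMeasure μ] (hY : CondCentered m μ Y) : ∫ ω, Y ω ∂μ = 0 := by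
  rw [← integral_condExp hY.le, integral_congr_ae hY.condExp_eq_zero]
  simp

end CondCentered

end CondCentered

section Holder

variable {Ω E F : Type*} {mΩ : MeasurableSpace Ω} {μ : Measure Ω}
  [NormedAddCommGroup E] [NormedAddCommGroup F] {f : Ω → E} {g : Ω → F}

lemma lpNorm_natCast_pow {n : ℕ} (hn : n ≠ 0) (hf : AEStronglyMeasurable f μ) :
    lpNorm f n μ ^ n = ∫ ω, ‖f ω‖ ^ n ∂μ := by
  rw [lpNorm_eq_integral_norm_rpow_toReal (by simpa using hn) (by simp) hf]
  simpa using Real.rpow_inv_natCast_pow (by positivity) hn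

lemma integrable_norm_pow_mul_norm_pow {a b : ℕ} (hf : MemLp f (a + b : ℕ) μ)
    (hg : MemLp g (a + b : ℕ) μ) (hab : a + b ≠ 0) :
    Integrable (fun ω => ‖f ω‖ ^ a * ‖g ω‖ ^ b) μ := by
  have hsum : Integrable (fun ω => ‖f ω‖ ^ (a + b) + ‖g ω‖ ^ (a + b)) μ :=
    (hf.integrable_norm_pow hab).add (hg.integrable_norm_pow hab)
  refine hsum.mono' ((hf.1.norm.pow a).mul (hg.1.norm.pow b)) (.of_forall fun ω => ?_)
  rw [Real.norm_of_nonneg (by positivity), pow_add, pow_add]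
  rcases le_total ‖f ω‖ ‖g ω‖ with h | h
  · exact le_add_of_nonneg_of_le (by positivity) (by gcongr)
  · exact le_add_of_le_of_nonneg (by gcongr) (by positivity)

lemma eLpNorm_natCast_pow {n : ℕ} (hn : n ≠ 0) (f : Ω → E) :
    eLpNorm f n μ ^ n = ∫⁻ ω, ‖f ω‖ₑ ^ n ∂μ := by
  simpa using eLpNorm_nnreal_pow_eq_lintegral (μ := μ) (f := f) (p := n) (by simpa using hn)

lemma lintegral_enorm_pow_mul_enorm_pow_le {a b : ℕ} (hf : AEStronglyMeasurable f μ)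
    (hg : AEStronglyMeasurable g μ) (hab : a + b ≠ 0) :
    ∫⁻ ω, ‖f ω‖ₑ ^ a * ‖g ω‖ₑ ^ b ∂μ
      ≤ eLpNorm f (a + b : ℕ) μ ^ a * eLpNorm g (a + b : ℕ) μ ^ b := by
  have hn : ((a + b : ℕ) : ℝ) ≠ 0 := by exact_mod_cast hab
  have pow_eq (x : ℝ≥0∞) (c : ℕ) : x ^ c = (x ^ (a + b)) ^ (c / (a + b : ℕ) : ℝ) := by
    rw [← ENNReal.rpow_natCast, ← ENNReal.rpow_natCast, ← ENNReal.rpow_mul, mul_div_cancel₀ _ hn]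
  simp only [pow_eq _ a, pow_eq _ b, eLpNorm_natCast_pow hab]
  refine ENNReal.lintegral_mul_norm_pow_le (hf.enorm.pow_const _) (hg.enorm.pow_const _)
    (by positivity) (by positivity) ?_
  rw [← add_div, ← Nat.cast_add, div_self hn]

lemma integral_norm_pow_mul_norm_pow_le {a b : ℕ} (hf : MemLp f (a + b : ℕ) μ)
    (hg : MemLp g (a + b : ℕ) μ) (hab : a + b ≠ 0) :
    ∫ ω, ‖f ω‖ ^ a * ‖g ω‖ ^ b ∂μ
      ≤ lpNorm f (a + b : ℕ) μ ^ a * lpNorm g (a + b : ℕ) μ ^ b := by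
  have h_lintegral : ∫ ω, ‖f ω‖ ^ a * ‖g ω‖ ^ b ∂μ
      = (∫⁻ ω, ‖f ω‖ₑ ^ a * ‖g ω‖ₑ ^ b ∂μ).toReal := by
    simpa using integral_norm_eq_lintegral_enorm
      (integrable_norm_pow_mul_norm_pow hf hg hab).aestronglyMeasurable
  rw [h_lintegral, ← toReal_eLpNorm hf.1, ← toReal_eLpNorm hg.1, ← ENNReal.toReal_pow,
    ← ENNReal.toReal_pow, ← ENNReal.toReal_mul]
  exact ENNReal.toReal_mono (ENNReal.mul_ne_top (ENNReal.pow_ne_top hf.eLpNorm_ne_top)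
    (ENNReal.pow_ne_top hg.eLpNorm_ne_top)) (lintegral_enorm_pow_mul_enorm_pow_le hf.1 hg.1 hab)

end Holder

lemma abs_add_pow_sub_taylor_le (z m : ℝ) (n : ℕ) :
    |(z + m) ^ (n + 2) - z ^ (n + 2) - (n + 2) * z ^ (n + 1) * m|
      ≤ (n + 2) * (n + 1) / 2 * ((|z| + |m|) ^ n * m ^ 2) := by
  induction n with
  | zero =>
    have h_eq : (z + m) ^ 2 - z ^ 2 - (0 + 2) * z ^ 1 * m = m ^ 2 := by ring
    rw [Nat.cast_zero, h_eq, abs_of_nonneg (sq_nonneg m)]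
    norm_num
  | succ n ih =>
    calc |(z + m) ^ (n + 3) - z ^ (n + 3) - ((n + 1 : ℕ) + 2) * z ^ (n + 2) * m|
        = |(z + m) * ((z + m) ^ (n + 2) - z ^ (n + 2) - (n + 2) * z ^ (n + 1) * m)
            + (n + 2) * (z ^ (n + 1) * m ^ 2)| := by push_cast; ring_nf
      _ ≤ (|z| + |m|) * ((n + 2) * (n + 1) / 2 * ((|z| + |m|) ^ n * m ^ 2))
            + (n + 2) * ((|z| + |m|) ^ (n + 1) * m ^ 2) := by
        refine (abs_add_le _ _).trans ?_
        rw [abs_mul, abs_mul, abs_mul, abs_pow, abs_pow, sq_abs,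
          abs_of_nonneg (by positivity : (0 : ℝ) ≤ n + 2)]
        gcongr
        · exact abs_add_le z m
        · exact le_add_of_nonneg_right (abs_nonneg m)
      _ = _ := by push_cast; ring

lemma pow_succ_add_mul_pow_le {x y : ℝ} (hx : 0 ≤ x) (hy : 0 ≤ y) (n : ℕ) :
    x ^ (n + 1) + y * x ^ n ≤ (x + y) ^ (n + 1) := by
  calc x ^ (n + 1) + y * x ^ n = (x + y) * x ^ n := by ring
    _ ≤ (x + y) * (x + y) ^ n := by gcongr; linarith
    _ = (x + y) ^ (n + 1) := by ring

section TwoSmooth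

variable {Ω : Type*} {m mΩ : MeasurableSpace Ω} {μ : Measure Ω} [IsProbabilityMeasure μ]

lemma integral_add_pow_le {z M : Ω → ℝ} (n : ℕ) (hz : StronglyMeasurable[m] z)
    (hzp : MemLp z (n + 2 : ℕ) μ) (hM : CondCentered m μ M) (hMp : MemLp M (n + 2 : ℕ) μ) :
    ∫ ω, (z ω + M ω) ^ (n + 2) ∂μ ≤ ∫ ω, z ω ^ (n + 2) ∂μ
      + (n + 2) * (n + 1) / 2 * ∫ ω, (|z ω| + |M ω|) ^ n * M ω ^ 2 ∂μ := by
  have h_pow_int {Y : Ω → ℝ} (hY : MemLp Y (n + 2 : ℕ) μ) :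
      Integrable (fun ω => Y ω ^ (n + 2)) μ :=
    (hY.integrable_norm_pow (by omega)).mono' (hY.1.pow _) (.of_forall fun ω => by simp)
  have h_linear : CondCentered m μ (z ^ (n + 1) * M) := by
    refine hM.mul_left (hz.pow _) ?_
    refine (integrable_norm_pow_mul_norm_pow (a := n + 1) (b := 1) hzp hMp (by omega)).mono'
      ((hzp.1.pow _).mul hMp.1) (.of_forall fun ω => by simp)
  have h_quad : Integrable (fun ω => (|z ω| + |M ω|) ^ n * M ω ^ 2) μ := by
    refine (integrable_norm_pow_mul_norm_pow (a := n) (b := 2) (hzp.abs.add hMp.abs) hMp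
      (by omega)).congr (.of_forall fun ω => ?_)
    simp [abs_of_nonneg (add_nonneg (abs_nonneg (z ω)) (abs_nonneg (M ω)))]
  have h_first : Integrable (fun ω => z ω ^ (n + 2) + (n + 2) * (z ^ (n + 1) * M) ω) μ :=
    (h_pow_int hzp).add (h_linear.integrable.const_mul _)
  calc ∫ ω, (z ω + M ω) ^ (n + 2) ∂μ
      ≤ ∫ ω, z ω ^ (n + 2) + (n + 2) * (z ^ (n + 1) * M) ω
          + (n + 2) * (n + 1) / 2 * ((|z ω| + |M ω|) ^ n * M ω ^ 2) ∂μ := by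
        refine integral_mono (h_pow_int (hzp.add hMp))
          (h_first.add (h_quad.const_mul _)) fun ω => ?_
        have := (abs_le.1 (abs_add_pow_sub_taylor_le (z ω) (M ω) n)).2
        simp only [Pi.mul_apply, Pi.pow_apply]
        linarith
    _ = _ := by
        rw [integral_add h_first (h_quad.const_mul _),
          integral_add (h_pow_int hzp) (h_linear.integrable.const_mul _), integral_const_mul,
          integral_const_mul, h_linear.integral_eq_zero, mul_zero, add_zero]

omit [IsProbabilityMeasure μ] in
lemma integral_abs_add_pow_mul_sq_le {z M : Ω → ℝ} (n : ℕ) (hz : MemLp z (n + 2 : ℕ) μ)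
    (hM : MemLp M (n + 2 : ℕ) μ) : ∫ ω, (|z ω| + |M ω|) ^ n * M ω ^ 2 ∂μ
      ≤ (lpNorm z (n + 2 : ℕ) μ + lpNorm M (n + 2 : ℕ) μ) ^ n * lpNorm M (n + 2 : ℕ) μ ^ 2 := by
  have h_sum_le : lpNorm (|z| + |M|) (n + 2 : ℕ) μ
      ≤ lpNorm z (n + 2 : ℕ) μ + lpNorm M (n + 2 : ℕ) μ := by
    refine (lpNorm_add_le hz.abs (by exact_mod_cast (by omega : 1 ≤ n + 2))).trans_eq ?_
    rw [lpNorm_abs hz.1, lpNorm_abs hM.1]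
  calc ∫ ω, (|z ω| + |M ω|) ^ n * M ω ^ 2 ∂μ
      = ∫ ω, ‖(|z| + |M|) ω‖ ^ n * ‖M ω‖ ^ 2 ∂μ := by
        refine integral_congr_ae (.of_forall fun ω => ?_)
        simp [abs_of_nonneg (add_nonneg (abs_nonneg (z ω)) (abs_nonneg (M ω)))]
    _ ≤ lpNorm (|z| + |M|) (n + 2 : ℕ) μ ^ n * lpNorm M (n + 2 : ℕ) μ ^ 2 :=
        integral_norm_pow_mul_norm_pow_le (hz.abs.add hM.abs) hM (by omega)
    _ ≤ _ := by gcongr; exact lpNorm_nonneg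

/-- `L^{2(k+1)}` is 2-smooth: a centered perturbation is felt only at second order. -/
lemma lpNorm_add_sq_le {z M : Ω → ℝ} (k : ℕ) (hz : StronglyMeasurable[m] z)
    (hzp : MemLp z (2 * k + 2 : ℕ) μ) (hM : CondCentered m μ M) (hMp : MemLp M (2 * k + 2 : ℕ) μ) :
    lpNorm (z + M) (2 * k + 2 : ℕ) μ ^ 2
      ≤ lpNorm z (2 * k + 2 : ℕ) μ ^ 2
        + (1 + (2 * k + 2) * (2 * k + 1) / 2 * 2 ^ k) * lpNorm M (2 * k + 2 : ℕ) μ ^ 2 := by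
  set a := lpNorm z (2 * k + 2 : ℕ) μ
  set b := lpNorm M (2 * k + 2 : ℕ) μ
  set C : ℝ := (2 * k + 2) * (2 * k + 1) / 2
  have _ha : 0 ≤ a := lpNorm_nonneg
  have _hb : 0 ≤ b := lpNorm_nonneg
  have h_pow_eq {Y : Ω → ℝ} (hY : MemLp Y (2 * k + 2 : ℕ) μ) :
      lpNorm Y (2 * k + 2 : ℕ) μ ^ (2 * k + 2) = ∫ ω, Y ω ^ (2 * k + 2) ∂μ := by
    rw [lpNorm_natCast_pow (by omega) hY.1]
    simp only [Real.norm_eq_abs, Even.pow_abs (n := 2 * k + 2) (by simp [Nat.even_add])]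
  have h_sq_add : (a + b) ^ 2 ≤ 2 * (a ^ 2 + b ^ 2) := add_sq_le
  refine le_of_pow_le_pow_left₀ k.succ_ne_zero (by positivity) ?_
  calc (lpNorm (z + M) (2 * k + 2 : ℕ) μ ^ 2) ^ (k + 1)
      = ∫ ω, (z ω + M ω) ^ (2 * k + 2) ∂μ := by
        rw [← pow_mul, mul_add, mul_one, h_pow_eq (hzp.add hMp)]; rfl
    _ ≤ a ^ (2 * k + 2) + C * ((a + b) ^ (2 * k) * b ^ 2) := by
        refine (integral_add_pow_le (2 * k) hz hzp hM hMp).trans ?_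
        rw [h_pow_eq hzp]
        push_cast
        gcongr
        exact integral_abs_add_pow_mul_sq_le (2 * k) hzp hMp
    _ = (a ^ 2) ^ (k + 1) + C * (((a + b) ^ 2) ^ k * b ^ 2) := by
        rw [← pow_mul, ← pow_mul]; ring
    _ ≤ (a ^ 2 + b ^ 2) ^ (k + 1) + C * ((2 * (a ^ 2 + b ^ 2)) ^ k * b ^ 2) := by
        gcongr
        exact le_add_of_nonneg_right (by positivity)
    _ = (a ^ 2 + b ^ 2) ^ (k + 1) + C * 2 ^ k * b ^ 2 * (a ^ 2 + b ^ 2) ^ k := by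
        rw [mul_pow]; ring
    _ ≤ (a ^ 2 + b ^ 2 + C * 2 ^ k * b ^ 2) ^ (k + 1) :=
        pow_succ_add_mul_pow_le (by positivity) (by positivity) k
    _ = (a ^ 2 + (1 + C * 2 ^ k) * b ^ 2) ^ (k + 1) := by ring

/-- The constant in the 2-smoothness inequality of `L^{2k+2}`. -/
noncomputable def twoSmoothConst (k : ℕ) : ℝ≥0 := 1 + (2 * k + 2) * (2 * k + 1) / 2 * 2 ^ k

lemma one_le_twoSmoothConst (k : ℕ) : 1 ≤ twoSmoothConst k := le_self_add

lemma eLpNorm_add_sq_le {z M : Ω → ℝ} (k : ℕ) (hz : StronglyMeasurable[m] z)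
    (hM : CondCentered m μ M) :
    eLpNorm (z + M) (2 * k + 2 : ℕ) μ ^ 2
      ≤ eLpNorm z (2 * k + 2 : ℕ) μ ^ 2 + twoSmoothConst k * eLpNorm M (2 * k + 2 : ℕ) μ ^ 2 := by
  have hC : (twoSmoothConst k : ℝ≥0∞) ≠ 0 := by
    exact_mod_cast (zero_lt_one.trans_le (one_le_twoSmoothConst k)).ne'
  by_cases hzp : MemLp z (2 * k + 2 : ℕ) μ; swap
  · have : eLpNorm z (2 * k + 2 : ℕ) μ = ∞ := by
      simpa [MemLp, (hz.mono hM.le).aestronglyMeasurable] using hzp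
    rw [this]; simp
  by_cases hMp : MemLp M (2 * k + 2 : ℕ) μ; swap
  · have : eLpNorm M (2 * k + 2 : ℕ) μ = ∞ := by simpa [MemLp, hM.integrable.1] using hMp
    rw [this]; simp [ENNReal.mul_top hC]
  rw [← ofReal_lpNorm hzp, ← ofReal_lpNorm hMp, ← ofReal_lpNorm (hzp.add hMp),
    ← ENNReal.ofReal_pow lpNorm_nonneg, ← ENNReal.ofReal_pow lpNorm_nonneg,
    ← ENNReal.ofReal_pow lpNorm_nonneg, ← ENNReal.ofReal_coe_nnreal (p := twoSmoothConst k),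
    ← ENNReal.ofReal_mul (by positivity), ← ENNReal.ofReal_add (by positivity) (by positivity)]
  exact ENNReal.ofReal_le_ofReal (by
    simpa [twoSmoothConst] using lpNorm_add_sq_le k hz hzp hM hMp)

omit [IsProbabilityMeasure μ] in
lemma stronglyMeasurable_sum_range {E : Type*} [NormedAddCommGroup E] {𝓕 : Filtration ℕ mΩ}
    {M : ℕ → Ω → E} {N : ℕ} (hM : ∀ j < N, StronglyMeasurable[𝓕 (j + 1)] (M j)) :
    StronglyMeasurable[𝓕 N] (∑ j ∈ Finset.range N, M j) :=
  Finset.stronglyMeasurable_sum _ fun j hj =>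
    (hM j (Finset.mem_range.1 hj)).mono (𝓕.mono (Finset.mem_range.1 hj))

lemma eLpNorm_sum_sq_le_of_condCentered (k : ℕ) {𝓕 : Filtration ℕ mΩ} {M : ℕ → Ω → ℝ} {N : ℕ}
    (hM : ∀ j < N, StronglyMeasurable[𝓕 (j + 1)] (M j))
    (hM0 : ∀ j < N, CondCentered (𝓕 j) μ (M j)) :
    eLpNorm (∑ j ∈ Finset.range N, M j) (2 * k + 2 : ℕ) μ ^ 2
      ≤ twoSmoothConst k * ∑ j ∈ Finset.range N, eLpNorm (M j) (2 * k + 2 : ℕ) μ ^ 2 := by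
  induction N with
  | zero => simp
  | succ N ih =>
    have h_adapted := stronglyMeasurable_sum_range fun j hj => hM j (hj.trans N.lt_succ_self)
    rw [Finset.sum_range_succ, Finset.sum_range_succ, mul_add]
    refine (eLpNorm_add_sq_le k h_adapted (hM0 N N.lt_succ_self)).trans ?_
    gcongr
    exact ih (fun j hj => hM j (hj.trans N.lt_succ_self))
      fun j hj => hM0 j (hj.trans N.lt_succ_self)

end TwoSmooth

section TypeTwo

variable (E : Type*) [NormedAddCommGroup E] [NormedSpace ℝ E] [FiniteDimensional ℝ E]

lemma exists_norm_le_sum_norm_clm :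
    ∃ (n : ℕ) (L : Fin n → E →L[ℝ] ℝ) (K : ℝ≥0), ∀ x, ‖x‖ ≤ K * ∑ i, ‖L i x‖ := by
  let A := (Module.finBasis ℝ E).equivFunL
  refine ⟨_, fun i => (ContinuousLinearMap.proj i).comp A.toContinuousLinearMap,
    ‖A.symm.toContinuousLinearMap‖₊, fun x => ?_⟩
  calc ‖x‖ = ‖A.symm (A x)‖ := by rw [A.symm_apply_apply]
    _ ≤ ‖A.symm.toContinuousLinearMap‖ * ‖A x‖ :=
      A.symm.toContinuousLinearMap.le_opNorm (A x)
    _ ≤ ‖A.symm.toContinuousLinearMap‖ * ∑ i, ‖A x i‖ := by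
      gcongr
      exact (pi_norm_le_iff_of_nonneg (by positivity)).2 fun i =>
        Finset.single_le_sum (f := fun i => ‖A x i‖) (fun _ _ => norm_nonneg _) (Finset.mem_univ i)

lemma ennreal_sq_sum_le_card_mul_sum_sq {ι : Type*} (s : Finset ι) (a : ι → ℝ≥0∞) :
    (∑ i ∈ s, a i) ^ 2 ≤ s.card * ∑ i ∈ s, a i ^ 2 := by
  have h := ENNReal.rpow_sum_le_const_mul_sum_rpow s a one_le_two
  norm_num at h
  exact_mod_cast h

variable {E}

omit [FiniteDimensional ℝ E] in
lemma eLpNorm_clm_sum_sq_le_of_condCentered [CompleteSpace E] {Ω : Type*} {mΩ : MeasurableSpace Ω}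
    {μ : Measure Ω} [IsProbabilityMeasure μ] {𝓕 : Filtration ℕ mΩ} {M : ℕ → Ω → E} {N : ℕ}
    (L : E →L[ℝ] ℝ) (k : ℕ)
    (hM : ∀ j < N, StronglyMeasurable[𝓕 (j + 1)] (M j))
    (hM0 : ∀ j < N, CondCentered (𝓕 j) μ (M j)) :
    eLpNorm (fun ω => L ((∑ j ∈ Finset.range N, M j) ω)) (2 * k + 2 : ℕ) μ ^ 2
      ≤ twoSmoothConst k * ‖L‖₊ ^ 2
        * ∑ j ∈ Finset.range N, eLpNorm (M j) (2 * k + 2 : ℕ) μ ^ 2 := by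
  have h_scalar := eLpNorm_sum_sq_le_of_condCentered k (μ := μ) (N := N)
    (fun j hj => L.continuous.comp_stronglyMeasurable (hM j hj))
    (fun j hj => (hM0 j hj).clm_comp L)
  have h_apply : (fun ω => L ((∑ j ∈ Finset.range N, M j) ω))
      = ∑ j ∈ Finset.range N, (fun ω => L (M j ω)) := by
    ext ω; simp
  rw [h_apply, mul_assoc, Finset.mul_sum]
  refine h_scalar.trans ?_
  gcongr
  rw [← mul_pow]
  gcongr
  exact eLpNorm_le_nnreal_smul_eLpNorm_of_ae_le_mul (.of_forall fun ω => L.le_opNNNorm _) _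

omit [FiniteDimensional ℝ E] in
lemma eLpNorm_le_mul_sum_eLpNorm_clm {Ω ι : Type*} [Fintype ι] {mΩ : MeasurableSpace Ω}
    {μ : Measure Ω} {q : ℝ≥0∞} (hq : 1 ≤ q) {L : ι → E →L[ℝ] ℝ} {K : ℝ≥0}
    (hL : ∀ x, ‖x‖ ≤ K * ∑ i, ‖L i x‖) {S : Ω → E} (hS : AEStronglyMeasurable S μ) :
    eLpNorm S q μ ≤ K * ∑ i, eLpNorm (fun ω => L i (S ω)) q μ := by
  have h_sum : eLpNorm (∑ i, fun ω => ‖L i (S ω)‖) q μ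
      ≤ ∑ i, eLpNorm (fun ω => L i (S ω)) q μ := by
    refine (eLpNorm_sum_le (fun i _ =>
      ((L i).continuous.comp_aestronglyMeasurable hS).norm) hq).trans_eq ?_
    simp only [eLpNorm_norm]
  refine (eLpNorm_le_nnreal_smul_eLpNorm_of_ae_le_mul (c := K) (.of_forall fun ω => ?_) q).trans
    (mul_le_mul_right h_sum _)
  rw [← NNReal.coe_le_coe]
  simpa [abs_of_nonneg (Finset.sum_nonneg fun i _ => abs_nonneg (L i (S ω)))] using hL (S ω)

variable (E)

/-- Finite-dimensional spaces have martingale type 2, in every `L^{2k+2}`. -/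
theorem exists_eLpNorm_sum_sq_le_of_condCentered (k : ℕ) :
    ∃ C : ℝ≥0, ∀ {Ω : Type u} {mΩ : MeasurableSpace Ω} {μ : Measure Ω} [IsProbabilityMeasure μ]
      {𝓕 : Filtration ℕ mΩ} {M : ℕ → Ω → E} {N : ℕ},
      (∀ j < N, StronglyMeasurable[𝓕 (j + 1)] (M j)) →
      (∀ j < N, CondCentered (𝓕 j) μ (M j)) →
      eLpNorm (∑ j ∈ Finset.range N, M j) (2 * k + 2 : ℕ) μ ^ 2
        ≤ C * ∑ j ∈ Finset.range N, eLpNorm (M j) (2 * k + 2 : ℕ) μ ^ 2 := by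
  obtain ⟨n, L, K, hL⟩ := exists_norm_le_sum_norm_clm E
  refine ⟨K ^ 2 * (n * ∑ i, twoSmoothConst k * ‖L i‖₊ ^ 2), ?_⟩
  intro Ω mΩ μ _ 𝓕 M N hM hM0
  have hq : (1 : ℝ≥0∞) ≤ (2 * k + 2 : ℕ) := by exact_mod_cast (by omega : 1 ≤ 2 * k + 2)
  set q : ℝ≥0∞ := ((2 * k + 2 : ℕ) : ℝ≥0∞)
  set S := ∑ j ∈ Finset.range N, M j
  have hS : AEStronglyMeasurable S μ :=
    ((stronglyMeasurable_sum_range hM).mono (𝓕.le N)).aestronglyMeasurable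
  calc eLpNorm S q μ ^ 2 ≤ (K * ∑ i, eLpNorm (fun ω => L i (S ω)) q μ) ^ 2 := by
        gcongr
        exact eLpNorm_le_mul_sum_eLpNorm_clm hq hL hS
    _ ≤ K ^ 2 * (n * ∑ i, eLpNorm (fun ω => L i (S ω)) q μ ^ 2) := by
        rw [mul_pow]
        gcongr
        simpa using ennreal_sq_sum_le_card_mul_sum_sq Finset.univ
          fun i => eLpNorm (fun ω => L i (S ω)) q μ
    _ ≤ K ^ 2 * (n * ∑ i, twoSmoothConst k * ‖L i‖₊ ^ 2
          * ∑ j ∈ Finset.range N, eLpNorm (M j) q μ ^ 2) := by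
        gcongr with i
        exact eLpNorm_clm_sum_sq_le_of_condCentered (L i) k hM hM0
    _ = _ := by
        push_cast
        rw [← Finset.sum_mul]
        ring

end TypeTwo

section Doob

variable {Ω : Type*} {mΩ : MeasurableSpace Ω} {μ : Measure Ω} [IsProbabilityMeasure μ]
  {𝓕 : Filtration ℕ mΩ}

lemma max_pow_sub_pow_le {b s : ℝ} (hb : 0 ≤ b) (n : ℕ) :
    max b s ^ (n + 2) - b ^ (n + 2) ≤ 2 * (s * (max b s ^ (n + 1) - b ^ (n + 1))) := by
  rcases le_total s b with h | h
  · simp [max_eq_left h]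
  have h_pow : b ^ n * (s - b) ≤ s ^ (n + 1) - b ^ (n + 1) := by
    have : b ^ n ≤ s ^ n := by gcongr
    nlinarith [mul_le_mul_of_nonneg_left this (hb.trans h), pow_succ s n, pow_succ b n]
  have : 0 ≤ (s - b) * b ^ n * (s - b) := by
    have := sub_nonneg.2 h
    positivity
  rw [max_eq_right h]
  nlinarith [mul_le_mul_of_nonneg_left h_pow (hb.trans h), pow_succ s (n + 1), pow_succ b (n + 1),
    pow_succ b n]

lemma integral_mul_le_integral_succ_mul_of_submartingale {S : ℕ → Ω → ℝ} (hS : Submartingale S 𝓕 μ)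
    {n : ℕ} {H : Ω → ℝ} (hH : StronglyMeasurable[𝓕 n] H) (hH0 : 0 ≤ H)
    (h_int : Integrable (S n * H) μ) (h_int' : Integrable (S (n + 1) * H) μ) :
    ∫ ω, (S n * H) ω ∂μ ≤ ∫ ω, (S (n + 1) * H) ω ∂μ := by
  rw [← integral_condExp (𝓕.le n) (f := S (n + 1) * H)]
  refine integral_mono_ae h_int integrable_condExp ?_
  filter_upwards [condExp_mul_of_stronglyMeasurable_right hH h_int' (hS.integrable _),
    hS.ae_le_condExp n.le_succ] with ω h_pull h_le
  rw [h_pull]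
  exact mul_le_mul_of_nonneg_right h_le (hH0 ω)

lemma stronglyMeasurable_partialSups {S : ℕ → Ω → ℝ} (hS : StronglyAdapted 𝓕 S) (n : ℕ) :
    StronglyMeasurable[𝓕 n] (partialSups S n) := by
  induction n with
  | zero => simpa using hS 0
  | succ n ih =>
    rw [partialSups_add_one]
    exact @StronglyMeasurable.sup _ _ _ _ (𝓕 (n + 1)) _ _ _ (ih.mono (𝓕.mono n.le_succ))
      (hS (n + 1))

omit [IsProbabilityMeasure μ] in
lemma memLp_partialSups {S : ℕ → Ω → ℝ} {p : ℝ≥0∞} (hS : ∀ j, MemLp (S j) p μ) (n : ℕ) :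
    MemLp (partialSups S n) p μ := by
  induction n with
  | zero => simpa using hS 0
  | succ n ih =>
    rw [partialSups_add_one]
    exact ih.sup (hS (n + 1))

lemma integral_partialSups_pow_le {S : ℕ → Ω → ℝ} (hS : Submartingale S 𝓕 μ) (hS0 : ∀ j, 0 ≤ S j)
    (n : ℕ) (hSp : ∀ j, MemLp (S j) (n + 2 : ℕ) μ) (N : ℕ) :
    ∫ ω, partialSups S N ω ^ (n + 2) ∂μ
      ≤ 2 * ∫ ω, (S N * partialSups S N ^ (n + 1)) ω ∂μ := by
  have h_nonneg (j : ℕ) : 0 ≤ partialSups S j := (hS0 j).trans (le_partialSups S j)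
  have h_int {Y A : Ω → ℝ} (hY : MemLp Y (n + 2 : ℕ) μ) (hA : MemLp A (n + 2 : ℕ) μ) :
      Integrable (Y * A ^ (n + 1)) μ :=
    (integrable_norm_pow_mul_norm_pow (a := n + 1) (b := 1) hA hY (by omega)).mono'
      (hY.1.mul (hA.1.pow _)) (.of_forall fun ω => by simp [mul_comm])
  have h_sup_int (j : ℕ) : Integrable (fun ω => partialSups S j ω ^ (n + 2)) μ :=
    ((memLp_partialSups hSp j).integrable_norm_pow (by omega)).congr
      (.of_forall fun ω => by simp [abs_of_nonneg (h_nonneg j ω)])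
  induction N with
  | zero =>
    have h_nonneg_int : 0 ≤ ∫ ω, S 0 ω ^ (n + 2) ∂μ :=
      integral_nonneg fun ω => pow_nonneg (hS0 0 ω) _
    simpa [pow_succ' _ (n + 1)] using le_mul_of_one_le_left h_nonneg_int one_le_two
  | succ N ih =>
    have h_sub := integral_mul_le_integral_succ_mul_of_submartingale hS
      ((stronglyMeasurable_partialSups hS.stronglyAdapted N).pow (n + 1))
      (fun ω => pow_nonneg (h_nonneg N ω) _)
      (h_int (hSp N) (memLp_partialSups hSp N)) (h_int (hSp (N + 1)) (memLp_partialSups hSp N))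
    have h_step : ∫ ω, partialSups S (N + 1) ω ^ (n + 2) - partialSups S N ω ^ (n + 2) ∂μ
        ≤ ∫ ω, 2 * ((S (N + 1) * partialSups S (N + 1) ^ (n + 1)) ω
          - (S (N + 1) * partialSups S N ^ (n + 1)) ω) ∂μ := by
      refine integral_mono ((h_sup_int _).sub (h_sup_int _))
        (((h_int (hSp _) (memLp_partialSups hSp _)).sub
          (h_int (hSp _) (memLp_partialSups hSp _))).const_mul 2) fun ω => ?_
      have := max_pow_sub_pow_le (h_nonneg N ω) (s := S (N + 1) ω) n
      simpa only [partialSups_add_one, Pi.sup_apply, Pi.mul_apply, Pi.pow_apply, mul_sub] using this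
    rw [integral_sub (h_sup_int _) (h_sup_int _), integral_const_mul,
      integral_sub (h_int (hSp _) (memLp_partialSups hSp _))
        (h_int (hSp _) (memLp_partialSups hSp _))] at h_step
    linarith

/-- Doob's maximal inequality in `L^p`, for integer exponents. -/
theorem lpNorm_partialSups_le {S : ℕ → Ω → ℝ} (hS : Submartingale S 𝓕 μ) (hS0 : ∀ j, 0 ≤ S j)
    (n : ℕ) (hSp : ∀ j, MemLp (S j) (n + 2 : ℕ) μ) (N : ℕ) :
    lpNorm (partialSups S N) (n + 2 : ℕ) μ ≤ 2 * lpNorm (S N) (n + 2 : ℕ) μ := by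
  set a := lpNorm (partialSups S N) (n + 2 : ℕ) μ
  have h_nonneg (j : ℕ) : 0 ≤ partialSups S j := (hS0 j).trans (le_partialSups S j)
  have h_pow : a ^ (n + 1) * a ≤ a ^ (n + 1) * (2 * lpNorm (S N) (n + 2 : ℕ) μ) := by
    calc a ^ (n + 1) * a = ∫ ω, partialSups S N ω ^ (n + 2) ∂μ := by
          rw [← pow_succ, lpNorm_natCast_pow (by omega) (memLp_partialSups hSp N).1]
          simp [abs_of_nonneg (h_nonneg N _)]
      _ ≤ 2 * ∫ ω, (S N * partialSups S N ^ (n + 1)) ω ∂μ :=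
          integral_partialSups_pow_le hS hS0 n hSp N
      _ = 2 * ∫ ω, ‖partialSups S N ω‖ ^ (n + 1) * ‖S N ω‖ ^ 1 ∂μ := by
          congr with ω
          simp [abs_of_nonneg (h_nonneg N ω), abs_of_nonneg (hS0 N ω), mul_comm]
      _ ≤ 2 * (a ^ (n + 1) * lpNorm (S N) (n + 2 : ℕ) μ ^ 1) := by
          gcongr
          exact integral_norm_pow_mul_norm_pow_le (memLp_partialSups hSp N) (hSp N) (by omega)
      _ = _ := by ring
  rcases (lpNorm_nonneg : 0 ≤ a).eq_or_lt with h | h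
  · exact h.symm.trans_le (mul_nonneg zero_le_two lpNorm_nonneg)
  · exact le_of_mul_le_mul_left h_pow (pow_pos h _)

variable {E : Type*} [NormedAddCommGroup E] [NormedSpace ℝ E]

lemma submartingale_norm_sum_of_condCentered [CompleteSpace E] {M : ℕ → Ω → E}
    (hM : ∀ j, StronglyMeasurable[𝓕 (j + 1)] (M j)) (hM0 : ∀ j, CondCentered (𝓕 j) μ (M j)) :
    Submartingale (fun n ω => ‖(∑ j ∈ Finset.range n, M j) ω‖) 𝓕 μ := by
  have hS (n : ℕ) := stronglyMeasurable_sum_range (N := n) fun j _ => hM j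
  have hSi (n : ℕ) : Integrable (∑ j ∈ Finset.range n, M j) μ :=
    integrable_finsetSum' _ fun j _ => (hM0 j).integrable
  refine submartingale_nat (fun n => (hS n).norm) (fun n => (hSi n).norm) fun n => ?_
  filter_upwards [norm_condExp_le (m := 𝓕 n) (∑ j ∈ Finset.range (n + 1), M j),
    condExp_add (hSi n) (hM0 n).integrable (𝓕 n), (hM0 n).condExp_eq_zero] with ω h_jensen h_add h0
  rw [Finset.sum_range_succ, h_add, Pi.add_apply, h0, Pi.zero_apply, add_zero,
    condExp_of_stronglyMeasurable (𝓕.le n) (hS n) (hSi n)] at h_jensen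
  simpa only [Finset.sum_range_succ] using h_jensen

/-- Doob's maximal inequality in `L^{n+2}` for vector-valued martingales with increments `M j`. -/
theorem exists_maximal_eLpNorm_le_of_condCentered [CompleteSpace E] (n : ℕ) {M : ℕ → Ω → E} {N : ℕ}
    (hM : ∀ j < N, StronglyMeasurable[𝓕 (j + 1)] (M j))
    (hM0 : ∀ j < N, CondCentered (𝓕 j) μ (M j)) (hMp : ∀ j < N, MemLp (M j) (n + 2 : ℕ) μ) :
    ∃ R : Ω → ℝ, AEStronglyMeasurable R μ ∧
      (∀ k ≤ N, ∀ ω, ‖(∑ j ∈ Finset.range k, M j) ω‖ ≤ R ω) ∧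
      eLpNorm R (n + 2 : ℕ) μ ≤ 2 * eLpNorm (∑ j ∈ Finset.range N, M j) (n + 2 : ℕ) μ := by
  let M' (j : ℕ) : Ω → E := if j < N then M j else 0
  have hM'_eq {k : ℕ} (hk : k ≤ N) : ∑ j ∈ Finset.range k, M' j = ∑ j ∈ Finset.range k, M j :=
    Finset.sum_congr rfl fun j hj => if_pos ((Finset.mem_range.1 hj).trans_le hk)
  let S (k : ℕ) (ω : Ω) : ℝ := ‖(∑ j ∈ Finset.range k, M' j) ω‖
  have hS : Submartingale S 𝓕 μ := by
    refine submartingale_norm_sum_of_condCentered (fun j => ?_) (fun j => ?_) <;>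
      by_cases hj : j < N
    · simpa [M', hj] using hM j hj
    · simpa [M', hj] using stronglyMeasurable_zero
    · simpa [M', hj] using hM0 j hj
    · simpa [M', hj] using CondCentered.zero (𝓕.le j)
  have hM'p (j : ℕ) : MemLp (M' j) (n + 2 : ℕ) μ := by
    by_cases hj : j < N
    · simpa only [M', if_pos hj] using hMp j hj
    · simpa only [M', if_neg hj] using MemLp.zero
  have hSp (k : ℕ) : MemLp (S k) (n + 2 : ℕ) μ :=
    (memLp_finsetSum' (Finset.range k) fun j _ => hM'p j).norm
  refine ⟨partialSups S N, (memLp_partialSups hSp N).1, fun k hk ω => ?_, ?_⟩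
  · rw [← hM'_eq hk]
    exact le_partialSups_of_le S hk ω
  · have h_doob := lpNorm_partialSups_le hS (fun _ _ => norm_nonneg _) n hSp N
    rw [← hM'_eq le_rfl, ← eLpNorm_norm (∑ j ∈ Finset.range N, M' j),
      ← ofReal_lpNorm (memLp_partialSups hSp N), ← ofReal_lpNorm (hSp N),
      ← ENNReal.ofReal_ofNat 2, ← ENNReal.ofReal_mul zero_le_two]
    exact ENNReal.ofReal_le_ofReal h_doob

end Doob

section LpBigO

variable {ι : Type*} {Ω : ι → Type*} [∀ i, MeasurableSpace (Ω i)] {μ : ∀ i, Measure (Ω i)}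
  {E F : Type*} [NormedAddCommGroup E] [NormedAddCommGroup F]

/-- The exponents in which `L^p` norms are measured. Even integers are convenient for moments and
suffice, since `L^p` norms on a probability space increase with `p`. -/
noncomputable def evenExponent (k : ℕ) : ℝ≥0∞ := (2 * k + 2 : ℕ)

lemma one_le_evenExponent (k : ℕ) : 1 ≤ evenExponent k := by
  simp only [evenExponent, Nat.one_le_cast]
  omega

instance holderTriple_evenExponent (k : ℕ) : ENNReal.HolderTriple
    (evenExponent (2 * k + 1)) (evenExponent (2 * k + 1)) (evenExponent k) := by
  refine ⟨?_⟩
  have : evenExponent (2 * k + 1) = 2 * evenExponent k := by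
    simp only [evenExponent]
    push_cast
    ring
  rw [this, ENNReal.mul_inv (.inl two_ne_zero) (.inl ENNReal.ofNat_ne_top), ← add_mul,
    ENNReal.inv_two_add_inv_two, one_mul]

lemma eLpNorm_smul_eq_mul_of_indepFun {Ω E : Type*} {mΩ : MeasurableSpace Ω} {μ : Measure Ω}
    [NormedAddCommGroup E] [NormedSpace ℝ E] [MeasurableSpace E] [BorelSpace E] {c : Ω → ℝ}
    {Y : Ω → E} (hc : AEStronglyMeasurable c μ) (hY : AEStronglyMeasurable Y μ)
    (h_indep : IndepFun c Y μ) {p : ℝ≥0∞} (hp0 : p ≠ 0) (hp : p ≠ ⊤) :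
    eLpNorm (c • Y) p μ = eLpNorm c p μ * eLpNorm Y p μ := by
  have h_pow : Measurable fun x : ℝ≥0∞ => x ^ p.toReal := measurable_id.pow_const _
  simp only [eLpNorm_eq_lintegral_rpow_enorm_toReal hp0 hp, Pi.smul_apply', enorm_smul,
    ENNReal.mul_rpow_of_nonneg _ _ ENNReal.toReal_nonneg]
  rw [lintegral_mul_eq_lintegral_mul_lintegral_of_indepFun'' (hc.enorm.pow_const _)
    (hY.enorm.pow_const _) (h_indep.comp (h_pow.comp measurable_enorm)
      (h_pow.comp measurable_enorm)), ENNReal.mul_rpow_of_nonneg _ _ (by positivity)]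

/-- The random vectors `Y i`, each on its own probability space, are `O(r k i)` in the `L^p` norm
with `p = 2k + 2`, for every `k` and uniformly in the parameter `i`. Letting the rate depend on `k`
allows it to involve `L^p` norms of other random vectors. -/
structure LpBigO (μ : ∀ i, Measure (Ω i)) (r : ℕ → ι → ℝ≥0∞) (Y : ∀ i, Ω i → E) : Prop where
  aestronglyMeasurable : ∀ i, AEStronglyMeasurable (Y i) (μ i)
  exists_bound : ∀ k, ∃ C : ℝ≥0, ∀ i, eLpNorm (Y i) (evenExponent k) (μ i) ≤ C * r k i

namespace LpBigO

variable {r r' : ℕ → ι → ℝ≥0∞} {ρ σ : ι → ℝ≥0∞} {Y Z : ∀ i, Ω i → E}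

lemma mono (hY : LpBigO μ r Y) (h : ∀ k, ∃ C : ℝ≥0, ∀ i, r k i ≤ C * r' k i) :
    LpBigO μ r' Y := by
  refine ⟨hY.aestronglyMeasurable, fun k => ?_⟩
  obtain ⟨C, hC⟩ := hY.exists_bound k
  obtain ⟨C', hC'⟩ := h k
  refine ⟨C * C', fun i => (hC i).trans ?_⟩
  rw [ENNReal.coe_mul, mul_assoc]
  gcongr
  exact hC' i

lemma mono_le (hY : LpBigO μ r Y) (h : ∀ k i, r k i ≤ r' k i) : LpBigO μ r' Y :=
  hY.mono fun k => ⟨1, fun i => by simpa using h k i⟩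

lemma comp {κ : Type*} (hY : LpBigO μ r Y) (φ : κ → ι) :
    LpBigO (fun j => μ (φ j)) (fun k j => r k (φ j)) (fun j => Y (φ j)) where
  aestronglyMeasurable j := hY.aestronglyMeasurable (φ j)
  exists_bound k := (hY.exists_bound k).imp fun _ h j => h (φ j)

lemma memLp (hY : LpBigO μ r Y) (k : ℕ) (i : ι) (hr : r k i ≠ ⊤) :
    MemLp (Y i) (evenExponent k) (μ i) := by
  obtain ⟨C, hC⟩ := hY.exists_bound k
  exact ⟨hY.aestronglyMeasurable i, (hC i).trans_lt (ENNReal.mul_lt_top (by simp) hr.lt_top)⟩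

lemma integrable [∀ i, IsFiniteMeasure (μ i)] (hY : LpBigO μ r Y) (i : ι) (hr : r 0 i ≠ ⊤) :
    Integrable (Y i) (μ i) :=
  (hY.memLp 0 i hr).integrable (one_le_evenExponent 0)

lemma self (hY : ∀ i, AEStronglyMeasurable (Y i) (μ i)) :
    LpBigO μ (fun k i => eLpNorm (Y i) (evenExponent k) (μ i)) Y :=
  ⟨hY, fun _ => ⟨1, fun i => by simp⟩⟩

lemma const [∀ i, IsProbabilityMeasure (μ i)] (v : E) :
    LpBigO μ (fun _ _ => 1) (fun _ _ => v) where
  aestronglyMeasurable _ := aestronglyMeasurable_const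
  exists_bound k := by
    refine ⟨‖v‖₊, fun i => ?_⟩
    rw [eLpNorm_const _ (zero_lt_one.trans_le (one_le_evenExponent k)).ne'
      (IsProbabilityMeasure.ne_zero _)]
    simp [enorm_eq_nnnorm]

lemma add (hY : LpBigO μ r Y) (hZ : LpBigO μ r Z) : LpBigO μ r (fun i => Y i + Z i) where
  aestronglyMeasurable i := (hY.aestronglyMeasurable i).add (hZ.aestronglyMeasurable i)
  exists_bound k := by
    obtain ⟨C, hC⟩ := hY.exists_bound k
    obtain ⟨D, hD⟩ := hZ.exists_bound k
    refine ⟨C + D, fun i => ?_⟩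
    rw [ENNReal.coe_add, add_mul]
    exact (eLpNorm_add_le (hY.aestronglyMeasurable i) (hZ.aestronglyMeasurable i)
      (one_le_evenExponent k)).trans (add_le_add (hC i) (hD i))

lemma of_norm_le {Z : ∀ i, Ω i → F} (hZ : LpBigO μ r Z)
    (hY : ∀ i, AEStronglyMeasurable (Y i) (μ i)) (K : ℝ≥0)
    (h : ∀ i ω, ‖Y i ω‖ ≤ K * ‖Z i ω‖) : LpBigO μ r Y where
  aestronglyMeasurable := hY
  exists_bound k := by
    obtain ⟨C, hC⟩ := hZ.exists_bound k
    refine ⟨K * C, fun i => ?_⟩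
    have h_le := eLpNorm_le_nnreal_smul_eLpNorm_of_ae_le_mul (μ := μ i) (c := K)
      (.of_forall fun ω => h i ω) (evenExponent k)
    rw [ENNReal.coe_mul, mul_assoc]
    exact h_le.trans (mul_le_mul_right (hC i) _)

lemma norm (hY : LpBigO μ r Y) : LpBigO μ r (fun i ω => ‖Y i ω‖) :=
  hY.of_norm_le (fun i => (hY.aestronglyMeasurable i).norm) 1 (by simp)

lemma neg (hY : LpBigO μ r Y) : LpBigO μ r (fun i => -Y i) :=
  hY.of_norm_le (fun i => (hY.aestronglyMeasurable i).neg) 1 (by simp)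

lemma sub (hY : LpBigO μ r Y) (hZ : LpBigO μ r Z) : LpBigO μ r (fun i => Y i - Z i) := by
  simpa only [sub_eq_add_neg] using hY.add hZ.neg

lemma zero : LpBigO μ r (fun i => (0 : Ω i → E)) where
  aestronglyMeasurable _ := aestronglyMeasurable_zero
  exists_bound _ := ⟨0, by simp⟩

lemma sum {κ : Type*} {s : Finset κ} {Y : κ → ∀ i, Ω i → E} (hY : ∀ j ∈ s, LpBigO μ r (Y j)) :
    LpBigO μ r (fun i => ∑ j ∈ s, Y j i) := by
  classical
  induction s using Finset.induction_on with
  | empty => simpa using zero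
  | insert j s hj ih =>
    simp only [Finset.sum_insert hj]
    exact (hY j (by simp)).add (ih fun l hl => hY l (by simp [hl]))

lemma smul_coe [NormedSpace ℝ E] (hY : LpBigO μ r Y) (c : ι → ℝ≥0) :
    LpBigO μ (fun k i => c i * r k i) (fun i => (c i : ℝ) • Y i) where
  aestronglyMeasurable i := (hY.aestronglyMeasurable i).const_smul _
  exists_bound k := by
    obtain ⟨C, hC⟩ := hY.exists_bound k
    refine ⟨C, fun i => ?_⟩
    rw [eLpNorm_const_smul, mul_left_comm]
    simpa [enorm_eq_nnnorm] using mul_le_mul_right (hC i) _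

lemma const_smul [NormedSpace ℝ E] (c : ℝ) (hY : LpBigO μ r Y) : LpBigO μ r (fun i => c • Y i) :=
  hY.of_norm_le (fun i => (hY.aestronglyMeasurable i).const_smul c) ‖c‖₊ fun i ω => by
    simp [norm_smul]

lemma norm_mul_norm {Z : ∀ i, Ω i → F} (hY : LpBigO μ (fun _ => ρ) Y)
    (hZ : LpBigO μ (fun _ => σ) Z) :
    LpBigO μ (fun _ i => ρ i * σ i) (fun i ω => ‖Y i ω‖ * ‖Z i ω‖) where
  aestronglyMeasurable i := (hY.aestronglyMeasurable i).norm.mul (hZ.aestronglyMeasurable i).norm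
  exists_bound k := by
    obtain ⟨C, hC⟩ := hY.exists_bound (2 * k + 1)
    obtain ⟨D, hD⟩ := hZ.exists_bound (2 * k + 1)
    refine ⟨C * D, fun i => ?_⟩
    have h_holder := eLpNorm_smul_le_mul_eLpNorm (p := evenExponent (2 * k + 1))
      (q := evenExponent (2 * k + 1)) (r := evenExponent k)
      (hZ.aestronglyMeasurable i).norm (hY.aestronglyMeasurable i).norm
    rw [ENNReal.coe_mul, mul_mul_mul_comm]
    rw [eLpNorm_norm, eLpNorm_norm] at h_holder
    exact h_holder.trans (mul_le_mul' (hC i) (hD i))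

lemma smul [NormedSpace ℝ E] {c : ∀ i, Ω i → ℝ} (hc : LpBigO μ (fun _ => ρ) c)
    (hY : LpBigO μ (fun _ => σ) Y) : LpBigO μ (fun _ i => ρ i * σ i) (fun i => c i • Y i) :=
  (hc.norm_mul_norm hY).of_norm_le
    (fun i => (hc.aestronglyMeasurable i).smul (hY.aestronglyMeasurable i)) 1
    fun i ω => by simp [norm_smul]

lemma smul_of_indepFun [NormedSpace ℝ E] [MeasurableSpace E] [BorelSpace E]
    {c : ∀ i, Ω i → ℝ} (hc : LpBigO μ r c) (hY : LpBigO μ r' Y)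
    (h_indep : ∀ i, IndepFun (c i) (Y i) (μ i)) :
    LpBigO μ (fun k i => r k i * r' k i) (fun i => c i • Y i) where
  aestronglyMeasurable i := (hc.aestronglyMeasurable i).smul (hY.aestronglyMeasurable i)
  exists_bound k := by
    obtain ⟨C, hC⟩ := hc.exists_bound k
    obtain ⟨D, hD⟩ := hY.exists_bound k
    refine ⟨C * D, fun i => ?_⟩
    rw [eLpNorm_smul_eq_mul_of_indepFun (hc.aestronglyMeasurable i) (hY.aestronglyMeasurable i)
      (h_indep i) (zero_lt_one.trans_le (one_le_evenExponent k)).ne' (ENNReal.natCast_ne_top _),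
      ENNReal.coe_mul, mul_mul_mul_comm]
    exact mul_le_mul' (hC i) (hD i)

lemma exists_integral_norm_rpow_le [∀ i, IsProbabilityMeasure (μ i)] {σ : ι → ℝ≥0}
    (hY : LpBigO μ (fun _ i => σ i) Y) {p : ℝ} (hp : 0 < p) :
    ∃ C : ℝ≥0, ∀ i, ∫ ω, ‖Y i ω‖ ^ p ∂μ i ≤ C * σ i ^ p := by
  have hp_le : ENNReal.ofReal p ≤ evenExponent ⌈p⌉₊ := by
    rw [evenExponent, ENNReal.ofReal_le_natCast]
    refine (Nat.le_ceil p).trans ?_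
    exact_mod_cast (by omega : ⌈p⌉₊ ≤ 2 * ⌈p⌉₊ + 2)
  obtain ⟨C, hC⟩ := hY.exists_bound ⌈p⌉₊
  refine ⟨C ^ p, fun i => ?_⟩
  have h_mem : MemLp (Y i) (ENNReal.ofReal p) (μ i) :=
    (hY.memLp ⌈p⌉₊ i ENNReal.coe_ne_top).mono_exponent hp_le
  have h_norm := (eLpNorm_le_eLpNorm_of_exponent_le hp_le h_mem.1).trans (hC i)
  rw [h_mem.eLpNorm_eq_integral_rpow_norm (by simpa using hp) ENNReal.ofReal_ne_top,
    ENNReal.toReal_ofReal hp.le, ← ENNReal.coe_mul, ENNReal.ofReal_le_coe,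
    Real.rpow_inv_le_iff_of_pos (by positivity) (by positivity) hp] at h_norm
  rwa [NNReal.coe_mul, Real.mul_rpow C.coe_nonneg (σ i).coe_nonneg, ← NNReal.coe_rpow] at h_norm

end LpBigO

end LpBigO

section Gronwall

lemma le_mul_one_add_pow_of_le_add_mul_sum {u : ℕ → ℝ≥0∞} {A c : ℝ≥0∞} {N : ℕ}
    (h : ∀ n ≤ N, u n ≤ A + c * ∑ j ∈ Finset.range n, u j) {n : ℕ} (hn : n ≤ N) :
    u n ≤ A * (1 + c) ^ n := by
  have h_sum : ∀ n ≤ N, A + c * ∑ j ∈ Finset.range n, u j ≤ A * (1 + c) ^ n := by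
    intro n hn
    induction n with
    | zero => simp
    | succ n ih =>
      calc A + c * ∑ j ∈ Finset.range (n + 1), u j
          = A + c * ∑ j ∈ Finset.range n, u j + c * u n := by rw [Finset.sum_range_succ]; ring
        _ ≤ A + c * ∑ j ∈ Finset.range n, u j + c * (A + c * ∑ j ∈ Finset.range n, u j) := by
          gcongr
          exact h n (by omega)
        _ = (A + c * ∑ j ∈ Finset.range n, u j) * (1 + c) := by ring
        _ ≤ A * (1 + c) ^ n * (1 + c) := by
          gcongr
          exact ih (by omega)
        _ = A * (1 + c) ^ (n + 1) := by ring
  exact (h n hn).trans (h_sum n hn)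

lemma exists_one_add_mul_pow_le (a T : ℝ≥0) :
    ∃ K : ℝ≥0, ∀ (δ : ℝ≥0) (N : ℕ), N * δ ≤ T → ∀ n ≤ N, (1 + a * δ) ^ n ≤ K := by
  refine ⟨(Real.exp (a * T)).toNNReal, fun δ N hN n hn => NNReal.le_toNNReal_of_coe_le ?_⟩
  have hnT : (n * δ : ℝ) ≤ T := by
    exact_mod_cast (mul_le_mul_left (Nat.cast_le.2 hn) δ).trans hN
  calc ((1 + a * δ : ℝ≥0) ^ n : ℝ) ≤ Real.exp (a * δ) ^ n := by
        push_cast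
        gcongr
        linarith [Real.add_one_le_exp (a * δ : ℝ)]
    _ = Real.exp (a * (n * δ)) := by rw [← Real.exp_nat_mul]; ring_nf
    _ ≤ Real.exp (a * T) := by gcongr

lemma add_add_sq_le (a b c : ℝ≥0∞) : (a + b + c) ^ 2 ≤ 3 * (a ^ 2 + b ^ 2 + c ^ 2) := by
  have h := ennreal_sq_sum_le_card_mul_sum_sq Finset.univ ![a, b, c]
  simpa [Fin.sum_univ_three] using h

lemma eq_add_sum_add_sum_of_recursion {E : Type*} [AddCommGroup E] {e D M : ℕ → E} {N : ℕ}
    (h_rec : ∀ n < N, e (n + 1) = e n + D n + M n) {n : ℕ} (hn : n ≤ N) :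
    e n = e 0 + ∑ j ∈ Finset.range n, D j + ∑ j ∈ Finset.range n, M j := by
  induction n with
  | zero => simp
  | succ n ih =>
    rw [h_rec n hn, ih (by omega), Finset.sum_range_succ, Finset.sum_range_succ]
    abel

lemma norm_sup'_norm_le_of_recursion {E : Type*} [SeminormedAddCommGroup E] {e D M : ℕ → E} {N : ℕ}
    {R : ℝ} (h_rec : ∀ n < N, e (n + 1) = e n + D n + M n)
    (hMR : ∀ n ≤ N, ‖∑ j ∈ Finset.range n, M j‖ ≤ R) :
    ‖(Finset.range (N + 1)).sup' Finset.nonempty_range_add_one fun n => ‖e n‖‖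
      ≤ ‖e 0‖ + ∑ j ∈ Finset.range N, ‖D j‖ + R := by
  rw [Real.norm_of_nonneg ((norm_nonneg _).trans
    (Finset.le_sup' (fun n => ‖e n‖) (Finset.mem_range.2 N.succ_pos)))]
  refine Finset.sup'_le _ _ fun n hn => ?_
  have hnN := Finset.mem_range_succ_iff.1 hn
  rw [eq_add_sum_add_sum_of_recursion h_rec hnN]
  refine norm_add₃_le.trans (add_le_add_three le_rfl ?_ (hMR n hnN))
  exact (norm_sum_le _ _).trans (Finset.sum_le_sum_of_subset_of_nonneg
    (Finset.range_subset_range.2 hnN) fun _ _ _ => norm_nonneg _)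

lemma aestronglyMeasurable_of_recursion {Ω E : Type*} {mΩ : MeasurableSpace Ω} {μ : Measure Ω}
    [NormedAddCommGroup E] {e D M : ℕ → Ω → E} {N : ℕ}
    (h_rec : ∀ n < N, e (n + 1) = e n + D n + M n) (h0 : AEStronglyMeasurable (e 0) μ)
    (hD : ∀ n < N, AEStronglyMeasurable (D n) μ) (hM : ∀ n < N, AEStronglyMeasurable (M n) μ)
    {n : ℕ} (hn : n ≤ N) : AEStronglyMeasurable (e n) μ := by
  have h_lt {j : ℕ} (hj : j ∈ Finset.range n) : j < N := (Finset.mem_range.1 hj).trans_le hn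
  rw [eq_add_sum_add_sum_of_recursion h_rec hn]
  exact (h0.add (Finset.aestronglyMeasurable_sum _ fun j hj => hD j (h_lt hj))).add
    (Finset.aestronglyMeasurable_sum _ fun j hj => hM j (h_lt hj))

lemma sq_sum_le_of_le_mul {C T h : ℝ≥0} {N n : ℕ} {d v : ℕ → ℝ≥0∞} (hN : N * h ^ 2 ≤ T)
    (hn : n ≤ N) (hd : ∀ j < n, d j ≤ C * (h ^ 2 * v j)) :
    (∑ j ∈ Finset.range n, d j) ^ 2
      ≤ T * (C ^ 2 * h ^ 2 * ∑ j ∈ Finset.range n, v j ^ 2) := by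
  have hN' : (N : ℝ≥0∞) * (h : ℝ≥0∞) ^ 2 ≤ T := by exact_mod_cast hN
  calc (∑ j ∈ Finset.range n, d j) ^ 2 ≤ n * ∑ j ∈ Finset.range n, d j ^ 2 := by
        simpa using ennreal_sq_sum_le_card_mul_sum_sq (Finset.range n) d
    _ ≤ N * ∑ j ∈ Finset.range n, (C * (h ^ 2 * v j)) ^ 2 := by
        gcongr with j hj
        exact hd j (Finset.mem_range.1 hj)
    _ = N * h ^ 2 * (C ^ 2 * h ^ 2 * ∑ j ∈ Finset.range n, v j ^ 2) := by
        simp only [mul_pow, ← Finset.mul_sum]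
        ring
    _ ≤ _ := by gcongr

/-- Squaring makes the martingale part `S`, controlled through squares, and the drift part
`∑ d`, controlled by Cauchy-Schwarz, amenable to the same Gronwall inequality. -/
lemma add_sq_le_of_le_add_sum_add {B C T h : ℝ≥0} {ρ s : ℝ≥0∞} {N n : ℕ} {u d m : ℕ → ℝ≥0∞}
    (hN : N * h ^ 2 ≤ T) (hn : n ≤ N) (hu : u n ≤ C * ρ + ∑ j ∈ Finset.range n, d j + s)
    (hs : s ^ 2 ≤ B * ∑ j ∈ Finset.range n, m j ^ 2)
    (hd : ∀ j < n, d j ≤ C * (h ^ 2 * (u j + ρ))) (hm : ∀ j < n, m j ≤ C * (h * (u j + ρ))) :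
    (u n + ρ) ^ 2 ≤ 3 * ((C + 1) * ρ) ^ 2
      + (3 * C ^ 2 * (T + B) * h ^ 2 : ℝ≥0) * ∑ j ∈ Finset.range n, (u j + ρ) ^ 2 := by
  set V : ℝ≥0∞ := ∑ j ∈ Finset.range n, (u j + ρ) ^ 2
  have h_mart : s ^ 2 ≤ B * (C ^ 2 * h ^ 2 * V) := by
    calc s ^ 2 ≤ B * ∑ j ∈ Finset.range n, (C * (h * (u j + ρ))) ^ 2 := by
          refine hs.trans ?_
          gcongr with j hj
          exact hm j (Finset.mem_range.1 hj)
      _ = _ := by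
          simp only [V, mul_pow, ← Finset.mul_sum]
          ring
  calc (u n + ρ) ^ 2 ≤ ((C + 1) * ρ + ∑ j ∈ Finset.range n, d j + s) ^ 2 := by
        refine pow_le_pow_left' ((add_le_add_left hu ρ).trans_eq ?_) 2
        ring
    _ ≤ 3 * (((C + 1) * ρ) ^ 2 + T * (C ^ 2 * h ^ 2 * V) + B * (C ^ 2 * h ^ 2 * V)) := by
        refine (add_add_sq_le _ _ _).trans ?_
        gcongr
        exact sq_sum_le_of_le_mul hN hn hd
    _ = _ := by
        push_cast
        ring

lemma exists_le_mul_of_le_add_sum_add (B C T : ℝ≥0) :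
    ∃ K : ℝ≥0, ∀ {h : ℝ≥0} {ρ : ℝ≥0∞} {N : ℕ} {u d m S : ℕ → ℝ≥0∞}, N * h ^ 2 ≤ T → u 0 ≤ C * ρ →
      (∀ n ≤ N, u n ≤ u 0 + ∑ j ∈ Finset.range n, d j + S n) →
      (∀ n ≤ N, S n ^ 2 ≤ B * ∑ j ∈ Finset.range n, m j ^ 2) →
      (∀ n < N, d n ≤ C * (h ^ 2 * (u n + ρ))) → (∀ n < N, m n ≤ C * (h * (u n + ρ))) →
      ∀ n ≤ N, u n ≤ K * ρ := by
  obtain ⟨K, hK⟩ := exists_one_add_mul_pow_le (3 * C ^ 2 * (T + B)) T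
  refine ⟨NNReal.sqrt (3 * (C + 1) ^ 2 * K), ?_⟩
  intro h ρ N u d m S hN h0 hu hS hd hm n hn
  have h_rec (n : ℕ) (hn : n ≤ N) := add_sq_le_of_le_add_sum_add hN hn
    ((hu n hn).trans (by gcongr)) (hS n hn) (fun j hj => hd j (hj.trans_le hn))
    (fun j hj => hm j (hj.trans_le hn))
  refine (le_self_add (b := ρ)).trans ((ENNReal.pow_le_pow_left_iff two_ne_zero).1 ?_)
  calc (u n + ρ) ^ 2
      ≤ 3 * ((C + 1) * ρ) ^ 2 * (1 + (3 * C ^ 2 * (T + B) * h ^ 2 : ℝ≥0)) ^ n :=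
        le_mul_one_add_pow_of_le_add_mul_sum h_rec hn
    _ ≤ 3 * ((C + 1) * ρ) ^ 2 * K := by
        gcongr
        exact_mod_cast hK (h ^ 2) N hN n hn
    _ = _ := by
        rw [mul_pow (NNReal.sqrt _ : ℝ≥0∞), ← ENNReal.coe_pow, NNReal.sq_sqrt]
        push_cast
        ring

variable {E : Type*} [NormedAddCommGroup E] [NormedSpace ℝ E] [FiniteDimensional ℝ E]

lemma exists_eLpNorm_le_of_recursion (k : ℕ) (C T : ℝ≥0) :
    ∃ K : ℝ≥0, ∀ {Ω : Type u} {mΩ : MeasurableSpace Ω} {μ : Measure Ω} [IsProbabilityMeasure μ]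
      {𝓕 : Filtration ℕ mΩ} {e D M : ℕ → Ω → E} {N : ℕ} {h : ℝ≥0} {ρ : ℝ≥0∞},
      N * h ^ 2 ≤ T → (∀ n < N, e (n + 1) = e n + D n + M n) → AEStronglyMeasurable (e 0) μ →
      (∀ n < N, AEStronglyMeasurable (D n) μ) → (∀ n < N, StronglyMeasurable[𝓕 (n + 1)] (M n)) →
      (∀ n < N, CondCentered (𝓕 n) μ (M n)) → eLpNorm (e 0) (evenExponent k) μ ≤ C * ρ →
      (∀ n < N, eLpNorm (D n) (evenExponent k) μ
        ≤ C * (h ^ 2 * (eLpNorm (e n) (evenExponent k) μ + ρ))) →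
      (∀ n < N, eLpNorm (M n) (evenExponent k) μ
        ≤ C * (h * (eLpNorm (e n) (evenExponent k) μ + ρ))) →
      ∀ n ≤ N, eLpNorm (e n) (evenExponent k) μ ≤ K * ρ := by
  obtain ⟨B, hB⟩ := exists_eLpNorm_sum_sq_le_of_condCentered E k
  obtain ⟨K, hK⟩ := exists_le_mul_of_le_add_sum_add B C T
  refine ⟨K, fun {Ω mΩ μ _ 𝓕 e D M N h ρ} hN h_rec he0 hD hM hM0 h0 hDp hMp => ?_⟩
  refine hK (S := fun n => eLpNorm (∑ j ∈ Finset.range n, M j) (evenExponent k) μ) hN h0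
    (fun n hn => ?_) (fun n hn => ?_) hDp hMp
  · have hD_range : ∀ j ∈ Finset.range n, AEStronglyMeasurable (D j) μ := fun j hj =>
      hD j ((Finset.mem_range.1 hj).trans_le hn)
    have hD_sum : AEStronglyMeasurable (∑ j ∈ Finset.range n, D j) μ :=
      Finset.aestronglyMeasurable_sum _ hD_range
    have hM_sum : AEStronglyMeasurable (∑ j ∈ Finset.range n, M j) μ :=
      Finset.aestronglyMeasurable_sum _ fun j hj =>
        (hM0 j ((Finset.mem_range.1 hj).trans_le hn)).integrable.1
    rw [eq_add_sum_add_sum_of_recursion h_rec hn]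
    refine (eLpNorm_add_le (he0.add hD_sum) hM_sum (one_le_evenExponent k)).trans ?_
    gcongr
    refine (eLpNorm_add_le he0 hD_sum (one_le_evenExponent k)).trans ?_
    gcongr
    exact eLpNorm_sum_le hD_range (one_le_evenExponent k)
  · exact hB (fun j hj => hM j (hj.trans_le hn)) (fun j hj => hM0 j (hj.trans_le hn))

variable {ι : Type*} {Ω : ι → Type u} [∀ i, MeasurableSpace (Ω i)] {μ : ∀ i, Measure (Ω i)}
  [∀ i, IsProbabilityMeasure (μ i)]

/-- A discrete Gronwall lemma in `L^p` for recursions with a drift `D` and martingale increments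
`M`, which may be as large as a multiple of `h ^ 2` and of `h`, respectively, when the number of
steps is `O(1 / h ^ 2)`. -/
theorem LpBigO.of_recursion {N : ι → ℕ} {h : ι → ℝ≥0} {T : ℝ≥0} {ρ : ι → ℝ≥0∞}
    {𝓕 : ∀ i, Filtration ℕ (inferInstance : MeasurableSpace (Ω i))} {e D M : ∀ i, ℕ → Ω i → E}
    (hN : ∀ i, N i * h i ^ 2 ≤ T) (h_rec : ∀ i, ∀ n < N i, e i (n + 1) = e i n + D i n + M i n)
    (h0 : LpBigO μ (fun _ => ρ) (fun i => e i 0))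
    (hD : LpBigO (fun s : Σ i, Fin (N i) => μ s.1)
      (fun k s => h s.1 ^ 2 * (eLpNorm (e s.1 s.2) (evenExponent k) (μ s.1) + ρ s.1))
      (fun s => D s.1 s.2))
    (hMp : LpBigO (fun s : Σ i, Fin (N i) => μ s.1)
      (fun k s => h s.1 * (eLpNorm (e s.1 s.2) (evenExponent k) (μ s.1) + ρ s.1))
      (fun s => M s.1 s.2))
    (hM : ∀ i, ∀ n < N i, StronglyMeasurable[𝓕 i (n + 1)] (M i n))
    (hM0 : ∀ i, ∀ n < N i, CondCentered (𝓕 i n) (μ i) (M i n)) :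
    LpBigO (fun s : Σ i, Fin (N i + 1) => μ s.1) (fun _ s => ρ s.1) (fun s => e s.1 s.2) where
  aestronglyMeasurable := by
    rintro ⟨i, n⟩
    exact aestronglyMeasurable_of_recursion (h_rec i) (h0.aestronglyMeasurable i)
      (fun j hj => hD.aestronglyMeasurable ⟨i, j, hj⟩)
      (fun j hj => hMp.aestronglyMeasurable ⟨i, j, hj⟩) (Nat.lt_succ_iff.1 n.2)
  exists_bound k := by
    obtain ⟨C₀, hC₀⟩ := h0.exists_bound k
    obtain ⟨C₁, hC₁⟩ := hD.exists_bound k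
    obtain ⟨C₂, hC₂⟩ := hMp.exists_bound k
    let C := max C₀ (max C₁ C₂)
    have h_C₀ : C₀ ≤ C := le_max_left _ _
    have h_C₁ : C₁ ≤ C := (le_max_left _ _).trans (le_max_right _ _)
    have h_C₂ : C₂ ≤ C := (le_max_right _ _).trans (le_max_right _ _)
    obtain ⟨K, hK⟩ := exists_eLpNorm_le_of_recursion (E := E) k C T
    refine ⟨K, fun ⟨i, n⟩ => hK (hN i) (h_rec i) (h0.aestronglyMeasurable i)
      (fun j hj => hD.aestronglyMeasurable ⟨i, j, hj⟩) (hM i) (hM0 i) ?_ (fun j hj => ?_)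
      (fun j hj => ?_) n (Nat.lt_succ_iff.1 n.2)⟩
    · exact (hC₀ i).trans (by gcongr)
    · exact (hC₁ ⟨i, j, hj⟩).trans (by gcongr)
    · exact (hC₂ ⟨i, j, hj⟩).trans (by gcongr)

omit [∀ i, IsProbabilityMeasure (μ i)] in
lemma LpBigO.exists_mul_eLpNorm_add_le {F : Type*} [NormedAddCommGroup F] {ρ : ι → ℝ≥0∞}
    {Y : ∀ i, Ω i → F} (hY : LpBigO μ (fun _ => ρ) Y) (c : ι → ℝ≥0∞) (k : ℕ) :
    ∃ C : ℝ≥0, ∀ i, c i * (eLpNorm (Y i) (evenExponent k) (μ i) + ρ i) ≤ C * (c i * ρ i) := by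
  obtain ⟨C, hC⟩ := hY.exists_bound k
  refine ⟨C + 1, fun i => ?_⟩
  calc c i * (eLpNorm (Y i) (evenExponent k) (μ i) + ρ i) ≤ c i * (C * ρ i + ρ i) := by
        gcongr
        exact hC i
    _ = (C + 1 : ℝ≥0) * (c i * ρ i) := by push_cast; ring

omit [NormedSpace ℝ E] [FiniteDimensional ℝ E] [∀ i, IsProbabilityMeasure (μ i)] in
lemma LpBigO.sum_range_norm {N : ι → ℕ} {h : ι → ℝ≥0} {T : ℝ≥0} {ρ : ι → ℝ≥0∞}
    {D : ∀ i, ℕ → Ω i → E} (hN : ∀ i, N i * h i ^ 2 ≤ T)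
    (hD : LpBigO (fun s : Σ i, Fin (N i) => μ s.1) (fun _ s => h s.1 ^ 2 * ρ s.1)
      (fun s => D s.1 s.2)) :
    LpBigO μ (fun _ => ρ) (fun i => ∑ j ∈ Finset.range (N i), fun ω => ‖D i j ω‖) := by
  have hDm (i : ι) (j : ℕ) (hj : j ∈ Finset.range (N i)) :
      AEStronglyMeasurable (fun ω => ‖D i j ω‖) (μ i) :=
    (hD.aestronglyMeasurable ⟨i, j, Finset.mem_range.1 hj⟩).norm
  refine ⟨fun i => Finset.aestronglyMeasurable_sum _ (hDm i), fun k => ?_⟩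
  obtain ⟨C, hC⟩ := hD.exists_bound k
  refine ⟨T * C, fun i => ?_⟩
  calc eLpNorm (∑ j ∈ Finset.range (N i), fun ω => ‖D i j ω‖) (evenExponent k) (μ i)
      ≤ ∑ j ∈ Finset.range (N i), eLpNorm (fun ω => ‖D i j ω‖) (evenExponent k) (μ i) :=
        eLpNorm_sum_le (hDm i) (one_le_evenExponent k)
    _ ≤ ∑ _j ∈ Finset.range (N i), (C * (h i ^ 2 * ρ i) : ℝ≥0∞) :=
        Finset.sum_le_sum fun _ hj =>
          (eLpNorm_norm _).trans_le (hC ⟨i, _, Finset.mem_range.1 hj⟩)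
    _ = (N i * h i ^ 2 : ℝ≥0) * (C * ρ i) := by
        simp only [Finset.sum_const, Finset.card_range, nsmul_eq_mul]
        push_cast
        ring
    _ ≤ T * (C * ρ i) := by
        gcongr
        exact hN i
    _ = (T * C : ℝ≥0) * ρ i := by rw [ENNReal.coe_mul, mul_assoc]

lemma LpBigO.exists_maximal_of_condCentered {N : ι → ℕ} {h : ι → ℝ≥0} {T : ℝ≥0} {ρ : ι → ℝ≥0∞}
    {𝓕 : ∀ i, Filtration ℕ (inferInstance : MeasurableSpace (Ω i))} {M : ∀ i, ℕ → Ω i → E}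
    (hN : ∀ i, N i * h i ^ 2 ≤ T) (hρ : ∀ i, ρ i ≠ ⊤)
    (hMp : LpBigO (fun s : Σ i, Fin (N i) => μ s.1) (fun _ s => h s.1 * ρ s.1)
      (fun s => M s.1 s.2))
    (hM : ∀ i, ∀ n < N i, StronglyMeasurable[𝓕 i (n + 1)] (M i n))
    (hM0 : ∀ i, ∀ n < N i, CondCentered (𝓕 i n) (μ i) (M i n)) (k : ℕ) :
    ∃ C : ℝ≥0, ∀ i, ∃ R : Ω i → ℝ, AEStronglyMeasurable R (μ i) ∧
      (∀ n ≤ N i, ∀ ω, ‖(∑ j ∈ Finset.range n, M i j) ω‖ ≤ R ω) ∧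
      eLpNorm R (evenExponent k) (μ i) ≤ C * ρ i := by
  obtain ⟨B, hB⟩ := exists_eLpNorm_sum_sq_le_of_condCentered E k
  obtain ⟨C, hC⟩ := hMp.exists_bound k
  refine ⟨2 * (NNReal.sqrt (B * T) * C), fun i => ?_⟩
  obtain ⟨R, hRm, hMR, hR⟩ := exists_maximal_eLpNorm_le_of_condCentered (2 * k) (hM i) (hM0 i)
    fun j hj => hMp.memLp k ⟨i, j, hj⟩ (ENNReal.mul_ne_top ENNReal.coe_ne_top (hρ i))
  refine ⟨R, hRm, hMR, hR.trans ?_⟩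
  rw [ENNReal.coe_mul, mul_assoc, ENNReal.coe_ofNat]
  refine mul_le_mul_right ((ENNReal.pow_le_pow_left_iff two_ne_zero).1 ?_) _
  calc _ ≤ (B : ℝ≥0∞) * ∑ j ∈ Finset.range (N i), eLpNorm (M i j) (evenExponent k) (μ i) ^ 2 :=
        hB (hM i) (hM0 i)
    _ ≤ B * ∑ _j ∈ Finset.range (N i), (C * (h i * ρ i)) ^ 2 := by
        gcongr with j hj
        exact hC ⟨i, j, Finset.mem_range.1 hj⟩
    _ = B * (N i * h i ^ 2 : ℝ≥0) * (C * ρ i) ^ 2 := by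
        simp only [Finset.sum_const, Finset.card_range, nsmul_eq_mul]
        push_cast
        ring
    _ ≤ B * T * (C * ρ i) ^ 2 := by
        gcongr
        exact hN i
    _ = ((NNReal.sqrt (B * T) * C : ℝ≥0) * ρ i) ^ 2 := by
        rw [ENNReal.coe_mul, mul_assoc (NNReal.sqrt _ : ℝ≥0∞), mul_pow (NNReal.sqrt _ : ℝ≥0∞),
          ← ENNReal.coe_pow, NNReal.sq_sqrt, ENNReal.coe_mul]

theorem LpBigO.sup'_norm_of_recursion {N : ι → ℕ} {h : ι → ℝ≥0} {T : ℝ≥0} {ρ : ι → ℝ≥0∞}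
    {𝓕 : ∀ i, Filtration ℕ (inferInstance : MeasurableSpace (Ω i))} {e D M : ∀ i, ℕ → Ω i → E}
    (hN : ∀ i, N i * h i ^ 2 ≤ T) (hρ : ∀ i, ρ i ≠ ⊤)
    (h_rec : ∀ i, ∀ n < N i, e i (n + 1) = e i n + D i n + M i n)
    (h0 : LpBigO μ (fun _ => ρ) (fun i => e i 0))
    (hD : LpBigO (fun s : Σ i, Fin (N i) => μ s.1) (fun _ s => h s.1 ^ 2 * ρ s.1)
      (fun s => D s.1 s.2))
    (hMp : LpBigO (fun s : Σ i, Fin (N i) => μ s.1) (fun _ s => h s.1 * ρ s.1)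
      (fun s => M s.1 s.2))
    (hM : ∀ i, ∀ n < N i, StronglyMeasurable[𝓕 i (n + 1)] (M i n))
    (hM0 : ∀ i, ∀ n < N i, CondCentered (𝓕 i n) (μ i) (M i n)) :
    LpBigO μ (fun _ => ρ) (fun i => (Finset.range (N i + 1)).sup' Finset.nonempty_range_add_one
      fun n ω => ‖e i n ω‖) := by
  have he (i : ι) (n : ℕ) (hn : n ∈ Finset.range (N i + 1)) :
      AEStronglyMeasurable (e i n) (μ i) :=
    aestronglyMeasurable_of_recursion (h_rec i) (h0.aestronglyMeasurable i)
      (fun j hj => hD.aestronglyMeasurable ⟨i, j, hj⟩)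
      (fun j hj => hMp.aestronglyMeasurable ⟨i, j, hj⟩) (Finset.mem_range_succ_iff.1 hn)
  refine ⟨fun i => Finset.sup'_induction (p := fun Y => AEStronglyMeasurable Y (μ i)) _ _
    (fun _ hY _ hZ => hY.sup hZ) fun n hn => (he i n hn).norm, fun k => ?_⟩
  obtain ⟨C, hC⟩ := (h0.norm.add (hD.sum_range_norm hN)).exists_bound k
  obtain ⟨C', hC'⟩ := exists_maximal_of_condCentered hN hρ hMp hM hM0 k
  refine ⟨C + C', fun i => ?_⟩
  obtain ⟨R, hRm, hMR, hR⟩ := hC' i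
  have h_sup (ω : Ω i) : ‖(Finset.range (N i + 1)).sup' Finset.nonempty_range_add_one
        (fun n ω => ‖e i n ω‖) ω‖
      ≤ (((fun ω => ‖e i 0 ω‖) + ∑ j ∈ Finset.range (N i), fun ω => ‖D i j ω‖) + R) ω := by
    simpa only [Finset.sup'_apply, Pi.add_apply, Finset.sum_apply] using
      norm_sup'_norm_le_of_recursion (N := N i) (e := fun n => e i n ω) (D := fun n => D i n ω)
        (M := fun n => M i n ω) (fun n hn => congrFun (h_rec i n hn) ω) fun n hn => by
          simpa only [Finset.sum_apply] using hMR n hn ω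
  calc _ ≤ C * ρ i + C' * ρ i :=
        (eLpNorm_mono_real h_sup).trans <| (eLpNorm_add_le
          ((h0.norm.add (hD.sum_range_norm hN)).aestronglyMeasurable i) hRm
          (one_le_evenExponent k)).trans (add_le_add (hC i) hR)
    _ = _ := by rw [ENNReal.coe_add, add_mul]

end Gronwall

section BrownianIncrement

lemma eLpNorm_id_gaussianReal (p : ℝ≥0∞) (δ : ℝ≥0) :
    eLpNorm id p (gaussianReal 0 δ) = NNReal.sqrt δ * eLpNorm id p (gaussianReal 0 1) := by
  have h_map : gaussianReal 0 δ = (gaussianReal 0 1).map ((NNReal.sqrt δ : ℝ) * ·) := by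
    rw [gaussianReal_map_const_mul, mul_zero, mul_one]
    congr
    exact (NNReal.sq_sqrt δ).symm
  rw [h_map, eLpNorm_map_measure aestronglyMeasurable_id (by fun_prop)]
  exact (eLpNorm_const_smul (NNReal.sqrt δ : ℝ) id p _).trans (by
    rw [enorm_eq_nnnorm, NNReal.nnnorm_eq])

variable {Ω κ E F : Type*} {𝓖 mΩ : MeasurableSpace Ω} {μ : Measure Ω} {δ : ℝ≥0}
  {w : Ω → κ → ℝ} [NormedAddCommGroup E] [NormedAddCommGroup F]

/-- `w` has the law of the increment of a `κ`-dimensional Brownian motion over a time interval of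
length `δ`, and is independent of the past `𝓖`. Only pairwise independence of the coordinates is
recorded, which determines all moments that matter here. -/
structure IsBrownianIncrement (𝓖 : MeasurableSpace Ω) {mΩ : MeasurableSpace Ω} (μ : Measure Ω)
    (δ : ℝ≥0) (w : Ω → κ → ℝ) : Prop where
  le : 𝓖 ≤ mΩ
  measurable : Measurable w
  indep : Indep (MeasurableSpace.comap w inferInstance) 𝓖 μ
  hasLaw : ∀ j, HasLaw (fun ω => w ω j) (gaussianReal 0 δ) μ
  indep_coord : Pairwise fun j k => IndepFun (fun ω => w ω j) (fun ω => w ω k) μ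

namespace IsBrownianIncrement

lemma indep_comp {φ : (κ → ℝ) → ℝ} (hw : IsBrownianIncrement 𝓖 μ δ w) (hφ : Measurable φ) :
    Indep (MeasurableSpace.comap (fun ω => φ (w ω)) inferInstance) 𝓖 μ := by
  refine indep_of_indep_of_le_left hw.indep ?_
  exact (hφ.comp (comap_measurable w)).comap_le

lemma indepFun_comp {φ : (κ → ℝ) → ℝ} {v : Ω → E} [MeasurableSpace E] [BorelSpace E]
    (hw : IsBrownianIncrement 𝓖 μ δ w) (hφ : Measurable φ) (hv : StronglyMeasurable[𝓖] v) :
    IndepFun (fun ω => φ (w ω)) v μ :=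
  (IndepFun_iff_Indep _ _ _).2
    (indep_of_indep_of_le_right (hw.indep_comp hφ) hv.measurable.comap_le)

lemma memLp_apply (hw : IsBrownianIncrement 𝓖 μ δ w) (j : κ) (p : ℝ≥0) :
    MemLp (fun ω => w ω j) p μ := by
  have h := memLp_id_gaussianReal (μ := 0) (v := δ) p
  rw [← (hw.hasLaw j).map_eq] at h
  exact h.comp_of_map (hw.hasLaw j).aemeasurable

lemma integral_apply (hw : IsBrownianIncrement 𝓖 μ δ w) (j : κ) : ∫ ω, w ω j ∂μ = 0 := by
  rw [(hw.hasLaw j).integral_eq, integral_id_gaussianReal]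

lemma integral_apply_mul_apply [DecidableEq κ] (hw : IsBrownianIncrement 𝓖 μ δ w) (j k : κ) :
    ∫ ω, w ω j * w ω k ∂μ = if j = k then (δ : ℝ) else 0 := by
  have : IsProbabilityMeasure μ := (hw.hasLaw j).isProbabilityMeasure
  split_ifs with hjk
  · subst hjk
    have h_var := (hw.hasLaw j).variance_eq
    rw [variance_id_gaussianReal, variance_of_integral_eq_zero (hw.hasLaw j).aemeasurable
      (hw.integral_apply j)] at h_var
    simpa [sq] using h_var
  · rw [(hw.indep_coord hjk).integral_fun_mul_eq_mul_integral (hw.memLp_apply j 1).1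
      (hw.memLp_apply k 1).1, hw.integral_apply, zero_mul]

lemma integrable_apply_mul_apply (hw : IsBrownianIncrement 𝓖 μ δ w) (j k : κ) :
    Integrable (fun ω => w ω j * w ω k) μ :=
  have h_memLp (l : κ) : MemLp (fun ω => w ω l) 2 μ := mod_cast hw.memLp_apply l 2
  (h_memLp j).integrable_mul (h_memLp k)

end IsBrownianIncrement

variable [DecidableEq κ]

/-- The coefficient of `h_{jk}` in a Milstein step of length `δ`: twice the symmetrized iterated
Itô integral of the `j`-th against the `k`-th coordinate of the noise. -/
def iteratedIncrement (δ : ℝ) (w : κ → ℝ) (j k : κ) : ℝ := w j * w k - if j = k then δ else 0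

lemma measurable_iteratedIncrement (δ : ℝ) (j k : κ) :
    Measurable fun w : κ → ℝ => iteratedIncrement δ w j k := by
  unfold iteratedIncrement
  fun_prop

namespace IsBrownianIncrement

lemma integrable_iteratedIncrement [IsFiniteMeasure μ] (hw : IsBrownianIncrement 𝓖 μ δ w)
    (j k : κ) : Integrable (fun ω => iteratedIncrement δ (w ω) j k) μ :=
  (hw.integrable_apply_mul_apply j k).sub (integrable_const _)

lemma integral_iteratedIncrement [IsProbabilityMeasure μ] (hw : IsBrownianIncrement 𝓖 μ δ w)
    (j k : κ) : ∫ ω, iteratedIncrement δ (w ω) j k ∂μ = 0 := by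
  simp only [iteratedIncrement]
  rw [integral_sub (hw.integrable_apply_mul_apply j k) (integrable_const _),
    hw.integral_apply_mul_apply]
  simp

end IsBrownianIncrement

variable [Fintype κ] [NormedSpace ℝ E] [NormedSpace ℝ F]

/-- The stochastic part of a Milstein step of length `δ` with Brownian increment `w`, for the values
`a j` of the vector fields `g_j` and `b j k` of the vector fields `h_{jk}`. -/
def milsteinNoise (δ : ℝ) (w : κ → ℝ) (a : κ → E) (b : κ → κ → E) : E :=
  ∑ j, w j • a j + ∑ j, ∑ k, iteratedIncrement δ w j k • b j k

/-- The part of two consecutive Milstein steps with increments `u` and `v` that is missed by a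
single step with increment `u + v`. -/
def levyArea (u v : κ → ℝ) (b : κ → κ → E) : E := ∑ j, ∑ k, (u j * v k - v j * u k) • b j k

omit [DecidableEq κ] in
lemma levyArea_swap (u v : κ → ℝ) (b : κ → κ → E) : levyArea v u b = -levyArea u v b := by
  simp only [levyArea, ← Finset.sum_neg_distrib, ← neg_smul, neg_sub]

omit [DecidableEq κ] in
lemma levyArea_sub (u v : κ → ℝ) (b b' : κ → κ → E) :
    levyArea u v (b - b') = levyArea u v b - levyArea u v b' := by
  simp only [levyArea, Pi.sub_apply, smul_sub, Finset.sum_sub_distrib]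

lemma map_milsteinNoise (L : E →L[ℝ] F) (δ : ℝ) (w : κ → ℝ) (a : κ → E) (b : κ → κ → E) :
    L (milsteinNoise δ w a b) = milsteinNoise δ w (fun j => L (a j)) fun j k => L (b j k) := by
  simp [milsteinNoise]

lemma milsteinNoise_add (δ : ℝ) (w : κ → ℝ) (a a' : κ → E) (b b' : κ → κ → E) :
    milsteinNoise δ w (a + a') (b + b') = milsteinNoise δ w a b + milsteinNoise δ w a' b' := by
  simp only [milsteinNoise, Pi.add_apply, smul_add, Finset.sum_add_distrib]
  abel

lemma milsteinNoise_smul (c δ : ℝ) (w : κ → ℝ) (a : κ → E) (b : κ → κ → E) :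
    milsteinNoise δ w (c • a) (c • b) = c • milsteinNoise δ w a b := by
  simp only [milsteinNoise, Pi.smul_apply, smul_add, Finset.smul_sum, smul_comm c]

lemma milsteinNoise_sub (δ : ℝ) (w : κ → ℝ) (a a' : κ → E) (b b' : κ → κ → E) :
    milsteinNoise δ w (a - a') (b - b') = milsteinNoise δ w a b - milsteinNoise δ w a' b' := by
  simp only [milsteinNoise, Pi.sub_apply, smul_sub, Finset.sum_sub_distrib]
  abel

lemma milsteinNoise_add_milsteinNoise (δ : ℝ) (u v : κ → ℝ) (a : κ → E) (b : κ → κ → E) :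
    milsteinNoise δ u a b + milsteinNoise δ v a b + ∑ j, ∑ k, (u j * v k) • (2 : ℝ) • b j k
      = milsteinNoise (2 * δ) (u + v) a b + levyArea u v b := by
  have h_quad (j k : κ) : iteratedIncrement (2 * δ) (u + v) j k + (u j * v k - v j * u k)
      = iteratedIncrement δ u j k + iteratedIncrement δ v j k + u j * v k * 2 := by
    simp only [iteratedIncrement, Pi.add_apply]
    split_ifs <;> ring
  simp only [milsteinNoise, levyArea, add_assoc, ← Finset.sum_add_distrib, ← add_smul, h_quad]
  simp only [Pi.add_apply, add_smul, smul_smul, Finset.sum_add_distrib]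
  abel

namespace CondCentered

lemma milsteinNoise [IsProbabilityMeasure μ] [CompleteSpace E] (hw : IsBrownianIncrement 𝓖 μ δ w)
    {a : Ω → κ → E} {b : Ω → κ → κ → E} (ha : ∀ j, StronglyMeasurable[𝓖] fun ω => a ω j)
    (hb : ∀ j k, StronglyMeasurable[𝓖] fun ω => b ω j k)
    (ha_int : ∀ j, Integrable (fun ω => a ω j) μ)
    (hb_int : ∀ j k, Integrable (fun ω => b ω j k) μ) :
    CondCentered 𝓖 μ (fun ω => milsteinNoise δ (w ω) (a ω) (b ω)) := by
  have h_first (j : κ) : CondCentered 𝓖 μ ((fun ω => w ω j) • fun ω => a ω j) :=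
    .smul_of_indep hw.le (measurable_pi_iff.1 hw.measurable j)
      (memLp_one_iff_integrable.1 (mod_cast hw.memLp_apply j 1)) (hw.integral_apply j)
      (hw.indep_comp (measurable_pi_apply j)) (ha j) (ha_int j)
  have h_second (j k : κ) :
      CondCentered 𝓖 μ ((fun ω => iteratedIncrement δ (w ω) j k) • fun ω => b ω j k) :=
    .smul_of_indep hw.le ((measurable_iteratedIncrement δ j k).comp hw.measurable)
      (hw.integrable_iteratedIncrement j k) (hw.integral_iteratedIncrement j k)
      (hw.indep_comp (measurable_iteratedIncrement δ j k)) (hb j k) (hb_int j k)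
  have h_sum := (CondCentered.sum (s := Finset.univ) hw.le fun j _ => h_first j).add
    (.sum (s := Finset.univ) hw.le fun j _ => .sum (s := Finset.univ) hw.le fun k _ => h_second j k)
  convert h_sum using 1
  ext ω
  simp [AntitheticMilstein.milsteinNoise]

end CondCentered

end BrownianIncrement

section LpBounds

variable {ι κ E : Type*} {Ω : ι → Type*} {𝓖 : ∀ i, MeasurableSpace (Ω i)}
  [∀ i, MeasurableSpace (Ω i)] {μ : ∀ i, Measure (Ω i)}
  {δ h : ι → ℝ≥0} {c : ℝ≥0} {w : ∀ i, Ω i → κ → ℝ} [NormedAddCommGroup E] [NormedSpace ℝ E]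

lemma LpBigO.levyArea [Fintype κ] {ρ σ τ : ι → ℝ≥0∞} {u v : ∀ i, Ω i → κ → ℝ}
    {b : ∀ i, Ω i → κ → κ → E} (hu : ∀ j, LpBigO μ (fun _ => ρ) (fun i ω => u i ω j))
    (hv : ∀ j, LpBigO μ (fun _ => σ) (fun i ω => v i ω j))
    (hb : ∀ j k, LpBigO μ (fun _ => τ) (fun i ω => b i ω j k)) :
    LpBigO μ (fun _ i => ρ i * σ i * τ i) (fun i ω => levyArea (u i ω) (v i ω) (b i ω)) := by
  have h_area (j k : κ) : LpBigO μ (fun _ i => ρ i * σ i)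
      (fun i ω => u i ω j * v i ω k - v i ω j * u i ω k) :=
    ((hu j).smul (hv k)).sub (((hv j).smul (hu k)).mono_le fun _ i => (mul_comm _ _).le)
  convert LpBigO.sum (s := Finset.univ) fun j _ => LpBigO.sum (s := Finset.univ) fun k _ =>
    (h_area j k).smul (hb j k) using 2 with i
  ext ω
  simp [AntitheticMilstein.levyArea]

namespace IsBrownianIncrement

lemma lpBigO_apply (hw : ∀ i, IsBrownianIncrement (𝓖 i) (μ i) (δ i) (w i))
    (hδ : ∀ i, δ i ≤ c * h i ^ 2) (j : κ) :
    LpBigO μ (fun _ i => h i) (fun i ω => w i ω j) where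
  aestronglyMeasurable i := ((hw i).hasLaw j).aemeasurable.aestronglyMeasurable
  exists_bound k := by
    have h_top : eLpNorm id (evenExponent k) (gaussianReal 0 1) ≠ ⊤ :=
      (memLp_id_gaussianReal (2 * k + 2 : ℕ)).eLpNorm_ne_top
    refine ⟨NNReal.sqrt c * (eLpNorm id (evenExponent k) (gaussianReal 0 1)).toNNReal, fun i => ?_⟩
    have h_law : eLpNorm (fun ω => w i ω j) (evenExponent k) (μ i)
        = eLpNorm id (evenExponent k) (gaussianReal 0 (δ i)) := by
      rw [← ((hw i).hasLaw j).map_eq, eLpNorm_map_measure aestronglyMeasurable_id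
        ((hw i).hasLaw j).aemeasurable]
      rfl
    have h_sqrt : NNReal.sqrt (δ i) ≤ NNReal.sqrt c * h i := by
      rw [← NNReal.sqrt_sq (h i), ← NNReal.sqrt_mul]
      exact NNReal.sqrt_le_sqrt.2 (hδ i)
    rw [h_law, eLpNorm_id_gaussianReal, ENNReal.coe_mul, ENNReal.coe_toNNReal h_top, mul_right_comm]
    gcongr
    exact_mod_cast h_sqrt

variable [∀ i, IsProbabilityMeasure (μ i)] [DecidableEq κ]

lemma lpBigO_iteratedIncrement (hw : ∀ i, IsBrownianIncrement (𝓖 i) (μ i) (δ i) (w i))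
    (hδ : ∀ i, δ i ≤ c * h i ^ 2) (j k : κ) :
    LpBigO μ (fun _ i => h i * h i) (fun i ω => iteratedIncrement (δ i) (w i ω) j k) := by
  have h_const : LpBigO μ (fun _ i => h i * h i) (fun i _ => if j = k then (δ i : ℝ) else 0) := by
    split_ifs
    · have := (LpBigO.const (μ := μ) (1 : ℝ)).smul_coe δ
      simp only [mul_one] at this
      refine LpBigO.mono (by simpa [Pi.smul_def] using this) fun _ => ⟨c, fun i => ?_⟩
      rw [← sq]
      exact_mod_cast hδ i
    · exact .zero
  exact ((lpBigO_apply hw hδ j).smul (lpBigO_apply hw hδ k)).sub h_const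

variable [Fintype κ]

lemma lpBigO_milsteinNoise {r r' : ℕ → ι → ℝ≥0∞} {a : ∀ i, Ω i → κ → E}
    {b : ∀ i, Ω i → κ → κ → E} (hw : ∀ i, IsBrownianIncrement (𝓖 i) (μ i) (δ i) (w i))
    (hδ : ∀ i, δ i ≤ c * h i ^ 2) (ha : ∀ j, LpBigO μ r (fun i ω => a i ω j))
    (hb : ∀ j k, LpBigO μ r' (fun i ω => b i ω j k))
    (ham : ∀ i j, StronglyMeasurable[𝓖 i] fun ω => a i ω j)
    (hbm : ∀ i j k, StronglyMeasurable[𝓖 i] fun ω => b i ω j k) :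
    LpBigO μ (fun k i => h i * (r k i + h i * r' k i))
      (fun i ω => milsteinNoise (δ i) (w i ω) (a i ω) (b i ω)) := by
  borelize E
  have h_first (j : κ) := (lpBigO_apply hw hδ j).smul_of_indepFun (ha j) fun i =>
    (hw i).indepFun_comp (measurable_pi_apply j) (ham i j)
  have h_second (j k : κ) := (lpBigO_iteratedIncrement hw hδ j k).smul_of_indepFun (hb j k)
    fun i => (hw i).indepFun_comp (measurable_iteratedIncrement (δ i) j k) (hbm i j k)
  have h_sum := ((LpBigO.sum (s := Finset.univ) fun j _ => h_first j).mono_le fun k i => by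
      exact mul_le_mul_right (le_self_add (b := h i * r' k i)) _).add
    ((LpBigO.sum (s := Finset.univ) fun j _ => .sum (s := Finset.univ) fun k _ => h_second j k
      ).mono_le fun k i => by
        rw [mul_assoc]
        exact mul_le_mul_right (le_add_self (a := h i * r' k i)) _)
  convert h_sum using 2 with i
  ext ω
  simp [milsteinNoise]

end IsBrownianIncrement

end LpBounds

section Coefficients

variable {E F G : Type*} [NormedAddCommGroup E] [NormedSpace ℝ E] [NormedAddCommGroup F]
  [NormedSpace ℝ F] [NormedAddCommGroup G] [NormedSpace ℝ G] {K : ℝ≥0} {φ : E → F}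

/-- `φ` is of class `C^{1,1}` with bounded derivative: it is differentiable, and `K` is a Lipschitz
constant both of `φ` and of its derivative. -/
structure IsC11 (K : ℝ≥0) (φ : E → F) : Prop where
  differentiable : Differentiable ℝ φ
  lipschitz : LipschitzWith K φ
  lipschitz_fderiv : LipschitzWith K (fderiv ℝ φ)

namespace IsC11

lemma of_contDiff {C : ℝ} (hφ : ContDiff ℝ 2 φ) (h_fderiv : ∀ x, ‖fderiv ℝ φ x‖ ≤ C)
    (h_iteratedFDeriv : ∀ x, ‖iteratedFDeriv ℝ 2 φ x‖ ≤ C) : IsC11 C.toNNReal φ where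
  differentiable := hφ.differentiable two_ne_zero
  lipschitz := lipschitzWith_of_nnnorm_fderiv_le (hφ.differentiable two_ne_zero)
    fun x => NNReal.le_toNNReal_of_coe_le (h_fderiv x)
  lipschitz_fderiv := by
    have h_fderiv_diff : Differentiable ℝ (fderiv ℝ φ) :=
      (hφ.fderiv_right (m := 1) (by norm_num)).differentiable one_ne_zero
    refine lipschitzWith_of_nnnorm_fderiv_le h_fderiv_diff fun x => NNReal.le_toNNReal_of_coe_le ?_
    rw [coe_nnnorm, ← norm_iteratedFDeriv_one, norm_iteratedFDeriv_fderiv]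
    exact h_iteratedFDeriv x

lemma mono {K' : ℝ≥0} (hφ : IsC11 K φ) (hK : K ≤ K') : IsC11 K' φ :=
  ⟨hφ.differentiable, hφ.lipschitz.weaken hK, hφ.lipschitz_fderiv.weaken hK⟩

lemma clm_comp (hφ : IsC11 K φ) (L : F →L[ℝ] G) : IsC11 (‖L‖₊ * K) (fun x => L (φ x)) where
  differentiable := L.differentiable.comp hφ.differentiable
  lipschitz := L.lipschitz.comp hφ.lipschitz
  lipschitz_fderiv := by
    have h_eq : fderiv ℝ (fun x => L (φ x)) = fun x => L.comp (fderiv ℝ φ x) :=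
      funext fun x => (L.hasFDerivAt.comp x (hφ.differentiable x).hasFDerivAt).fderiv
    rw [h_eq]
    refine LipschitzWith.of_dist_le_mul fun x y => ?_
    rw [dist_eq_norm, ← ContinuousLinearMap.comp_sub, NNReal.coe_mul, mul_assoc]
    refine (L.opNorm_comp_le _).trans ?_
    rw [coe_nnnorm, ← dist_eq_norm]
    gcongr
    exact hφ.lipschitz_fderiv.dist_le_mul x y

lemma norm_fderiv_le (hφ : IsC11 K φ) (x : E) : ‖fderiv ℝ φ x‖ ≤ K :=
  norm_fderiv_le_of_lipschitz ℝ hφ.lipschitz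

lemma norm_fderiv_apply_le (hφ : IsC11 K φ) (x v : E) : ‖fderiv ℝ φ x v‖ ≤ K * ‖v‖ :=
  (fderiv ℝ φ x).le_of_opNorm_le (hφ.norm_fderiv_le x) v

lemma norm_sub_sub_fderiv_le (hφ : IsC11 K φ) (x y : E) :
    ‖φ y - φ x - fderiv ℝ φ x (y - x)‖ ≤ K * (‖y - x‖ * ‖y - x‖) := by
  rw [← mul_assoc]
  refine (convex_closedBall x ‖y - x‖).norm_image_sub_le_of_norm_fderiv_le'
    (fun z _ => hφ.differentiable z) (fun z hz => ?_) (Metric.mem_closedBall_self (norm_nonneg _))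
    (by rw [Metric.mem_closedBall, dist_eq_norm])
  rw [← dist_eq_norm]
  refine (hφ.lipschitz_fderiv.dist_le_mul z x).trans ?_
  gcongr
  exact hz

lemma norm_midpoint_sub_le (hφ : IsC11 K φ) (x y : E) :
    ‖(2⁻¹ : ℝ) • (φ x + φ y) - φ ((2⁻¹ : ℝ) • (x + y))‖ ≤ K * (‖x - y‖ * ‖x - y‖) := by
  set z := (2⁻¹ : ℝ) • (x + y) with hz
  have hx : x - z = (2⁻¹ : ℝ) • (x - y) := by rw [hz]; module
  have hy : y - z = -((2⁻¹ : ℝ) • (x - y)) := by rw [hz]; module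
  have h_taylor (u : E) (hu : ‖u - z‖ = 2⁻¹ * ‖x - y‖) :
      ‖φ u - φ z - fderiv ℝ φ z (u - z)‖ ≤ K * (‖x - y‖ * ‖x - y‖) := by
    refine (hφ.norm_sub_sub_fderiv_le z u).trans ?_
    rw [hu]
    gcongr <;> linarith [norm_nonneg (x - y)]
  have h_split : (2⁻¹ : ℝ) • (φ x + φ y) - φ z
      = (2⁻¹ : ℝ) • ((φ x - φ z - fderiv ℝ φ z (x - z)) + (φ y - φ z - fderiv ℝ φ z (y - z))) := by
    rw [hx, hy, map_neg]
    module
  rw [h_split, norm_smul, Real.norm_of_nonneg (by norm_num)]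
  have h_add := norm_add_le_of_le (h_taylor x (by rw [hx, norm_smul]; norm_num))
    (h_taylor y (by rw [hy, norm_neg, norm_smul]; norm_num))
  linarith

end IsC11

/-- The vector fields `h_{jk} = (g_j · ∇) g_k / 2`. -/
noncomputable def milsteinCorrection {κ : Type*} (g : κ → E → E) (x : E) (j k : κ) : E :=
  (2⁻¹ : ℝ) • fderiv ℝ (g k) x (g j x)

lemma norm_milsteinCorrection_le {κ : Type*} {g : κ → E → E} (hg : ∀ k, IsC11 K (g k)) (x : E)
    (j k : κ) : ‖milsteinCorrection g x j k‖ ≤ K * ‖g j x‖ := by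
  rw [milsteinCorrection, norm_smul, Real.norm_of_nonneg (by norm_num)]
  have := (hg k).norm_fderiv_apply_le x (g j x)
  linarith [norm_nonneg (fderiv ℝ (g k) x (g j x))]

lemma norm_milsteinCorrection_sub_le {κ : Type*} {g : κ → E → E} (hg : ∀ k, IsC11 K (g k))
    (x y : E) (j k : κ) : ‖milsteinCorrection g x j k - milsteinCorrection g y j k‖
      ≤ K * (K * ‖x - y‖ + ‖x - y‖ * ‖g j y‖) := by
  have h_split : milsteinCorrection g x j k - milsteinCorrection g y j k
      = (2⁻¹ : ℝ) • (fderiv ℝ (g k) x (g j x - g j y)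
        + (fderiv ℝ (g k) x - fderiv ℝ (g k) y) (g j y)) := by
    simp only [milsteinCorrection, map_sub, sub_apply]
    module
  have h_first : ‖fderiv ℝ (g k) x (g j x - g j y)‖ ≤ K * (K * ‖x - y‖) := by
    refine ((hg k).norm_fderiv_apply_le x _).trans ?_
    gcongr
    exact (hg j).lipschitz.norm_sub_le x y
  have h_second : ‖(fderiv ℝ (g k) x - fderiv ℝ (g k) y) (g j y)‖ ≤ K * ‖x - y‖ * ‖g j y‖ :=
    (fderiv ℝ (g k) x - fderiv ℝ (g k) y).le_of_opNorm_le
      ((hg k).lipschitz_fderiv.norm_sub_le x y) _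
  rw [h_split, norm_smul, Real.norm_of_nonneg (by norm_num)]
  linarith [norm_add_le_of_le h_first h_second, norm_nonneg (fderiv ℝ (g k) x (g j x - g j y)
    + (fderiv ℝ (g k) x - fderiv ℝ (g k) y) (g j y))]

lemma continuous_milsteinCorrection {κ : Type*} {g : κ → E → E} (hg : ∀ k, IsC11 K (g k))
    (j k : κ) : Continuous fun x => milsteinCorrection g x j k :=
  ((hg k).lipschitz_fderiv.continuous.clm_apply (hg j).lipschitz.continuous).const_smul _

end Coefficients

section LpBounds

variable {ι κ E F : Type*} {Ω : ι → Type*} [∀ i, MeasurableSpace (Ω i)] {μ : ∀ i, Measure (Ω i)}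
  [NormedAddCommGroup E] [NormedAddCommGroup F]
  {r : ℕ → ι → ℝ≥0∞} {ρ : ι → ℝ≥0∞} {K : ℝ≥0} {φ : E → F} {Y Z : ∀ i, Ω i → E}

namespace LpBigO

lemma comp_sub_comp (hφ : LipschitzWith K φ) (hY : ∀ i, AEStronglyMeasurable (Y i) (μ i))
    (hZ : ∀ i, AEStronglyMeasurable (Z i) (μ i)) (hYZ : LpBigO μ r (fun i => Y i - Z i)) :
    LpBigO μ r (fun i ω => φ (Y i ω) - φ (Z i ω)) :=
  hYZ.of_norm_le (fun i => (hφ.continuous.comp_aestronglyMeasurable (hY i)).sub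
    (hφ.continuous.comp_aestronglyMeasurable (hZ i))) K fun _ _ => hφ.norm_sub_le _ _

lemma comp_lipschitz [∀ i, IsProbabilityMeasure (μ i)] (hφ : LipschitzWith K φ)
    (hY : LpBigO μ r Y) : LpBigO μ (fun k i => r k i + 1) (fun i ω => φ (Y i ω)) := by
  have h_diff := comp_sub_comp hφ hY.aestronglyMeasurable (fun i => aestronglyMeasurable_zero)
    (by simpa only [sub_zero] using hY)
  have h_sum := (h_diff.mono_le fun k i => le_self_add).add
    ((const (φ 0)).mono_le fun k i => le_add_self)
  convert h_sum using 2 with i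
  ext ω
  simp

variable [NormedSpace ℝ E] [NormedSpace ℝ F]

lemma comp_fderiv_apply (hφ : IsC11 K φ) (hY : ∀ i, AEStronglyMeasurable (Y i) (μ i))
    (hZ : LpBigO μ r Z) : LpBigO μ r (fun i ω => fderiv ℝ φ (Y i ω) (Z i ω)) :=
  hZ.of_norm_le (fun i => isBoundedBilinearMap_apply.continuous.comp_aestronglyMeasurable
    ((hφ.lipschitz_fderiv.continuous.comp_aestronglyMeasurable (hY i)).prodMk
      (hZ.aestronglyMeasurable i))) K fun _ _ => hφ.norm_fderiv_apply_le _ _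

lemma taylor (hφ : IsC11 K φ) (hY : ∀ i, AEStronglyMeasurable (Y i) (μ i))
    (hZ : ∀ i, AEStronglyMeasurable (Z i) (μ i))
    (hYZ : LpBigO μ (fun _ => ρ) (fun i => Z i - Y i)) :
    LpBigO μ (fun _ i => ρ i * ρ i)
      (fun i ω => φ (Z i ω) - φ (Y i ω) - fderiv ℝ φ (Y i ω) (Z i ω - Y i ω)) :=
  (hYZ.norm_mul_norm hYZ).of_norm_le (fun i =>
    ((hφ.lipschitz.continuous.comp_aestronglyMeasurable (hZ i)).sub
      (hφ.lipschitz.continuous.comp_aestronglyMeasurable (hY i))).sub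
      ((comp_fderiv_apply hφ hY hYZ).aestronglyMeasurable i)) K fun i ω => by
    simpa using hφ.norm_sub_sub_fderiv_le (Y i ω) (Z i ω)

lemma midpoint (hφ : IsC11 K φ) (hY : ∀ i, AEStronglyMeasurable (Y i) (μ i))
    (hZ : ∀ i, AEStronglyMeasurable (Z i) (μ i))
    (hYZ : LpBigO μ (fun _ => ρ) (fun i => Y i - Z i)) :
    LpBigO μ (fun _ i => ρ i * ρ i) (fun i ω =>
      (2⁻¹ : ℝ) • (φ (Y i ω) + φ (Z i ω)) - φ ((2⁻¹ : ℝ) • (Y i ω + Z i ω))) := by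
  have hφc := hφ.lipschitz.continuous
  refine (hYZ.norm_mul_norm hYZ).of_norm_le (fun i => ?_) K fun i ω => by
    simpa using hφ.norm_midpoint_sub_le (Y i ω) (Z i ω)
  exact (((hφc.comp_aestronglyMeasurable (hY i)).add (hφc.comp_aestronglyMeasurable (hZ i))
    ).const_smul _).sub (hφc.comp_aestronglyMeasurable (((hY i).add (hZ i)).const_smul _))

variable [∀ i, IsProbabilityMeasure (μ i)] {g : κ → E → E}

lemma milsteinCorrection (hg : ∀ k, IsC11 K (g k)) (hY : LpBigO μ r Y) (j k : κ) :
    LpBigO μ (fun k i => r k i + 1) (fun i ω => milsteinCorrection g (Y i ω) j k) :=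
  (hY.comp_lipschitz (hg j).lipschitz).of_norm_le (fun i =>
    (continuous_milsteinCorrection hg j k).comp_aestronglyMeasurable (hY.aestronglyMeasurable i)) K
    fun _ _ => norm_milsteinCorrection_le hg _ j k

lemma milsteinCorrection_sub (hg : ∀ k, IsC11 K (g k)) (hY : LpBigO μ (fun _ _ => 1) Y)
    (hZ : LpBigO μ (fun _ _ => 1) Z) (hYZ : LpBigO μ (fun _ => ρ) (fun i => Y i - Z i)) (j k : κ) :
    LpBigO μ (fun _ => ρ) (fun i ω => AntitheticMilstein.milsteinCorrection g (Y i ω) j k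
      - AntitheticMilstein.milsteinCorrection g (Z i ω) j k) := by
  have h_prod : LpBigO μ (fun _ => ρ) (fun i ω => ‖Y i ω - Z i ω‖ * ‖g j (Z i ω)‖) := by
    refine (hYZ.norm_mul_norm (hZ.comp_lipschitz (hg j).lipschitz)).mono fun _ => ⟨2, fun i => ?_⟩
    rw [one_add_one_eq_two, mul_comm]
    rfl
  have hc := continuous_milsteinCorrection hg j k
  refine ((hYZ.norm.const_smul (K : ℝ)).add h_prod).of_norm_le (fun i =>
    (hc.comp_aestronglyMeasurable (hY.aestronglyMeasurable i)).sub
      (hc.comp_aestronglyMeasurable (hZ.aestronglyMeasurable i))) K fun i ω => ?_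
  refine (norm_milsteinCorrection_sub_le hg _ _ j k).trans_eq ?_
  rw [Real.norm_of_nonneg (by simp only [Pi.add_apply, Pi.smul_apply, smul_eq_mul]; positivity)]
  rfl

end LpBigO

end LpBounds

section MilsteinMap

variable {κ E : Type*} [Fintype κ] [DecidableEq κ] [NormedAddCommGroup E] [NormedSpace ℝ E]
  {f : E → E} {g : κ → E → E}

/-- The stochastic part of the Milstein step from `x`, with the Lévy areas omitted. -/
noncomputable def milsteinDiffusion (g : κ → E → E) (δ : ℝ) (x : E) (w : κ → ℝ) : E :=
  milsteinNoise δ w (fun j => g j x) (milsteinCorrection g x)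

/-- The Milstein step of length `δ` from `x` with Brownian increment `w` and with the Lévy areas
omitted, for the drift `f` and the vector fields `g j`. -/
noncomputable def milsteinMap (f : E → E) (g : κ → E → E) (δ : ℝ) (x : E) (w : κ → ℝ) : E :=
  x + δ • f x + milsteinDiffusion g δ x w

/-- The drift of two consecutive Milstein steps of length `δ` from `x`, the first of which has
Brownian increment `u`. Subtracting `fderiv ℝ f x (milsteinDiffusion g δ x u)`, a mean-zero term of
order `√δ`, makes it differ from `2 δ f x` by `O(δ ^ 2)` only. -/
noncomputable def twoStepDrift (f : E → E) (g : κ → E → E) (δ : ℝ) (x : E) (u : κ → ℝ) : E :=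
  (2 * δ) • f x
    + δ • (f (milsteinMap f g δ x u) - f x - fderiv ℝ f x (milsteinDiffusion g δ x u))

/-- The mean-zero part of two consecutive Milstein steps of length `δ` from `x` with Brownian
increments `u` and `v`. -/
noncomputable def twoStepFluctuation (f : E → E) (g : κ → E → E) (δ : ℝ) (x : E) (u v : κ → ℝ) :
    E :=
  milsteinDiffusion g δ x u + milsteinDiffusion g δ (milsteinMap f g δ x u) v
    + δ • fderiv ℝ f x (milsteinDiffusion g δ x u)

/-- What is left of `twoStepFluctuation` after taking out the Milstein step of length `2 δ` and the
Lévy area. -/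
noncomputable def twoStepRemainder (f : E → E) (g : κ → E → E) (δ : ℝ) (x : E) (u v : κ → ℝ) : E :=
  milsteinNoise δ v
      (fun k => g k (milsteinMap f g δ x u) - g k x - ∑ j, u j • fderiv ℝ (g k) x (g j x))
      (milsteinCorrection g (milsteinMap f g δ x u) - milsteinCorrection g x)
    + δ • fderiv ℝ f x (milsteinDiffusion g δ x u)

lemma milsteinMap_milsteinMap (f : E → E) (g : κ → E → E) (δ : ℝ) (x : E) (u v : κ → ℝ) :
    milsteinMap f g δ (milsteinMap f g δ x u) v
      = x + twoStepDrift f g δ x u + twoStepFluctuation f g δ x u v := by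
  rw [milsteinMap, twoStepDrift, twoStepFluctuation]
  generalize hy : milsteinMap f g δ x u = y
  rw [milsteinMap] at hy
  rw [← sub_eq_zero]
  linear_combination (norm := module) -hy

lemma twoStepFluctuation_eq (f : E → E) (g : κ → E → E) (δ : ℝ) (x : E) (u v : κ → ℝ) :
    twoStepFluctuation f g δ x u v = milsteinDiffusion g (2 * δ) x (u + v)
      + levyArea u v (milsteinCorrection g x) + twoStepRemainder f g δ x u v := by
  have h_cross : milsteinNoise δ v (fun k => ∑ j, u j • fderiv ℝ (g k) x (g j x)) (0 : κ → κ → E)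
      = ∑ j, ∑ k, (u j * v k) • (2 : ℝ) • milsteinCorrection g x j k := by
    simp only [milsteinNoise, milsteinCorrection, Pi.zero_apply, smul_zero, Finset.sum_const_zero,
      add_zero, Finset.smul_sum, smul_inv_smul₀ (two_ne_zero (α := ℝ))]
    rw [Finset.sum_comm]
    simp only [mul_smul, smul_comm (v _)]
  set y := milsteinMap f g δ x u
  have h_coeff : (fun k => g k y) = (fun k => g k x)
      + ((fun k => ∑ j, u j • fderiv ℝ (g k) x (g j x))
        + fun k => g k y - g k x - ∑ j, u j • fderiv ℝ (g k) x (g j x)) := by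
    ext k
    simp only [Pi.add_apply]
    abel
  have h_corr : milsteinCorrection g y = milsteinCorrection g x
      + (0 + (milsteinCorrection g y - milsteinCorrection g x)) := by abel
  have h_second : milsteinDiffusion g δ y v = milsteinDiffusion g δ x v
      + (∑ j, ∑ k, (u j * v k) • (2 : ℝ) • milsteinCorrection g x j k
        + milsteinNoise δ v (fun k => g k y - g k x - ∑ j, u j • fderiv ℝ (g k) x (g j x))
          (milsteinCorrection g y - milsteinCorrection g x)) := by
    conv_lhs => rw [milsteinDiffusion, h_coeff, h_corr]
    rw [milsteinNoise_add, milsteinNoise_add, h_cross, milsteinDiffusion]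
  rw [twoStepFluctuation, twoStepRemainder, h_second, milsteinDiffusion, milsteinDiffusion,
    milsteinDiffusion, ← milsteinNoise_add_milsteinNoise]
  abel

lemma continuous_milsteinDiffusion {K : ℝ≥0} (hg : ∀ k, IsC11 K (g k)) (δ : ℝ) :
    Continuous fun p : E × (κ → ℝ) => milsteinDiffusion g δ p.1 p.2 := by
  have hgc (j : κ) := (hg j).lipschitz.continuous
  have hbc (j k : κ) := continuous_milsteinCorrection hg j k
  simp only [milsteinDiffusion, milsteinNoise, iteratedIncrement]
  fun_prop

lemma continuous_milsteinMap {K : ℝ≥0} (hf : IsC11 K f) (hg : ∀ k, IsC11 K (g k)) (δ : ℝ) :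
    Continuous fun p : E × (κ → ℝ) => milsteinMap f g δ p.1 p.2 := by
  have hfc := hf.lipschitz.continuous
  have hdc := continuous_milsteinDiffusion hg δ
  unfold milsteinMap
  fun_prop

lemma continuous_twoStepFluctuation {K : ℝ≥0} (hf : IsC11 K f) (hg : ∀ k, IsC11 K (g k)) (δ : ℝ) :
    Continuous fun p : E × (κ → ℝ) × (κ → ℝ) => twoStepFluctuation f g δ p.1 p.2.1 p.2.2 := by
  have hxu : Continuous fun p : E × (κ → ℝ) × (κ → ℝ) => (p.1, p.2.1) := by fun_prop
  have h_first := (continuous_milsteinDiffusion hg δ).comp hxu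
  have h_second := (continuous_milsteinDiffusion hg δ).comp
    (((continuous_milsteinMap hf hg δ).comp hxu).prodMk
      (by fun_prop : Continuous fun p : E × (κ → ℝ) × (κ → ℝ) => p.2.2))
  exact (h_first.add h_second).add
    (((hf.lipschitz_fderiv.continuous.comp continuous_fst).clm_apply h_first).const_smul δ)

end MilsteinMap

section Measurability

variable {Ω κ E : Type*} [Fintype κ] [DecidableEq κ] [NormedAddCommGroup E] [NormedSpace ℝ E]
  {m : MeasurableSpace Ω} {K : ℝ≥0} {f : E → E} {g : κ → E → E} {x : Ω → E} {u v : Ω → κ → ℝ}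

lemma stronglyMeasurable_milsteinMap (hf : IsC11 K f) (hg : ∀ k, IsC11 K (g k)) (δ : ℝ)
    (hx : StronglyMeasurable x) (hu : Measurable u) :
    StronglyMeasurable fun ω => milsteinMap f g δ (x ω) (u ω) :=
  (continuous_milsteinMap hf hg δ).comp_stronglyMeasurable (hx.prodMk hu.stronglyMeasurable)

lemma stronglyMeasurable_twoStepFluctuation (hf : IsC11 K f) (hg : ∀ k, IsC11 K (g k)) (δ : ℝ)
    (hx : StronglyMeasurable x) (hu : Measurable u) (hv : Measurable v) :
    StronglyMeasurable fun ω => twoStepFluctuation f g δ (x ω) (u ω) (v ω) :=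
  (continuous_twoStepFluctuation hf hg δ).comp_stronglyMeasurable
    (hx.prodMk (hu.stronglyMeasurable.prodMk hv.stronglyMeasurable))

lemma stronglyMeasurable_oneStep_coefficient (hf : IsC11 K f) (hg : ∀ k, IsC11 K (g k)) (δ : ℝ)
    (hx : StronglyMeasurable x) (hu : Measurable u) (k : κ) :
    StronglyMeasurable fun ω => g k (milsteinMap f g δ (x ω) (u ω)) - g k (x ω)
      - ∑ j, u ω j • fderiv ℝ (g k) (x ω) (g j (x ω)) := by
  have hgc (j : κ) := (hg j).lipschitz.continuous
  refine (((hgc k).comp_stronglyMeasurable (stronglyMeasurable_milsteinMap hf hg δ hx hu)).sub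
    ((hgc k).comp_stronglyMeasurable hx)).sub (Finset.stronglyMeasurable_fun_sum _ fun j _ => ?_)
  exact (measurable_pi_iff.1 hu j).stronglyMeasurable.smul
    (((hg k).lipschitz_fderiv.continuous.clm_apply (hgc j)).comp_stronglyMeasurable hx)

end Measurability

section LocalEstimates

variable {ι κ E : Type*} [Fintype κ] [DecidableEq κ] [NormedAddCommGroup E] [NormedSpace ℝ E]
  {Ω : ι → Type*} {𝓕 𝓖 : ∀ i, MeasurableSpace (Ω i)} [∀ i, MeasurableSpace (Ω i)]
  {μ : ∀ i, Measure (Ω i)} [∀ i, IsProbabilityMeasure (μ i)] {r : ℕ → ι → ℝ≥0∞} {δ h : ι → ℝ≥0}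
  {c H K : ℝ≥0} {f : E → E} {g : κ → E → E} {w : ∀ i, Ω i → κ → ℝ} {x : ∀ i, Ω i → E}

lemma LpBigO.milsteinDiffusion (hg : ∀ k, IsC11 K (g k)) (hH : ∀ i, h i ≤ H)
    (hδ : ∀ i, δ i ≤ c * h i ^ 2) (hw : ∀ i, IsBrownianIncrement (𝓖 i) (μ i) (δ i) (w i))
    (hxm : ∀ i, StronglyMeasurable[𝓖 i] (x i)) (hx : LpBigO μ r x) :
    LpBigO μ (fun k i => h i * (r k i + 1))
      (fun i ω => milsteinDiffusion g (δ i) (x i ω) (w i ω)) := by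
  refine (IsBrownianIncrement.lpBigO_milsteinNoise hw hδ
    (fun j => hx.comp_lipschitz (hg j).lipschitz) (hx.milsteinCorrection hg)
    (fun i j => (hg j).lipschitz.continuous.comp_stronglyMeasurable (hxm i))
    (fun i j k => (continuous_milsteinCorrection hg j k).comp_stronglyMeasurable (hxm i))).mono
    fun k => ⟨1 + H, fun i => ?_⟩
  calc (h i : ℝ≥0∞) * (r k i + 1 + h i * (r k i + 1)) ≤ h i * (r k i + 1 + H * (r k i + 1)) := by
        gcongr
        exact_mod_cast hH i
    _ = (1 + H : ℝ≥0) * (h i * (r k i + 1)) := by push_cast; ring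

lemma LpBigO.condCentered_milsteinDiffusion [CompleteSpace E] (hg : ∀ k, IsC11 K (g k))
    (hw : ∀ i, IsBrownianIncrement (𝓖 i) (μ i) (δ i) (w i))
    (hxm : ∀ i, StronglyMeasurable[𝓖 i] (x i)) (hx : LpBigO μ (fun _ _ => 1) x) (i : ι) :
    CondCentered (𝓖 i) (μ i)
      (fun ω => AntitheticMilstein.milsteinDiffusion g (δ i) (x i ω) (w i ω)) :=
  .milsteinNoise (hw i) (fun j => (hg j).lipschitz.continuous.comp_stronglyMeasurable (hxm i))
    (fun j k => (continuous_milsteinCorrection hg j k).comp_stronglyMeasurable (hxm i))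
    (fun j => (hx.comp_lipschitz (hg j).lipschitz).integrable i (by simp))
    fun j k => (hx.milsteinCorrection hg j k).integrable i (by simp)

lemma LpBigO.condCentered_fderiv_milsteinDiffusion [CompleteSpace E] (hf : IsC11 K f)
    (hg : ∀ k, IsC11 K (g k)) (hw : ∀ i, IsBrownianIncrement (𝓖 i) (μ i) (δ i) (w i))
    (hxm : ∀ i, StronglyMeasurable[𝓖 i] (x i)) (hx : LpBigO μ (fun _ _ => 1) x) (i : ι) :
    CondCentered (𝓖 i) (μ i) (fun ω =>
      fderiv ℝ f (x i ω) (AntitheticMilstein.milsteinDiffusion g (δ i) (x i ω) (w i ω))) := by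
  simp only [AntitheticMilstein.milsteinDiffusion, map_milsteinNoise]
  have hf' := hf.lipschitz_fderiv.continuous
  have hx' := hx.aestronglyMeasurable
  exact .milsteinNoise (hw i)
    (fun j => (hf'.clm_apply (hg j).lipschitz.continuous).comp_stronglyMeasurable (hxm i))
    (fun j k => (hf'.clm_apply (continuous_milsteinCorrection hg j k)).comp_stronglyMeasurable
      (hxm i))
    (fun j => (comp_fderiv_apply hf hx' (hx.comp_lipschitz (hg j).lipschitz)).integrable i
      (by simp))
    fun j k => (comp_fderiv_apply hf hx' (hx.milsteinCorrection hg j k)).integrable i (by simp)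

variable {u v : ∀ i, Ω i → κ → ℝ} (hf : IsC11 K f) (hg : ∀ k, IsC11 K (g k)) (hH : ∀ i, h i ≤ H)
  (hu : ∀ i, IsBrownianIncrement (𝓕 i) (μ i) (h i ^ 2) (u i))
  (hxm : ∀ i, StronglyMeasurable[𝓕 i] (x i)) (hx : LpBigO μ (fun _ _ => 1) x)

section OneStep

include hg hH hu hxm hx

lemma lpBigO_oneStep_diffusion :
    LpBigO μ (fun _ i => h i) (fun i ω => milsteinDiffusion g (h i ^ 2) (x i ω) (u i ω)) :=
  (hx.milsteinDiffusion hg hH (c := 1) (fun i => (one_mul _).ge) hu hxm).mono fun _ =>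
    ⟨2, fun i => by norm_num [mul_comm]⟩

include hf

lemma lpBigO_oneStep_increment : LpBigO μ (fun _ i => h i)
    (fun i ω => milsteinMap f g (h i ^ 2) (x i ω) (u i ω) - x i ω) := by
  have h_drift := ((hx.comp_lipschitz hf.lipschitz).smul_coe (fun i => h i ^ 2)).mono
    (r' := fun _ i => h i) fun _ => ⟨2 * H, fun i => by
      rw [one_add_one_eq_two]
      norm_cast
      calc h i ^ 2 * 2 = 2 * h i * h i := by ring
        _ ≤ 2 * H * h i := by gcongr; exact hH i⟩
  convert h_drift.add (lpBigO_oneStep_diffusion hg hH hu hxm hx) using 2 with i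
  ext ω
  simp [milsteinMap, add_assoc]

lemma lpBigO_oneStep : LpBigO μ (fun _ _ => 1)
    (fun i ω => milsteinMap f g (h i ^ 2) (x i ω) (u i ω)) := by
  have h_incr := (lpBigO_oneStep_increment hf hg hH hu hxm hx).mono (r' := fun _ _ => 1) fun _ =>
    ⟨H, fun i => by simpa using hH i⟩
  convert h_incr.add hx using 2 with i
  ext ω
  simp

lemma lpBigO_oneStep_expansion {F : Type*} [NormedAddCommGroup F] [NormedSpace ℝ F] {φ : E → F}
    (hφ : IsC11 K φ) : LpBigO μ (fun _ i => h i ^ 2)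
      (fun i ω => φ (milsteinMap f g (h i ^ 2) (x i ω) (u i ω)) - φ (x i ω)
        - fderiv ℝ φ (x i ω) (milsteinDiffusion g (h i ^ 2) (x i ω) (u i ω))) := by
  have h_incr := lpBigO_oneStep_increment hf hg hH hu hxm hx
  have h_taylor := (LpBigO.taylor hφ hx.aestronglyMeasurable (fun i =>
    (stronglyMeasurable_milsteinMap hf hg _ ((hxm i).mono (hu i).le)
      (hu i).measurable).aestronglyMeasurable) h_incr).mono_le
      (r' := fun _ i => h i ^ 2) fun _ i => (sq _).ge
  have h_drift := (LpBigO.comp_fderiv_apply hφ hx.aestronglyMeasurable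
    ((hx.comp_lipschitz hf.lipschitz).smul_coe (fun i => h i ^ 2))).mono
      (r' := fun _ i => h i ^ 2) fun _ => ⟨2, fun i => by norm_num [mul_comm]⟩
  convert h_taylor.add h_drift using 2 with i
  ext ω
  simp only [milsteinMap, Pi.add_apply, Pi.smul_apply, NNReal.coe_pow, map_add, map_sub, map_smul]
  abel

lemma lpBigO_twoStepDrift_sub : LpBigO μ (fun _ i => h i ^ 4)
    (fun i ω => twoStepDrift f g (h i ^ 2) (x i ω) (u i ω) - (2 * h i ^ 2 : ℝ) • f (x i ω)) := by
  have h_expansion := ((lpBigO_oneStep_expansion hf hg hH hu hxm hx hf).smul_coe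
    (fun i => h i ^ 2)).mono_le (r' := fun _ i => h i ^ 4) fun _ i => by
      rw [ENNReal.coe_pow, ← pow_add]
  convert h_expansion using 2 with i
  ext ω
  simp [twoStepDrift]

lemma lpBigO_oneStep_coefficient (k : κ) : LpBigO μ (fun _ i => h i ^ 2)
    (fun i ω => g k (milsteinMap f g (h i ^ 2) (x i ω) (u i ω)) - g k (x i ω)
      - ∑ j, u i ω j • fderiv ℝ (g k) (x i ω) (g j (x i ω))) := by
  have h_second := (IsBrownianIncrement.lpBigO_milsteinNoise (a := 0) hu
    (fun i => (one_mul (h i ^ 2)).ge) (fun _ => LpBigO.zero (r := 0))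
    (hx.milsteinCorrection hg) (fun _ _ => stronglyMeasurable_zero)
    (fun i j k => (continuous_milsteinCorrection hg j k).comp_stronglyMeasurable (hxm i))).mono
      (r' := fun _ i => h i ^ 2) fun _ => ⟨2, fun i => by
        rw [Pi.zero_apply, Pi.zero_apply, zero_add, ← mul_assoc, ← sq, one_add_one_eq_two,
          mul_comm]
        rfl⟩
  convert (lpBigO_oneStep_expansion hf hg hH hu hxm hx (hg k)).add
    (LpBigO.comp_fderiv_apply (hg k) hx.aestronglyMeasurable h_second) using 2 with i
  ext ω
  simp only [milsteinDiffusion, milsteinNoise, Pi.zero_apply, smul_zero, Finset.sum_const_zero,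
    zero_add, map_add, map_sum, map_smul, NNReal.coe_pow, Pi.add_apply]
  abel

end OneStep

section TwoSteps

variable (h_le : ∀ i, 𝓕 i ≤ 𝓖 i) (hum : ∀ i, Measurable[𝓖 i] (u i))
  (hv : ∀ i, IsBrownianIncrement (𝓖 i) (μ i) (h i ^ 2) (v i))

include hf hg hH hu hxm hx h_le hum hv

lemma lpBigO_twoStepRemainder : LpBigO μ (fun _ i => h i ^ 3)
    (fun i ω => twoStepRemainder f g (h i ^ 2) (x i ω) (u i ω) (v i ω)) := by
  have hxm' (i : ι) := (hxm i).mono (h_le i)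
  have hym (i : ι) := stronglyMeasurable_milsteinMap hf hg (h i ^ 2) (hxm' i) (hum i)
  have hcm (j k : κ) := continuous_milsteinCorrection hg j k
  have h_noise := (IsBrownianIncrement.lpBigO_milsteinNoise hv (fun i => (one_mul (h i ^ 2)).ge)
    (lpBigO_oneStep_coefficient hf hg hH hu hxm hx)
    (LpBigO.milsteinCorrection_sub hg (lpBigO_oneStep hf hg hH hu hxm hx) hx
      (lpBigO_oneStep_increment hf hg hH hu hxm hx))
    (fun i k => stronglyMeasurable_oneStep_coefficient hf hg _ (hxm' i) (hum i) k)
    (fun i j k => ((hcm j k).comp_stronglyMeasurable (hym i)).sub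
      ((hcm j k).comp_stronglyMeasurable (hxm' i)))).mono (r' := fun _ i => h i ^ 3) fun _ =>
        ⟨2, fun i => by
          norm_cast
          exact (by ring : h i * (h i ^ 2 + h i * h i) = 2 * h i ^ 3).le⟩
  have h_drift := ((LpBigO.comp_fderiv_apply hf hx.aestronglyMeasurable
    (lpBigO_oneStep_diffusion hg hH hu hxm hx)).smul_coe (fun i => h i ^ 2)).mono_le
      (r' := fun _ i => h i ^ 3) fun _ i => by rw [ENNReal.coe_pow, ← pow_succ]
  exact h_noise.add h_drift

lemma condCentered_twoStepFluctuation [CompleteSpace E] (i : ι) : CondCentered (𝓕 i) (μ i)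
    (fun ω => twoStepFluctuation f g (h i ^ 2) (x i ω) (u i ω) (v i ω)) := by
  have hym (i : ι) := stronglyMeasurable_milsteinMap hf hg (h i ^ 2) ((hxm i).mono (h_le i)) (hum i)
  have h_first := LpBigO.condCentered_milsteinDiffusion hg hu hxm hx i
  have h_second := (LpBigO.condCentered_milsteinDiffusion hg hv hym
    (lpBigO_oneStep hf hg hH hu hxm hx) i).mono (h_le i)
  have h_drift := LpBigO.condCentered_fderiv_milsteinDiffusion hf hg hu hxm hx i
  exact (h_first.add h_second).add (h_drift.const_smul (h i ^ 2 : ℝ))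

end TwoSteps

end LocalEstimates

section MilsteinPath

variable {Ω κ E : Type*} [Fintype κ] [DecidableEq κ] [NormedAddCommGroup E] [NormedSpace ℝ E]
  {mΩ : MeasurableSpace Ω} {μ : Measure Ω} {K δ : ℝ≥0} {N : ℕ} {𝓕 : Filtration ℕ mΩ}
  {f : E → E} {g : κ → E → E} {w : ℕ → Ω → κ → ℝ} {X : ℕ → Ω → E} {x₀ : E}

/-- `X` is the Milstein scheme with the Lévy areas omitted, started at `x₀` and run for `N` steps of
length `δ` with the Brownian increments `w`, which are adapted to the filtration `𝓕`. -/
structure IsMilsteinPath (f : E → E) (g : κ → E → E) (x₀ : E) (δ : ℝ≥0) (N : ℕ)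
    {mΩ : MeasurableSpace Ω} (𝓕 : Filtration ℕ mΩ) (μ : Measure Ω) (w : ℕ → Ω → κ → ℝ)
    (X : ℕ → Ω → E) : Prop where
  zero : ∀ ω, X 0 ω = x₀
  succ : ∀ n < N, ∀ ω, X (n + 1) ω = milsteinMap f g δ (X n ω) (w n ω)
  increment : ∀ n < N, IsBrownianIncrement (𝓕 n) μ δ (w n)
  measurable : ∀ n < N, Measurable[𝓕 (n + 1)] (w n)

namespace IsMilsteinPath

lemma stronglyMeasurable (hf : IsC11 K f) (hg : ∀ k, IsC11 K (g k))
    (hX : IsMilsteinPath f g x₀ δ N 𝓕 μ w X) {n : ℕ} (hn : n ≤ N) :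
    StronglyMeasurable[𝓕 n] (X n) := by
  induction n with
  | zero => exact funext hX.zero ▸ stronglyMeasurable_const
  | succ n ih =>
    rw [funext (hX.succ n hn)]
    exact stronglyMeasurable_milsteinMap hf hg δ ((ih (by omega)).mono (𝓕.mono n.le_succ))
      (hX.measurable n hn)

variable [IsProbabilityMeasure μ]

lemma lpBigO_one (hf : IsC11 K f) (hg : ∀ k, IsC11 K (g k))
    (hX : IsMilsteinPath f g x₀ δ N 𝓕 μ w X) {n : ℕ} (hn : n ≤ N) :
    LpBigO (fun _ : Unit => μ) (fun _ _ => 1) (fun _ => X n) := by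
  obtain ⟨h, rfl⟩ : ∃ h, δ = h ^ 2 := ⟨NNReal.sqrt δ, (NNReal.sq_sqrt δ).symm⟩
  induction n with
  | zero => exact funext hX.zero ▸ LpBigO.const x₀
  | succ n ih =>
    rw [funext (hX.succ n hn)]
    exact_mod_cast lpBigO_oneStep (h := fun _ => h) hf hg (fun _ => le_rfl)
      (fun _ => hX.increment n hn) (fun _ => hX.stronglyMeasurable hf hg (by omega))
      (ih (by omega))

lemma condCentered [CompleteSpace E] (hf : IsC11 K f) (hg : ∀ k, IsC11 K (g k))
    (hX : IsMilsteinPath f g x₀ δ N 𝓕 μ w X) {n : ℕ} (hn : n < N) :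
    CondCentered (𝓕 n) μ (fun ω => milsteinDiffusion g δ (X n ω) (w n ω)) :=
  LpBigO.condCentered_milsteinDiffusion hg (fun _ : Unit => hX.increment n hn)
    (fun _ => hX.stronglyMeasurable hf hg hn.le) (hX.lpBigO_one hf hg hn.le) ()

omit [IsProbabilityMeasure μ] in
lemma stronglyMeasurable_milsteinDiffusion (hf : IsC11 K f) (hg : ∀ k, IsC11 K (g k))
    (hX : IsMilsteinPath f g x₀ δ N 𝓕 μ w X) {n : ℕ} (hn : n < N) :
    StronglyMeasurable[𝓕 (n + 1)] (fun ω => milsteinDiffusion g δ (X n ω) (w n ω)) :=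
  (continuous_milsteinDiffusion hg δ).comp_stronglyMeasurable
    (((hX.stronglyMeasurable hf hg hn.le).mono (𝓕.mono n.le_succ)).prodMk
      (hX.measurable n hn).stronglyMeasurable)

end IsMilsteinPath

end MilsteinPath

section Moments

variable {ι κ E : Type*} [Fintype κ] [DecidableEq κ] [NormedAddCommGroup E] [NormedSpace ℝ E]
  [FiniteDimensional ℝ E] {Ω : ι → Type u} [∀ i, MeasurableSpace (Ω i)] {μ : ∀ i, Measure (Ω i)}
  [∀ i, IsProbabilityMeasure (μ i)] {K T : ℝ≥0} {δ : ι → ℝ≥0} {N : ι → ℕ}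
  {𝓕 : ∀ i, Filtration ℕ (inferInstance : MeasurableSpace (Ω i))} {f : E → E} {g : κ → E → E}
  {w : ∀ i, ℕ → Ω i → κ → ℝ} {X : ∀ i, ℕ → Ω i → E} {x₀ : E}

theorem IsMilsteinPath.lpBigO (hf : IsC11 K f) (hg : ∀ k, IsC11 K (g k))
    (hX : ∀ i, IsMilsteinPath f g x₀ (δ i) (N i) (𝓕 i) (μ i) (w i) (X i))
    (hN : ∀ i, N i * δ i ≤ T) :
    LpBigO (fun s : Σ i, Fin (N i + 1) => μ s.1) (fun _ _ => 1) (fun s => X s.1 s.2) := by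
  have hXm (s : Σ i, Fin (N i)) := (hX s.1).stronglyMeasurable hf hg s.2.2.le
  have hw (s : Σ i, Fin (N i)) := (hX s.1).increment s.2 s.2.2
  have hX_self := LpBigO.self (μ := fun s : Σ i, Fin (N i) => μ s.1) fun s =>
    ((hXm s).mono (hw s).le).aestronglyMeasurable
  have h_le (s : Σ i, Fin (N i)) : NNReal.sqrt (δ s.1) ≤ NNReal.sqrt T := by
    refine NNReal.sqrt_le_sqrt.2 ((le_mul_of_one_le_left' ?_).trans (hN s.1))
    exact_mod_cast s.2.pos
  refine LpBigO.of_recursion (h := fun i => NNReal.sqrt (δ i)) (ρ := fun _ => 1) (T := T) (𝓕 := 𝓕)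
    (D := fun i n ω => (δ i : ℝ) • f (X i n ω))
    (M := fun i n ω => milsteinDiffusion g (δ i) (X i n ω) (w i n ω)) (fun i => ?_)
    (fun i n hn => funext fun ω => ?_) ?_ ?_ ?_
    (fun i n hn => (hX i).stronglyMeasurable_milsteinDiffusion hf hg hn)
    (fun i n hn => (hX i).condCentered hf hg hn)
  · rw [NNReal.sq_sqrt]
    exact hN i
  · simp [(hX i).succ n hn, milsteinMap, add_assoc]
  · simpa only [funext ((hX _).zero)] using LpBigO.const x₀
  · refine ((hX_self.comp_lipschitz hf.lipschitz).smul_coe fun s => δ s.1).mono_le fun k s => ?_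
    rw [← ENNReal.coe_pow, NNReal.sq_sqrt]
  · exact hX_self.milsteinDiffusion hg h_le (c := 1) (fun i => by simp) hw hXm

end Moments

section AntitheticScheme

variable {κ E : Type*} [Fintype κ] [DecidableEq κ] [NormedAddCommGroup E] [NormedSpace ℝ E]

/-- A fine, an antithetic and a coarse Milstein path driven by the same Brownian increments, with
`N` coarse steps of length `2 * h ^ 2` and a time horizon of at most `T`. The fine path is
`X false`, the antithetic one `X true`; the increments `w true` are those of `w false` swapped
within each coarse step, so that the past `𝓗 b` of both paths agrees with the past `𝓕` of the
coarse path at the coarse times. -/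
structure AntitheticScheme (f : E → E) (g : κ → E → E) (T : ℝ≥0) (x₀ : E) where
  Ω : Type u
  [mΩ : MeasurableSpace Ω]
  μ : Measure Ω
  [isProbabilityMeasure : IsProbabilityMeasure μ]
  N : ℕ
  h : ℝ≥0
  le_horizon : N * (2 * h ^ 2) ≤ T
  𝓕 : Filtration ℕ mΩ
  𝓗 : Bool → Filtration ℕ mΩ
  w : Bool → ℕ → Ω → κ → ℝ
  X : Bool → ℕ → Ω → E
  Xc : ℕ → Ω → E
  past_eq : ∀ b n, 𝓗 b (2 * n) = 𝓕 n
  swap_even : ∀ n, w true (2 * n) = w false (2 * n + 1)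
  swap_odd : ∀ n, w true (2 * n + 1) = w false (2 * n)
  fine : ∀ b, IsMilsteinPath f g x₀ (h ^ 2) (2 * N) (𝓗 b) μ (w b) (X b)
  coarse : IsMilsteinPath f g x₀ (2 * h ^ 2) N 𝓕 μ
    (fun n => w false (2 * n) + w false (2 * n + 1)) Xc

namespace AntitheticScheme

attribute [instance] mΩ isProbabilityMeasure

variable {K T : ℝ≥0} {f : E → E} {g : κ → E → E} {x₀ : E} (S : AntitheticScheme f g T x₀)

lemma natCast_mul_sq_le : S.N * S.h ^ 2 ≤ T :=
  le_trans (by rw [two_mul, mul_add]; exact le_self_add) S.le_horizon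

lemma h_le_sqrt {n : ℕ} (hn : n < S.N) : S.h ≤ NNReal.sqrt T := by
  rw [← NNReal.sqrt_sq S.h]
  refine NNReal.sqrt_le_sqrt.2 ((le_mul_of_one_le_left' ?_).trans S.natCast_mul_sq_le)
  exact_mod_cast n.zero_le.trans_lt hn

lemma increment_add_increment (b : Bool) (n : ℕ) :
    S.w b (2 * n) + S.w b (2 * n + 1) = S.w false (2 * n) + S.w false (2 * n + 1) := by
  cases b
  · rfl
  · rw [S.swap_even, S.swap_odd, add_comm]

/-- The drift of the fine (`b = false`) or antithetic (`b = true`) path over the coarse step `n`. -/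
noncomputable def drift (b : Bool) (n : ℕ) (ω : S.Ω) : E :=
  twoStepDrift f g (S.h ^ 2) (S.X b (2 * n) ω) (S.w b (2 * n) ω)

/-- The mean-zero part of the fine (`b = false`) or antithetic (`b = true`) path over the coarse
step `n`. -/
noncomputable def fluctuation (b : Bool) (n : ℕ) (ω : S.Ω) : E :=
  twoStepFluctuation f g (S.h ^ 2) (S.X b (2 * n) ω) (S.w b (2 * n) ω) (S.w b (2 * n + 1) ω)

/-- The difference between the fluctuations of a two-step and of a single-step discretization of
the coarse step `n`, up to the Lévy area. -/
noncomputable def remainder (b : Bool) (n : ℕ) (ω : S.Ω) : E :=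
  twoStepRemainder f g (S.h ^ 2) (S.X b (2 * n) ω) (S.w b (2 * n) ω) (S.w b (2 * n + 1) ω)

/-- The Brownian increment over the coarse step `n`. -/
def coarseIncrement (n : ℕ) (ω : S.Ω) : κ → ℝ := S.w false (2 * n) ω + S.w false (2 * n + 1) ω

/-- The mean-zero part of the coarse path in step `n`. -/
noncomputable def coarseDiffusion (n : ℕ) (ω : S.Ω) : E :=
  milsteinDiffusion g (2 * S.h ^ 2) (S.Xc n ω) (S.coarseIncrement n ω)

lemma fine_two_mul_succ (b : Bool) {n : ℕ} (hn : n < S.N) (ω : S.Ω) :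
    S.X b (2 * (n + 1)) ω = S.X b (2 * n) ω + S.drift b n ω + S.fluctuation b n ω := by
  rw [mul_add_one, (S.fine b).succ (2 * n + 1) (by omega), (S.fine b).succ (2 * n) (by omega),
    NNReal.coe_pow, milsteinMap_milsteinMap]
  rfl

lemma coarse_succ {n : ℕ} (hn : n < S.N) (ω : S.Ω) : S.Xc (n + 1) ω
    = S.Xc n ω + (2 * S.h ^ 2 : ℝ) • f (S.Xc n ω) + S.coarseDiffusion n ω := by
  rw [S.coarse.succ n hn, milsteinMap]
  push_cast
  rfl

lemma fluctuation_eq (b : Bool) (n : ℕ) (ω : S.Ω) : S.fluctuation b n ω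
    = milsteinDiffusion g (2 * S.h ^ 2) (S.X b (2 * n) ω) (S.coarseIncrement n ω)
      + levyArea (S.w b (2 * n) ω) (S.w b (2 * n + 1) ω) (milsteinCorrection g (S.X b (2 * n) ω))
      + S.remainder b n ω := by
  have h_incr : S.w b (2 * n) ω + S.w b (2 * n + 1) ω = S.coarseIncrement n ω :=
    congrFun (S.increment_add_increment b n) ω
  rw [← h_incr]
  exact twoStepFluctuation_eq ..

lemma fluctuation_sub_coarseDiffusion (b : Bool) (n : ℕ) (ω : S.Ω) :
    S.fluctuation b n ω - S.coarseDiffusion n ω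
      = milsteinNoise (2 * S.h ^ 2) (S.coarseIncrement n ω)
          ((fun j => g j (S.X b (2 * n) ω)) - fun j => g j (S.Xc n ω))
          (milsteinCorrection g (S.X b (2 * n) ω) - milsteinCorrection g (S.Xc n ω))
        + levyArea (S.w b (2 * n) ω) (S.w b (2 * n + 1) ω) (milsteinCorrection g (S.X b (2 * n) ω))
        + S.remainder b n ω := by
  rw [fluctuation_eq, milsteinNoise_sub, coarseDiffusion, milsteinDiffusion, milsteinDiffusion]
  abel

/-- The Lévy areas of the fine and of the antithetic path are opposite to each other, so only the
difference of their coefficients survives in the average. -/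
lemma average_fluctuation_sub_coarseDiffusion (n : ℕ) (ω : S.Ω) :
    (2⁻¹ : ℝ) • (S.fluctuation false n ω + S.fluctuation true n ω) - S.coarseDiffusion n ω
      = milsteinNoise (2 * S.h ^ 2) (S.coarseIncrement n ω)
          ((2⁻¹ : ℝ) • ((fun j => g j (S.X false (2 * n) ω)) + fun j => g j (S.X true (2 * n) ω))
            - fun j => g j (S.Xc n ω))
          ((2⁻¹ : ℝ) • (milsteinCorrection g (S.X false (2 * n) ω)
            + milsteinCorrection g (S.X true (2 * n) ω)) - milsteinCorrection g (S.Xc n ω))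
        + (2⁻¹ : ℝ) • levyArea (S.w false (2 * n) ω) (S.w false (2 * n + 1) ω)
          (milsteinCorrection g (S.X false (2 * n) ω) - milsteinCorrection g (S.X true (2 * n) ω))
        + (2⁻¹ : ℝ) • (S.remainder false n ω + S.remainder true n ω) := by
  rw [fluctuation_eq, fluctuation_eq, S.swap_even, S.swap_odd,
    levyArea_swap (S.w false (2 * n) ω) (S.w false (2 * n + 1) ω),
    milsteinNoise_sub, milsteinNoise_smul, milsteinNoise_add, levyArea_sub, coarseDiffusion,
    milsteinDiffusion, milsteinDiffusion, milsteinDiffusion]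
  module

section Measurability

variable (hf : IsC11 K f) (hg : ∀ k, IsC11 K (g k)) {n : ℕ} (hn : n < S.N)

include hf hg

lemma stronglyMeasurable_fine (b : Bool) (hn : n ≤ S.N) :
    StronglyMeasurable[S.𝓕 n] (S.X b (2 * n)) :=
  S.past_eq b n ▸ (S.fine b).stronglyMeasurable hf hg (by omega)

lemma stronglyMeasurable_coarse (hn : n ≤ S.N) : StronglyMeasurable[S.𝓕 n] (S.Xc n) :=
  S.coarse.stronglyMeasurable hf hg hn

include hn

lemma stronglyMeasurable_fluctuation (b : Bool) :
    StronglyMeasurable[S.𝓕 (n + 1)] (S.fluctuation b n) := by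
  rw [← S.past_eq b]
  exact stronglyMeasurable_twoStepFluctuation hf hg _
    (((S.fine b).stronglyMeasurable hf hg (by omega)).mono ((S.𝓗 b).mono (by omega)))
    (((S.fine b).measurable _ (by omega)).mono ((S.𝓗 b).mono (by omega)) le_rfl)
    ((S.fine b).measurable _ (by omega))

lemma stronglyMeasurable_coarseDiffusion :
    StronglyMeasurable[S.𝓕 (n + 1)] (S.coarseDiffusion n) := by
  have h_coarse := S.coarse.stronglyMeasurable_milsteinDiffusion hf hg hn
  push_cast at h_coarse
  exact h_coarse

lemma stronglyMeasurable_average_fluctuation_sub_coarseDiffusion :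
    StronglyMeasurable[S.𝓕 (n + 1)] ((2⁻¹ : ℝ) • (S.fluctuation false n + S.fluctuation true n)
      - S.coarseDiffusion n) :=
  (((S.stronglyMeasurable_fluctuation hf hg hn false).add
    (S.stronglyMeasurable_fluctuation hf hg hn true)).const_smul 2⁻¹).sub
      (S.stronglyMeasurable_coarseDiffusion hf hg hn)

lemma condCentered_coarseDiffusion [CompleteSpace E] :
    CondCentered (S.𝓕 n) S.μ (S.coarseDiffusion n) := by
  have h_coarse := S.coarse.condCentered hf hg hn
  push_cast at h_coarse
  exact h_coarse

end Measurability

end AntitheticScheme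

end AntitheticScheme

namespace AntitheticScheme

section Estimates

variable {κ E : Type*} [Fintype κ] [DecidableEq κ] [NormedAddCommGroup E] [NormedSpace ℝ E]
  {K T : ℝ≥0} {f : E → E} {g : κ → E → E} {x₀ : E}

/-- The coarse steps of all antithetic schemes. Bounds that are uniform over this type are uniform
in the number and the size of the steps. -/
abbrev CoarseStep (f : E → E) (g : κ → E → E) (T : ℝ≥0) (x₀ : E) :=
  Σ S : AntitheticScheme.{u} f g T x₀, Fin S.N

variable (hf : IsC11 K f) (hg : ∀ k, IsC11 K (g k))

lemma h_le (s : CoarseStep.{u} f g T x₀) : s.1.h ≤ NNReal.sqrt T := s.1.h_le_sqrt s.2.2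

lemma isBrownianIncrement_first (b : Bool) (s : CoarseStep.{u} f g T x₀) :
    IsBrownianIncrement (s.1.𝓕 s.2) s.1.μ (s.1.h ^ 2) (s.1.w b (2 * s.2)) :=
  s.1.past_eq b s.2 ▸ (s.1.fine b).increment _ (by omega)

lemma isBrownianIncrement_second (b : Bool) (s : CoarseStep.{u} f g T x₀) :
    IsBrownianIncrement (s.1.𝓗 b (2 * s.2 + 1)) s.1.μ (s.1.h ^ 2) (s.1.w b (2 * s.2 + 1)) :=
  (s.1.fine b).increment _ (by omega)

lemma past_le (b : Bool) (s : CoarseStep.{u} f g T x₀) :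
    s.1.𝓕 s.2 ≤ s.1.𝓗 b (2 * s.2 + 1) :=
  s.1.past_eq b s.2 ▸ (s.1.𝓗 b).mono (Nat.le_succ _)

lemma isBrownianIncrement_coarseIncrement (s : CoarseStep.{u} f g T x₀) :
    IsBrownianIncrement (s.1.𝓕 s.2) s.1.μ (2 * s.1.h ^ 2) (s.1.coarseIncrement s.2) :=
  s.1.coarse.increment s.2 s.2.2

lemma lpBigO_levyArea (c : Bool) {τ : CoarseStep.{u} f g T x₀ → ℝ≥0∞}
    {b : ∀ s : CoarseStep.{u} f g T x₀, s.1.Ω → κ → κ → E}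
    (hb : ∀ j k, LpBigO (fun s => s.1.μ) (fun _ => τ) (fun s ω => b s ω j k)) :
    LpBigO (fun s => s.1.μ) (fun _ s => s.1.h * s.1.h * τ s)
      (fun s ω => levyArea (s.1.w c (2 * s.2) ω) (s.1.w c (2 * s.2 + 1) ω) (b s ω)) :=
  .levyArea (IsBrownianIncrement.lpBigO_apply (isBrownianIncrement_first c)
    fun _ => (one_mul _).ge) (IsBrownianIncrement.lpBigO_apply (isBrownianIncrement_second c)
      fun _ => (one_mul _).ge) hb

lemma lpBigO_coarseNoise {r r' : ℕ → CoarseStep.{u} f g T x₀ → ℝ≥0∞}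
    {a : ∀ s : CoarseStep.{u} f g T x₀, s.1.Ω → κ → E}
    {b : ∀ s : CoarseStep.{u} f g T x₀, s.1.Ω → κ → κ → E}
    (ha : ∀ j, LpBigO (fun s => s.1.μ) r (fun s ω => a s ω j))
    (hb : ∀ j k, LpBigO (fun s => s.1.μ) r' (fun s ω => b s ω j k))
    (ham : ∀ s j, StronglyMeasurable[s.1.𝓕 s.2] fun ω => a s ω j)
    (hbm : ∀ s j k, StronglyMeasurable[s.1.𝓕 s.2] fun ω => b s ω j k) :
    LpBigO (fun s => s.1.μ) (fun k s => s.1.h * (r k s + s.1.h * r' k s))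
      (fun s ω => milsteinNoise (2 * s.1.h ^ 2) (s.1.coarseIncrement s.2 ω) (a s ω) (b s ω)) := by
  have h_noise := IsBrownianIncrement.lpBigO_milsteinNoise isBrownianIncrement_coarseIncrement
    (fun _ => le_rfl) ha hb ham hbm
  push_cast at h_noise
  exact h_noise

include hf hg

variable [FiniteDimensional ℝ E]

lemma lpBigO_fine (b : Bool) : LpBigO (fun s : CoarseStep.{u} f g T x₀ => s.1.μ) (fun _ _ => 1)
    (fun s => s.1.X b (2 * s.2)) := by
  have h_bound := IsMilsteinPath.lpBigO (ι := AntitheticScheme f g T x₀) (T := T) hf hg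
    (fun S => S.fine b) fun S => by
      refine le_of_eq_of_le ?_ S.le_horizon
      push_cast
      ring
  exact h_bound.comp fun s : CoarseStep f g T x₀ => ⟨s.1, 2 * s.2, by omega⟩

lemma lpBigO_coarse : LpBigO (fun s : CoarseStep.{u} f g T x₀ => s.1.μ) (fun _ _ => 1)
    (fun s => s.1.Xc s.2) := by
  have h_bound := IsMilsteinPath.lpBigO (ι := AntitheticScheme f g T x₀) (T := T) hf hg
    (fun S => S.coarse) fun S => S.le_horizon
  exact h_bound.comp fun s : CoarseStep f g T x₀ => ⟨s.1, s.2, by omega⟩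

lemma lpBigO_milsteinCorrection_fine (b : Bool) (j k : κ) :
    LpBigO (fun s : CoarseStep.{u} f g T x₀ => s.1.μ) (fun _ _ => 1)
      (fun s ω => milsteinCorrection g (s.1.X b (2 * s.2) ω) j k) :=
  ((lpBigO_fine hf hg b).milsteinCorrection hg j k).mono fun _ => ⟨2, fun _ => by norm_num⟩

lemma lpBigO_milsteinCorrection_coarse (j k : κ) :
    LpBigO (fun s : CoarseStep.{u} f g T x₀ => s.1.μ) (fun _ _ => 1)
      (fun s ω => milsteinCorrection g (s.1.Xc s.2 ω) j k) :=
  ((lpBigO_coarse hf hg).milsteinCorrection hg j k).mono fun _ => ⟨2, fun _ => by norm_num⟩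

lemma lpBigO_drift_sub (b : Bool) : LpBigO (fun s : CoarseStep.{u} f g T x₀ => s.1.μ)
    (fun _ s => s.1.h ^ 4)
    (fun s ω => s.1.drift b s.2 ω - (2 * s.1.h ^ 2 : ℝ) • f (s.1.X b (2 * s.2) ω)) :=
  lpBigO_twoStepDrift_sub hf hg h_le (isBrownianIncrement_first b)
    (fun s => s.1.stronglyMeasurable_fine hf hg b s.2.2.le) (lpBigO_fine hf hg b)

lemma lpBigO_remainder (b : Bool) : LpBigO (fun s : CoarseStep.{u} f g T x₀ => s.1.μ)
    (fun _ s => s.1.h ^ 3) (fun s => s.1.remainder b s.2) :=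
  lpBigO_twoStepRemainder hf hg h_le (isBrownianIncrement_first b)
    (fun s => s.1.stronglyMeasurable_fine hf hg b s.2.2.le) (lpBigO_fine hf hg b) (past_le b)
    (fun s => (s.1.fine b).measurable _ (by omega)) (isBrownianIncrement_second b)

lemma condCentered_fluctuation (b : Bool) (s : CoarseStep.{u} f g T x₀) :
    CondCentered (s.1.𝓕 s.2) s.1.μ (s.1.fluctuation b s.2) :=
  condCentered_twoStepFluctuation hf hg h_le (isBrownianIncrement_first b)
    (fun s => s.1.stronglyMeasurable_fine hf hg b s.2.2.le) (lpBigO_fine hf hg b) (past_le b)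
    (fun s => (s.1.fine b).measurable _ (by omega)) (isBrownianIncrement_second b) s

end Estimates

end AntitheticScheme

namespace AntitheticScheme

variable {κ E : Type*} [Fintype κ] [DecidableEq κ] [NormedAddCommGroup E] [NormedSpace ℝ E]
  {K T : ℝ≥0} {f : E → E} {g : κ → E → E} {x₀ : E}

/-- The difference between the fine (`b = false`) or antithetic (`b = true`) path and the coarse
path after `n` coarse steps, which is of order `h`. -/
def fineError (S : AntitheticScheme.{u} f g T x₀) (b : Bool) (n : ℕ) : S.Ω → E :=
  S.X b (2 * n) - S.Xc n

/-- The average of the fine and the antithetic path after `n` coarse steps. -/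
noncomputable def average (S : AntitheticScheme.{u} f g T x₀) (n : ℕ) : S.Ω → E :=
  (2⁻¹ : ℝ) • (S.X false (2 * n) + S.X true (2 * n))

/-- The difference between the average and the coarse path after `n` coarse steps, which is of
order `h ^ 2`. -/
noncomputable def averageError (S : AntitheticScheme.{u} f g T x₀) (n : ℕ) : S.Ω → E :=
  S.average n - S.Xc n

lemma fineError_succ (S : AntitheticScheme.{u} f g T x₀) (b : Bool) {n : ℕ} (hn : n < S.N) :
    S.fineError b (n + 1) = S.fineError b n
      + (fun ω => S.drift b n ω - (2 * S.h ^ 2 : ℝ) • f (S.Xc n ω))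
      + (S.fluctuation b n - S.coarseDiffusion n) := by
  ext ω
  simp only [fineError, Pi.sub_apply, Pi.add_apply, S.fine_two_mul_succ b hn, S.coarse_succ hn]
  abel

lemma averageError_succ (S : AntitheticScheme.{u} f g T x₀) {n : ℕ} (hn : n < S.N) :
    S.averageError (n + 1) = S.averageError n
      + (fun ω => (2⁻¹ : ℝ) • (S.drift false n ω + S.drift true n ω)
        - (2 * S.h ^ 2 : ℝ) • f (S.Xc n ω))
      + ((2⁻¹ : ℝ) • (S.fluctuation false n + S.fluctuation true n) - S.coarseDiffusion n) := by
  ext ω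
  simp only [averageError, average, Pi.sub_apply, Pi.add_apply, Pi.smul_apply,
    S.fine_two_mul_succ _ hn, S.coarse_succ hn]
  module

lemma fineError_zero (S : AntitheticScheme.{u} f g T x₀) (b : Bool) : S.fineError b 0 = 0 := by
  ext ω
  simp [fineError, (S.fine b).zero, S.coarse.zero]

lemma averageError_zero (S : AntitheticScheme.{u} f g T x₀) : S.averageError 0 = 0 := by
  ext ω
  simp only [averageError, average, Pi.sub_apply, Pi.add_apply, Pi.smul_apply, (S.fine _).zero,
    S.coarse.zero, Pi.zero_apply]
  module

variable (hf : IsC11 K f) (hg : ∀ k, IsC11 K (g k)) [FiniteDimensional ℝ E]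

include hf hg

section FineError

lemma lpBigO_fineError_self (b : Bool) : LpBigO (fun s : CoarseStep.{u} f g T x₀ => s.1.μ)
    (fun k s => eLpNorm (s.1.fineError b s.2) (evenExponent k) s.1.μ)
    (fun s => s.1.fineError b s.2) :=
  .self ((lpBigO_fine hf hg b).sub (lpBigO_coarse hf hg)).aestronglyMeasurable

lemma lpBigO_drift_sub_coarse (b : Bool) : LpBigO (fun s : CoarseStep.{u} f g T x₀ => s.1.μ)
    (fun k s => s.1.h ^ 2 * (eLpNorm (s.1.fineError b s.2) (evenExponent k) s.1.μ + s.1.h))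
    (fun s ω => s.1.drift b s.2 ω - (2 * s.1.h ^ 2 : ℝ) • f (s.1.Xc s.2 ω)) := by
  have h_local := (lpBigO_drift_sub (T := T) (x₀ := x₀) hf hg b).mono (r' := fun k s =>
      s.1.h ^ 2 * (eLpNorm (s.1.fineError b s.2) (evenExponent k) s.1.μ + s.1.h)) fun _ =>
    ⟨NNReal.sqrt T, fun s => by
      calc (s.1.h ^ 4 : ℝ≥0∞) = s.1.h * (s.1.h ^ 2 * s.1.h) := by ring
        _ ≤ NNReal.sqrt T * (s.1.h ^ 2 * s.1.h) := by gcongr; exact h_le s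
        _ ≤ _ := by gcongr; exact le_add_self⟩
  have h_lipschitz := (LpBigO.comp_sub_comp hf.lipschitz (lpBigO_fine hf hg b).aestronglyMeasurable
    (lpBigO_coarse hf hg).aestronglyMeasurable (lpBigO_fineError_self (T := T) (x₀ := x₀) hf hg b))
  have h_propagated := ((h_lipschitz.smul_coe fun s => s.1.h ^ 2).const_smul 2).mono_le
    (r' := fun k s => s.1.h ^ 2 * (eLpNorm (s.1.fineError b s.2) (evenExponent k) s.1.μ + s.1.h))
    fun _ s => by
      push_cast
      gcongr
      exact le_self_add
  convert h_local.add h_propagated using 2 with s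
  ext ω
  simp only [Pi.add_apply, Pi.smul_apply, NNReal.coe_pow]
  module

lemma lpBigO_fluctuation_sub_coarseDiffusion (b : Bool) :
    LpBigO (fun s : CoarseStep.{u} f g T x₀ => s.1.μ)
    (fun k s => s.1.h * (eLpNorm (s.1.fineError b s.2) (evenExponent k) s.1.μ + s.1.h))
    (fun s => s.1.fluctuation b s.2 - s.1.coarseDiffusion s.2) := by
  have hxm (s : CoarseStep.{u} f g T x₀) := s.1.stronglyMeasurable_fine hf hg b s.2.2.le
  have hxcm (s : CoarseStep.{u} f g T x₀) := s.1.stronglyMeasurable_coarse hf hg s.2.2.le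
  have hgc (j : κ) := (hg j).lipschitz.continuous
  have hcc (j k : κ) := continuous_milsteinCorrection hg j k
  have h_coeff (j : κ) := LpBigO.comp_sub_comp (hg j).lipschitz
    (lpBigO_fine hf hg b).aestronglyMeasurable (lpBigO_coarse hf hg).aestronglyMeasurable
    (lpBigO_fineError_self.{u} (T := T) (x₀ := x₀) hf hg b)
  have h_corr (j k : κ) := (lpBigO_milsteinCorrection_fine.{u} (T := T) (x₀ := x₀) hf hg b j k).sub
    (lpBigO_milsteinCorrection_coarse hf hg j k)
  have h_noise := lpBigO_coarseNoise h_coeff h_corr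
    (fun s j => ((hgc j).comp_stronglyMeasurable (hxm s)).sub
      ((hgc j).comp_stronglyMeasurable (hxcm s)))
    (fun s j k => ((hcc j k).comp_stronglyMeasurable (hxm s)).sub
      ((hcc j k).comp_stronglyMeasurable (hxcm s)))
  have h_area := lpBigO_levyArea.{u} (T := T) (x₀ := x₀) b
    (lpBigO_milsteinCorrection_fine hf hg b)
  have h_rem := lpBigO_remainder.{u} (T := T) (x₀ := x₀) hf hg b
  convert ((h_noise.mono_le fun k s => ?_).add (h_area.mono_le fun k s => ?_)).add
    (h_rem.mono fun k => ⟨NNReal.sqrt T, fun s => ?_⟩) using 2 with s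
  · ext ω
    exact s.1.fluctuation_sub_coarseDiffusion b s.2 ω
  · rw [mul_one]
  · rw [mul_one]
    gcongr
    exact le_add_self
  · calc (s.1.h ^ 3 : ℝ≥0∞) = s.1.h * (s.1.h * s.1.h) := by ring
      _ ≤ NNReal.sqrt T * (s.1.h * (_ + s.1.h)) := by
        gcongr
        · exact h_le s
        · exact le_add_self

end FineError

theorem lpBigO_fineError (b : Bool) :
    LpBigO (fun s : Σ S : AntitheticScheme.{u} f g T x₀, Fin (S.N + 1) => s.1.μ)
      (fun _ s => s.1.h) (fun s => s.1.fineError b s.2) :=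
  .of_recursion (ι := AntitheticScheme.{u} f g T x₀) (Ω := fun S => S.Ω) (μ := fun S => S.μ)
    (N := fun S => S.N) (h := fun S => S.h) (ρ := fun S => S.h) (𝓕 := fun S => S.𝓕)
    (e := fun S => S.fineError b)
    (D := fun S n ω => S.drift b n ω - (2 * S.h ^ 2 : ℝ) • f (S.Xc n ω))
    (M := fun S n => S.fluctuation b n - S.coarseDiffusion n)
    (fun S => S.natCast_mul_sq_le) (fun S _ hn => S.fineError_succ b hn)
    (by simpa only [fineError_zero] using LpBigO.zero) (lpBigO_drift_sub_coarse hf hg b)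
    (lpBigO_fluctuation_sub_coarseDiffusion hf hg b)
    (fun S n hn => (S.stronglyMeasurable_fluctuation hf hg hn b).sub
      (S.stronglyMeasurable_coarseDiffusion hf hg hn))
    (fun S n hn => (condCentered_fluctuation hf hg b ⟨S, n, hn⟩).sub
      (S.condCentered_coarseDiffusion hf hg hn))

end AntitheticScheme

namespace AntitheticScheme

section AverageError

variable {κ E : Type*} [Fintype κ] [DecidableEq κ] [NormedAddCommGroup E] [NormedSpace ℝ E]
  [FiniteDimensional ℝ E] {K T : ℝ≥0} {f : E → E} {g : κ → E → E} {x₀ : E} (hf : IsC11 K f)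
  (hg : ∀ k, IsC11 K (g k))

include hf hg

lemma lpBigO_fine_sub_coarse (b : Bool) : LpBigO (fun s : CoarseStep.{u} f g T x₀ => s.1.μ)
    (fun _ s => s.1.h) (fun s => s.1.X b (2 * s.2) - s.1.Xc s.2) :=
  (lpBigO_fineError.{u} (T := T) (x₀ := x₀) hf hg b).comp
    fun s : CoarseStep.{u} f g T x₀ => ⟨s.1, s.2.castSucc⟩

lemma lpBigO_fine_false_sub_fine_true : LpBigO (fun s : CoarseStep.{u} f g T x₀ => s.1.μ)
    (fun _ s => s.1.h) (fun s => s.1.X false (2 * s.2) - s.1.X true (2 * s.2)) := by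
  simpa only [sub_sub_sub_cancel_right] using
    (lpBigO_fine_sub_coarse.{u} (T := T) (x₀ := x₀) hf hg false).sub
      (lpBigO_fine_sub_coarse hf hg true)

lemma lpBigO_averageError_self : LpBigO (fun s : CoarseStep.{u} f g T x₀ => s.1.μ)
    (fun k s => eLpNorm (s.1.averageError s.2) (evenExponent k) s.1.μ)
    (fun s => s.1.averageError s.2) :=
  .self ((((lpBigO_fine hf hg false).add (lpBigO_fine hf hg true)).const_smul 2⁻¹).sub
    (lpBigO_coarse hf hg)).aestronglyMeasurable

lemma lpBigO_average_comp_sub {L : ℝ≥0} {F : Type*} [NormedAddCommGroup F] [NormedSpace ℝ F]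
    {φ : E → F} (hφ : IsC11 L φ) : LpBigO (fun s : CoarseStep.{u} f g T x₀ => s.1.μ)
    (fun k s => eLpNorm (s.1.averageError s.2) (evenExponent k) s.1.μ + s.1.h ^ 2)
    (fun s ω => (2⁻¹ : ℝ) • (φ (s.1.X false (2 * s.2) ω) + φ (s.1.X true (2 * s.2) ω))
      - φ (s.1.Xc s.2 ω)) := by
  have hX (b : Bool) := (lpBigO_fine.{u} (T := T) (x₀ := x₀) hf hg b)
  have h_midpoint := LpBigO.midpoint hφ (hX false).aestronglyMeasurable
    (hX true).aestronglyMeasurable (lpBigO_fine_false_sub_fine_true hf hg)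
  have h_lipschitz := LpBigO.comp_sub_comp hφ.lipschitz
    (((hX false).add (hX true)).const_smul 2⁻¹).aestronglyMeasurable
    (lpBigO_coarse hf hg).aestronglyMeasurable
    (lpBigO_averageError_self.{u} (T := T) (x₀ := x₀) hf hg)
  convert (h_midpoint.mono_le fun k s => ?_).add (h_lipschitz.mono_le fun k s => le_self_add)
    using 2 with s
  · ext ω
    simp only [Pi.add_apply, Pi.smul_apply, sub_add_sub_cancel]
  · rw [← sq]
    exact le_add_self

lemma lpBigO_average_milsteinCorrection_sub (j k : κ) :
    LpBigO (fun s : CoarseStep.{u} f g T x₀ => s.1.μ) (fun _ s => s.1.h)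
      (fun s ω => (2⁻¹ : ℝ) • (milsteinCorrection g (s.1.X false (2 * s.2) ω) j k
        + milsteinCorrection g (s.1.X true (2 * s.2) ω) j k)
          - milsteinCorrection g (s.1.Xc s.2 ω) j k) := by
  have h_corr (b : Bool) := LpBigO.milsteinCorrection_sub hg (lpBigO_fine hf hg b)
    (lpBigO_coarse hf hg) (lpBigO_fine_sub_coarse.{u} (T := T) (x₀ := x₀) hf hg b) j k
  convert ((h_corr false).add (h_corr true)).const_smul 2⁻¹ using 2 with s
  ext ω
  simp only [Pi.add_apply, Pi.smul_apply]
  module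

lemma lpBigO_average_drift_sub_coarse : LpBigO (fun s : CoarseStep.{u} f g T x₀ => s.1.μ)
    (fun k s => s.1.h ^ 2
      * (eLpNorm (s.1.averageError s.2) (evenExponent k) s.1.μ + s.1.h ^ 2))
    (fun s ω => (2⁻¹ : ℝ) • (s.1.drift false s.2 ω + s.1.drift true s.2 ω)
      - (2 * s.1.h ^ 2 : ℝ) • f (s.1.Xc s.2 ω)) := by
  have h_local (b : Bool) := lpBigO_drift_sub.{u} (T := T) (x₀ := x₀) hf hg b
  have h_average :=
    (lpBigO_average_comp_sub.{u} (T := T) (x₀ := x₀) hf hg hf).smul_coe fun s => s.1.h ^ 2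
  convert ((((h_local false).add (h_local true)).const_smul 2⁻¹).mono_le fun k s => ?_).add
    ((h_average.const_smul 2).mono_le fun k s => ?_) using 2 with s
  · ext ω
    simp only [Pi.add_apply, Pi.smul_apply, NNReal.coe_pow]
    module
  · rw [show 4 = 2 + 2 from rfl, pow_add]
    gcongr
    exact le_add_self
  · push_cast
    rfl

lemma condCentered_average_fluctuation_sub_coarseDiffusion
    (S : AntitheticScheme.{u} f g T x₀) {n : ℕ} (hn : n < S.N) :
    CondCentered (S.𝓕 n) S.μ ((2⁻¹ : ℝ) • (S.fluctuation false n + S.fluctuation true n)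
      - S.coarseDiffusion n) :=
  (((condCentered_fluctuation hf hg false ⟨S, n, hn⟩).add
    (condCentered_fluctuation hf hg true ⟨S, n, hn⟩)).const_smul 2⁻¹).sub
      (S.condCentered_coarseDiffusion hf hg hn)

lemma lpBigO_average_fluctuation_sub_coarseDiffusion :
    LpBigO (fun s : CoarseStep.{u} f g T x₀ => s.1.μ)
    (fun k s => s.1.h * (eLpNorm (s.1.averageError s.2) (evenExponent k) s.1.μ + s.1.h ^ 2))
    (fun s => (2⁻¹ : ℝ) • (s.1.fluctuation false s.2 + s.1.fluctuation true s.2)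
      - s.1.coarseDiffusion s.2) := by
  have hX (s : CoarseStep.{u} f g T x₀) (b : Bool) := s.1.stronglyMeasurable_fine hf hg b s.2.2.le
  have hXc (s : CoarseStep.{u} f g T x₀) := s.1.stronglyMeasurable_coarse hf hg s.2.2.le
  have hgc (j : κ) := (hg j).lipschitz.continuous
  have hcc (j k : κ) := continuous_milsteinCorrection hg j k
  have h_noise := lpBigO_coarseNoise
    (fun j => lpBigO_average_comp_sub.{u} (T := T) (x₀ := x₀) hf hg (hg j))
    (lpBigO_average_milsteinCorrection_sub hf hg)
    (fun s j => ((((hgc j).comp_stronglyMeasurable (hX s false)).add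
      ((hgc j).comp_stronglyMeasurable (hX s true))).const_smul 2⁻¹).sub
        ((hgc j).comp_stronglyMeasurable (hXc s)))
    (fun s j k => ((((hcc j k).comp_stronglyMeasurable (hX s false)).add
      ((hcc j k).comp_stronglyMeasurable (hX s true))).const_smul 2⁻¹).sub
        ((hcc j k).comp_stronglyMeasurable (hXc s)))
  have h_area := lpBigO_levyArea.{u} (T := T) (x₀ := x₀) false
    (LpBigO.milsteinCorrection_sub hg (lpBigO_fine hf hg false) (lpBigO_fine hf hg true)
      (lpBigO_fine_false_sub_fine_true hf hg))
  have h_rem (b : Bool) := lpBigO_remainder.{u} (T := T) (x₀ := x₀) hf hg b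
  convert ((h_noise.mono fun k => ⟨2, fun s => ?_⟩).add
    ((h_area.const_smul 2⁻¹).mono_le fun k s => ?_)).add
      ((((h_rem false).add (h_rem true)).const_smul 2⁻¹).mono_le fun k s => ?_) using 2 with s
  · ext ω
    exact s.1.average_fluctuation_sub_coarseDiffusion s.2 ω
  · rw [ENNReal.coe_ofNat, two_mul, ← mul_add, ← sq]
    gcongr
    exact le_add_self
  · rw [mul_assoc, ← sq]
    gcongr
    exact le_add_self
  · rw [pow_succ']
    gcongr
    exact le_add_self

theorem lpBigO_averageError :
    LpBigO (fun s : Σ S : AntitheticScheme.{u} f g T x₀, Fin (S.N + 1) => s.1.μ)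
      (fun _ s => s.1.h ^ 2) (fun s => s.1.averageError s.2) :=
  .of_recursion (ι := AntitheticScheme.{u} f g T x₀) (Ω := fun S => S.Ω) (μ := fun S => S.μ)
    (N := fun S => S.N) (h := fun S => S.h) (ρ := fun S => S.h ^ 2) (𝓕 := fun S => S.𝓕)
    (e := fun S => S.averageError)
    (D := fun S n ω => (2⁻¹ : ℝ) • (S.drift false n ω + S.drift true n ω)
      - (2 * S.h ^ 2 : ℝ) • f (S.Xc n ω))
    (M := fun S n => (2⁻¹ : ℝ) • (S.fluctuation false n + S.fluctuation true n)
      - S.coarseDiffusion n)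
    (fun S => S.natCast_mul_sq_le) (fun S _ hn => S.averageError_succ hn)
    (by simpa only [averageError_zero] using LpBigO.zero) (lpBigO_average_drift_sub_coarse hf hg)
    (lpBigO_average_fluctuation_sub_coarseDiffusion hf hg)
    (fun S _ hn => S.stronglyMeasurable_average_fluctuation_sub_coarseDiffusion hf hg hn)
    (fun S _ hn => S.condCentered_average_fluctuation_sub_coarseDiffusion hf hg hn)

theorem lpBigO_sup'_norm_averageError :
    LpBigO (fun S : AntitheticScheme.{u} f g T x₀ => S.μ) (fun _ S => S.h ^ 2)
      (fun S => (Finset.range (S.N + 1)).sup' Finset.nonempty_range_add_one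
        fun n ω => ‖S.averageError n ω‖) := by
  have h_error := (lpBigO_averageError.{u} (T := T) (x₀ := x₀) hf hg).comp
    fun s : CoarseStep.{u} f g T x₀ => ⟨s.1, s.2.castSucc⟩
  exact .sup'_norm_of_recursion (ι := AntitheticScheme.{u} f g T x₀) (Ω := fun S => S.Ω)
    (μ := fun S => S.μ) (N := fun S => S.N) (h := fun S => S.h) (ρ := fun S => S.h ^ 2)
    (𝓕 := fun S => S.𝓕) (e := fun S => S.averageError)
    (D := fun S n ω => (2⁻¹ : ℝ) • (S.drift false n ω + S.drift true n ω)
      - (2 * S.h ^ 2 : ℝ) • f (S.Xc n ω))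
    (M := fun S n => (2⁻¹ : ℝ) • (S.fluctuation false n + S.fluctuation true n)
      - S.coarseDiffusion n)
    (fun S => S.natCast_mul_sq_le) (fun S => ENNReal.pow_ne_top ENNReal.coe_ne_top)
    (fun S _ hn => S.averageError_succ hn)
    (by simpa only [averageError_zero] using LpBigO.zero)
    ((lpBigO_average_drift_sub_coarse hf hg).mono fun k => h_error.exists_mul_eLpNorm_add_le _ k)
    ((lpBigO_average_fluctuation_sub_coarseDiffusion hf hg).mono fun k =>
      h_error.exists_mul_eLpNorm_add_le _ k)
    (fun S _ hn => S.stronglyMeasurable_average_fluctuation_sub_coarseDiffusion hf hg hn)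
    (fun S _ hn => S.condCentered_average_fluctuation_sub_coarseDiffusion hf hg hn)

end AverageError

end AntitheticScheme

section Noise

variable {Ω ι : Type*} {mΩ : MeasurableSpace Ω} {μ : Measure Ω} {V : ι → Ω → ℝ} {A B : Set ι}

/-- The `σ`-algebra generated by the random variables `V q` with `q ∈ A`. -/
@[reducible]
def sigmaAlgebraOn (V : ι → Ω → ℝ) (A : Set ι) : MeasurableSpace Ω :=
  ⨆ q ∈ A, MeasurableSpace.comap (V q) inferInstance

lemma sigmaAlgebraOn_mono (hAB : A ⊆ B) : sigmaAlgebraOn V A ≤ sigmaAlgebraOn V B :=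
  biSup_mono hAB

lemma sigmaAlgebraOn_le (hV : ∀ q, Measurable (V q)) : sigmaAlgebraOn V A ≤ mΩ :=
  iSup₂_le fun q _ => (hV q).comap_le

lemma measurable_sigmaAlgebraOn {q : ι} (hq : q ∈ A) : Measurable[sigmaAlgebraOn V A] (V q) :=
  measurable_iff_comap_le.2 (le_iSup₂_of_le q hq le_rfl)

lemma indep_sigmaAlgebraOn (hV : ∀ q, Measurable (V q)) (h_indep : iIndepFun V μ)
    (hAB : Disjoint A B) : Indep (sigmaAlgebraOn V A) (sigmaAlgebraOn V B) μ :=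
  indep_iSup_of_disjoint (fun q => (hV q).comap_le) h_indep hAB

/-- The information carried by the random variables `V q` that are revealed before time `n`, when
`V q` is revealed at time `t q`. -/
def pastFiltration (hV : ∀ q, Measurable (V q)) (t : ι → ℕ) : Filtration ℕ mΩ where
  seq n := sigmaAlgebraOn V {q | t q < n}
  mono' _ _ h := sigmaAlgebraOn_mono fun _ hq => lt_of_lt_of_le hq h
  le' _ := sigmaAlgebraOn_le hV

lemma isBrownianIncrement_of_disjoint {κ : Type*} {δ : ℝ≥0} {w : Ω → κ → ℝ}
    {S : κ → Set ι} (hV : ∀ q, Measurable (V q)) (h_indep : iIndepFun V μ)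
    (hw : ∀ j, Measurable[sigmaAlgebraOn V (S j)] fun ω => w ω j)
    (hS : Pairwise fun j k => Disjoint (S j) (S k)) (hA : ∀ j, Disjoint (S j) A)
    (h_law : ∀ j, HasLaw (fun ω => w ω j) (gaussianReal 0 δ) μ) :
    IsBrownianIncrement (sigmaAlgebraOn V A) μ δ w where
  le := sigmaAlgebraOn_le hV
  measurable := measurable_pi_lambda _ fun j => (hw j).mono (sigmaAlgebraOn_le hV) le_rfl
  indep := by
    refine indep_of_indep_of_le_left
      (indep_sigmaAlgebraOn hV h_indep (Set.disjoint_iUnion_left.2 hA)) ?_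
    have h_meas : Measurable[sigmaAlgebraOn V (⋃ j, S j)] w := by
      refine @measurable_pi_lambda _ _ _ (sigmaAlgebraOn V (⋃ j, S j)) _ _ fun j => ?_
      exact (hw j).mono (sigmaAlgebraOn_mono (Set.subset_iUnion S j)) le_rfl
    exact h_meas.comap_le
  hasLaw := h_law
  indep_coord j k hjk := by
    exact (IndepFun_iff_Indep _ _ _).2 <| indep_of_indep_of_le_left (indep_of_indep_of_le_right
      (indep_sigmaAlgebraOn hV h_indep (hS hjk)) (hw k).comap_le) (hw j).comap_le

end Noise

section HalfStepNoise

variable {Ω κ : Type*} {mΩ : MeasurableSpace Ω} {μ : Measure Ω} {δ : ℝ≥0} {N : ℕ}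
  {W : Fin N → Bool → Ω → κ → ℝ}

/-- `W n false` and `W n true` are the Brownian increments over the first and the second half of
the coarse step `n`, both of length `δ`. -/
structure IsHalfStepNoise (μ : Measure Ω) (δ : ℝ≥0) (W : Fin N → Bool → Ω → κ → ℝ) : Prop where
  measurable : ∀ n c j, Measurable fun ω => W n c ω j
  map_eq : ∀ n c j, μ.map (fun ω => W n c ω j) = gaussianReal 0 δ
  indep : iIndepFun (fun (q : Fin N × Bool × κ) ω => W q.1 q.2.1 ω q.2.2) μ

/-- The increments over the half steps in the order in which the fine (`b = false`) or antithetic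
(`b = true`) path uses them, extended by `0` beyond the horizon. -/
def halfIncrement (W : Fin N → Bool → Ω → κ → ℝ) (b : Bool) (t : ℕ) : Ω → κ → ℝ :=
  if h : t.div2 < N then W ⟨t.div2, h⟩ (b ^^ t.bodd) else 0

lemma halfIncrement_of_lt (b : Bool) {t : ℕ} (ht : t.div2 < N) :
    halfIncrement W b t = W ⟨t.div2, ht⟩ (b ^^ t.bodd) :=
  dif_pos ht

lemma halfIncrement_two_mul (b : Bool) (n : Fin N) :
    halfIncrement W b (2 * n) = W n b := by
  simp [halfIncrement, Nat.div2_val]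

lemma halfIncrement_two_mul_add_one (b : Bool) (n : Fin N) :
    halfIncrement W b (2 * n + 1) = W n !b := by
  simp [halfIncrement, Nat.div2_val]

/-- The half step in which the fine (`b = false`) or antithetic (`b = true`) path uses a coordinate
of the noise. -/
def halfStepIndex (b : Bool) (q : Fin N × Bool × κ) : ℕ := 2 * q.1 + (b ^^ q.2.1).toNat

lemma halfStepIndex_xor_bodd (b : Bool) {t : ℕ} (ht : t.div2 < N) (j : κ) :
    halfStepIndex b (⟨t.div2, ht⟩, b ^^ t.bodd, j) = t := by
  simp [halfStepIndex, add_comm, Nat.bodd_add_div2]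

lemma halfStepIndex_lt_two_mul_iff (b : Bool) (q : Fin N × Bool × κ) (n : ℕ) :
    halfStepIndex b q < 2 * n ↔ (q.1 : ℕ) < n := by
  have h_le := (b ^^ q.2.1).toNat_le
  rw [halfStepIndex]
  omega

namespace IsHalfStepNoise

/-- The past of the fine (`b = false`) or antithetic (`b = true`) path. -/
def finePast (hW : IsHalfStepNoise μ δ W) (b : Bool) : Filtration ℕ mΩ :=
  pastFiltration (ι := Fin N × Bool × κ) (fun q => hW.measurable q.1 q.2.1 q.2.2)
    (halfStepIndex b)

/-- The past of the coarse path. -/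
def coarsePast (hW : IsHalfStepNoise μ δ W) : Filtration ℕ mΩ :=
  pastFiltration (ι := Fin N × Bool × κ) (fun q => hW.measurable q.1 q.2.1 q.2.2) fun q => q.1

lemma finePast_two_mul (hW : IsHalfStepNoise μ δ W) (b : Bool) (n : ℕ) :
    hW.finePast b (2 * n) = hW.coarsePast n := by
  simp only [finePast, coarsePast, pastFiltration, halfStepIndex_lt_two_mul_iff]

lemma hasLaw (hW : IsHalfStepNoise μ δ W) (n : Fin N) (c : Bool) (j : κ) :
    HasLaw (fun ω => W n c ω j) (gaussianReal 0 δ) μ :=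
  ⟨(hW.measurable n c j).aemeasurable, hW.map_eq n c j⟩

lemma hasLaw_add (hW : IsHalfStepNoise μ δ W) (n : Fin N) (j : κ) :
    HasLaw (fun ω => (W n false + W n true) ω j) (gaussianReal 0 (2 * δ)) μ where
  aemeasurable := ((hW.measurable n false j).add (hW.measurable n true j)).aemeasurable
  map_eq := by
    have h_ne : (n, false, j) ≠ (n, true, j) := by simp
    have h_law := gaussianReal_add_gaussianReal_of_indepFun (hW.indep.indepFun h_ne)
      (hW.map_eq n false j) (hW.map_eq n true j)
    rw [add_zero, ← two_mul] at h_law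
    exact h_law

lemma isBrownianIncrement_fine (hW : IsHalfStepNoise μ δ W) (b : Bool) {t : ℕ}
    (ht : t < 2 * N) : IsBrownianIncrement (hW.finePast b t) μ δ (halfIncrement W b t) := by
  have h_div : t.div2 < N := by rw [Nat.div2_val]; omega
  rw [halfIncrement_of_lt b h_div]
  refine isBrownianIncrement_of_disjoint (S := fun j => {(⟨t.div2, h_div⟩, b ^^ t.bodd, j)})
    (fun q => hW.measurable q.1 q.2.1 q.2.2) hW.indep
    (fun j => measurable_sigmaAlgebraOn (Set.mem_singleton _)) (fun j k hjk => ?_) (fun j => ?_)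
    fun j => hW.hasLaw _ _ j
  · simpa using hjk
  · simp [halfStepIndex_xor_bodd]

lemma measurable_fine (hW : IsHalfStepNoise μ δ W) (b : Bool) {t : ℕ}
    (ht : t < 2 * N) : Measurable[hW.finePast b (t + 1)] (halfIncrement W b t) := by
  have h_div : t.div2 < N := by rw [Nat.div2_val]; omega
  rw [halfIncrement_of_lt b h_div]
  refine @measurable_pi_lambda _ _ _ (hW.finePast b (t + 1)) _ _ fun j => ?_
  refine measurable_sigmaAlgebraOn (ι := Fin N × Bool × κ)
    (q := (⟨t.div2, h_div⟩, b ^^ t.bodd, j)) ?_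
  simp [halfStepIndex_xor_bodd]

lemma isBrownianIncrement_coarse (hW : IsHalfStepNoise μ δ W) (n : Fin N) :
    IsBrownianIncrement (hW.coarsePast n) μ (2 * δ) (W n false + W n true) := by
  refine isBrownianIncrement_of_disjoint (S := fun j => {q | q.1 = n ∧ q.2.2 = j})
    (fun q => hW.measurable q.1 q.2.1 q.2.2) hW.indep (fun j => ?_) (fun j k hjk => ?_)
    (fun j => ?_) (hW.hasLaw_add n)
  · have h_half (c : Bool) := measurable_sigmaAlgebraOn (V := fun (q : Fin N × Bool × κ) ω =>
      W q.1 q.2.1 ω q.2.2) (A := {q | q.1 = n ∧ q.2.2 = j}) (q := (n, c, j)) ⟨rfl, rfl⟩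
    exact (h_half false).add (h_half true)
  · exact Set.disjoint_left.2 fun q hq hq' => hjk (hq.2.symm.trans hq'.2)
  · exact Set.disjoint_left.2 fun q hq hq' => hq'.ne (congrArg Fin.val hq.1)

end IsHalfStepNoise

end HalfStepNoise

section Coordinates

variable {d m : ℕ} {K : ℝ≥0} {f : (Fin d → ℝ) → Fin d → ℝ} {g : (Fin d → ℝ) → Fin d → Fin m → ℝ}

/-- The vector field in the `j`-th column of the diffusion matrix `g`. -/
def column (g : (Fin d → ℝ) → Fin d → Fin m → ℝ) (j : Fin m) (x : Fin d → ℝ) : Fin d → ℝ :=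
  fun i => g x i j

lemma IsC11.column (hg : IsC11 K g) (j : Fin m) : IsC11 K (column g j) := by
  let L : (Fin d → Fin m → ℝ) →L[ℝ] Fin d → ℝ := .pi fun i => .proj j ∘L .proj i
  have hL : ‖L‖₊ ≤ 1 := L.opNNNorm_le_bound 1 fun x => by
    rw [one_mul]
    exact pi_nnnorm_le_iff.2 fun i => (nnnorm_le_pi_nnnorm (x i) j).trans (nnnorm_le_pi_nnnorm x i)
  exact (hg.clm_comp L).mono (mul_le_of_le_one_left' hL)

lemma milsteinH_eq_milsteinCorrection {k : Fin m} (hg : Differentiable ℝ (column g k))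
    (x : Fin d → ℝ) (i : Fin d) (j : Fin m) :
    milsteinH g x i j k = milsteinCorrection (column g) x j k i := by
  have h_coord : fderiv ℝ (fun y => g y i k) x = .proj i ∘L fderiv ℝ (column g k) x :=
    (hasFDerivAt_pi'.1 (hg x).hasFDerivAt i).fderiv
  have h_expand : column g j x = ∑ l, g x l j • Pi.single l 1 := pi_eq_sum_univ' _
  simp only [milsteinCorrection, h_expand, map_sum, map_smul]
  simp [milsteinH, h_coord]

lemma milsteinStep_eq_milsteinMap (hg : ∀ j, Differentiable ℝ (column g j)) (δ : ℝ)
    (x : Fin d → ℝ) (w : Fin m → ℝ) :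
    milsteinStep f g δ x w = milsteinMap f (column g) δ x w := by
  ext i
  simp only [milsteinStep, milsteinMap, milsteinDiffusion, milsteinNoise,
    milsteinH_eq_milsteinCorrection (hg _), Pi.add_apply, Finset.sum_apply, Pi.smul_apply,
    smul_eq_mul, column, iteratedIncrement, mul_comm, add_assoc]

end Coordinates

section Construction

variable {Ω : Type u} {κ E : Type*} [Fintype κ] [DecidableEq κ] [NormedAddCommGroup E]
  [NormedSpace ℝ E] {mΩ : MeasurableSpace Ω} {μ : Measure Ω} {δ : ℝ≥0} {N : ℕ}
  {W : Fin N → Bool → Ω → κ → ℝ} {f : E → E} {g : κ → E → E} {x₀ : E}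

lemma IsHalfStepNoise.isMilsteinPath_fine (hW : IsHalfStepNoise μ δ W) {b : Bool} {X : ℕ → Ω → E}
    (h_zero : ∀ ω, X 0 ω = x₀)
    (h_first : ∀ (n : Fin N) ω, X (2 * n + 1) ω = milsteinMap f g δ (X (2 * n) ω) (W n b ω))
    (h_second : ∀ (n : Fin N) ω,
      X (2 * n + 2) ω = milsteinMap f g δ (X (2 * n + 1) ω) (W n (!b) ω)) :
    IsMilsteinPath f g x₀ δ (2 * N) (hW.finePast b) μ (halfIncrement W b) X where
  zero := h_zero
  succ t ht ω := by
    obtain ⟨n, rfl | rfl⟩ := t.even_or_odd'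
    · have hn : n < N := by omega
      exact halfIncrement_two_mul b ⟨n, hn⟩ ▸ h_first ⟨n, hn⟩ ω
    · have hn : n < N := by omega
      exact halfIncrement_two_mul_add_one b ⟨n, hn⟩ ▸ h_second ⟨n, hn⟩ ω
  increment _ := hW.isBrownianIncrement_fine b
  measurable _ := hW.measurable_fine b

lemma IsHalfStepNoise.isMilsteinPath_coarse (hW : IsHalfStepNoise μ δ W) {X : ℕ → Ω → E}
    (h_zero : ∀ ω, X 0 ω = x₀) (h_succ : ∀ (n : Fin N) ω,
      X (n + 1) ω = milsteinMap f g (2 * δ) (X n ω) (W n false ω + W n true ω)) :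
    IsMilsteinPath f g x₀ (2 * δ) N hW.coarsePast μ
      (fun n => halfIncrement W false (2 * n) + halfIncrement W false (2 * n + 1)) X where
  zero := h_zero
  succ n hn ω := by
    rw [halfIncrement_two_mul false ⟨n, hn⟩, halfIncrement_two_mul_add_one false ⟨n, hn⟩]
    exact_mod_cast h_succ ⟨n, hn⟩ ω
  increment n hn := by
    rw [halfIncrement_two_mul false ⟨n, hn⟩, halfIncrement_two_mul_add_one false ⟨n, hn⟩]
    exact hW.isBrownianIncrement_coarse ⟨n, hn⟩
  measurable n hn := by
    rw [← hW.finePast_two_mul false]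
    exact ((hW.measurable_fine false (by omega)).mono ((hW.finePast false).mono (by omega))
      le_rfl).add (hW.measurable_fine false (by omega))

/-- The antithetic scheme with half steps of length `h ^ 2` and driving noise `W`. -/
def AntitheticScheme.ofHalfStepNoise [IsProbabilityMeasure μ] {h T : ℝ≥0}
    (h_horizon : N * (2 * h ^ 2) ≤ T) (hW : IsHalfStepNoise μ (h ^ 2) W) (X : Bool → ℕ → Ω → E)
    (Xc : ℕ → Ω → E)
    (hX : ∀ b, IsMilsteinPath f g x₀ (h ^ 2) (2 * N) (hW.finePast b) μ (halfIncrement W b) (X b))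
    (hXc : IsMilsteinPath f g x₀ (2 * h ^ 2) N hW.coarsePast μ
      (fun n => halfIncrement W false (2 * n) + halfIncrement W false (2 * n + 1)) Xc) :
    AntitheticScheme f g T x₀ where
  Ω := Ω
  mΩ := mΩ
  μ := μ
  isProbabilityMeasure := inferInstance
  N := N
  h := h
  le_horizon := h_horizon
  𝓕 := hW.coarsePast
  𝓗 := hW.finePast
  w := halfIncrement W
  X := X
  Xc := Xc
  past_eq := hW.finePast_two_mul
  swap_even n := by simp [halfIncrement, Nat.div2_val]
  swap_odd n := by simp [halfIncrement, Nat.div2_val]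
  fine := hX
  coarse := hXc

end Construction

lemma exists_nnreal_sq_eq_half_div {T : ℝ} (hT : 0 ≤ T) {N : ℕ} (hN : 1 ≤ N) :
    ∃ h : ℝ≥0, h ^ 2 = (T / N / 2).toNNReal ∧ T / N / 2 = (h ^ 2 : ℝ≥0)
      ∧ N * (2 * h ^ 2) ≤ T.toNNReal := by
  refine ⟨NNReal.sqrt (T / N / 2).toNNReal, NNReal.sq_sqrt _, ?_, ?_⟩
  · rw [NNReal.sq_sqrt, Real.coe_toNNReal _ (by positivity)]
  · refine NNReal.le_toNNReal_of_coe_le (le_of_eq ?_)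
    rw [NNReal.sq_sqrt]
    push_cast
    rw [Real.coe_toNNReal _ (by positivity)]
    field_simp

section MomentBound

variable {κ E : Type*} [Fintype κ] [DecidableEq κ] [NormedAddCommGroup E] [NormedSpace ℝ E]
  [FiniteDimensional ℝ E] {K : ℝ≥0} {f : E → E} {g : κ → E → E}

lemma sup'_rpow {ι : Type*} {s : Finset ι} (hs : s.Nonempty) {a : ι → ℝ} (ha : ∀ i, 0 ≤ a i)
    {p : ℝ} (hp : 0 ≤ p) : s.sup' hs (fun i => a i ^ p) = s.sup' hs a ^ p := by
  obtain ⟨i, hi, h_max⟩ := s.exists_mem_eq_sup' hs a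
  refine le_antisymm (Finset.sup'_le hs _ fun j hj => ?_) ?_
  · exact Real.rpow_le_rpow (ha j) (s.le_sup' a hj) hp
  · exact h_max ▸ s.le_sup' (fun i => a i ^ p) hi

theorem AntitheticScheme.exists_integral_sup'_norm_averageError_rpow_le (hf : IsC11 K f)
    (hg : ∀ k, IsC11 K (g k)) (T : ℝ≥0) (x₀ : E) {p : ℝ} (hp : 0 < p) :
    ∃ C : ℝ≥0, ∀ S : AntitheticScheme.{u} f g T x₀,
      ∫ ω, (Finset.range (S.N + 1)).sup' Finset.nonempty_range_add_one
        (fun n => ‖S.averageError n ω‖ ^ p) ∂S.μ ≤ C * (S.h ^ 2 : ℝ≥0) ^ p := by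
  have h_sup := lpBigO_sup'_norm_averageError.{u} (T := T) (x₀ := x₀) hf hg
  simp only [← ENNReal.coe_pow] at h_sup
  obtain ⟨C, hC⟩ := h_sup.exists_integral_norm_rpow_le hp
  refine ⟨C, fun S => (hC S).trans_eq' (integral_congr_ae (.of_forall fun ω => ?_))⟩
  have h_nonneg : 0 ≤ (Finset.range (S.N + 1)).sup' Finset.nonempty_range_add_one
      fun n => ‖S.averageError n ω‖ :=
    Finset.le_sup'_of_le _ (Finset.mem_range.2 S.N.succ_pos) (norm_nonneg _)
  dsimp only
  rw [sup'_rpow _ (fun n => norm_nonneg _) hp.le, Finset.sup'_apply, Real.norm_of_nonneg h_nonneg]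

end MomentBound

end AntitheticMilstein

open AntitheticMilstein in
theorem antithetic_milstein_average_coarse_difference_general {κ E : Type*} [Fintype κ]
    [DecidableEq κ] [NormedAddCommGroup E] [NormedSpace ℝ E] [FiniteDimensional ℝ E] {T : ℝ}
    (hT : 0 ≤ T) {L : ℝ≥0} {f : E → E} {g : κ → E → E} (hf : IsC11 L f) (hg : ∀ j, IsC11 L (g j))
    (x₀ : E) {p : ℝ} (hp : 0 < p) :
    ∃ K : ℝ, ∀ N : ℕ, 1 ≤ N →
      ∀ (Ω : Type*) (_ : MeasurableSpace Ω) (μ : Measure Ω), IsProbabilityMeasure μ →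
      ∀ (W : Fin N → Bool → Ω → κ → ℝ) (Xf Xa Xc : ℕ → Ω → E),
        IsHalfStepNoise μ (T / N / 2).toNNReal W →
        (∀ ω, Xf 0 ω = x₀) → (∀ ω, Xa 0 ω = x₀) → (∀ ω, Xc 0 ω = x₀) →
        (∀ (n : Fin N) ω,
          Xf (2 * n + 1) ω = milsteinMap f g (T / N / 2) (Xf (2 * n) ω) (W n false ω)) →
        (∀ (n : Fin N) ω,
          Xf (2 * n + 2) ω = milsteinMap f g (T / N / 2) (Xf (2 * n + 1) ω) (W n true ω)) →
        (∀ (n : Fin N) ω,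
          Xa (2 * n + 1) ω = milsteinMap f g (T / N / 2) (Xa (2 * n) ω) (W n true ω)) →
        (∀ (n : Fin N) ω,
          Xa (2 * n + 2) ω = milsteinMap f g (T / N / 2) (Xa (2 * n + 1) ω) (W n false ω)) →
        (∀ (n : Fin N) ω,
          Xc (n + 1) ω = milsteinMap f g (T / N) (Xc n ω) (W n false ω + W n true ω)) →
        ∫ ω, (Finset.range (N + 1)).sup' Finset.nonempty_range_add_one
            (fun n => ‖(2⁻¹ : ℝ) • (Xf (2 * n) ω + Xa (2 * n) ω) - Xc n ω‖ ^ p) ∂μ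
          ≤ K * (T / N) ^ p := by
  obtain ⟨C, hC⟩ :=
    AntitheticScheme.exists_integral_sup'_norm_averageError_rpow_le hf hg T.toNNReal x₀ hp
  refine ⟨C, fun N hN Ω _ μ _ W Xf Xa Xc hW hXf hXa hXc hXf₁ hXf₂ hXa₁ hXa₂ hXc₁ => ?_⟩
  obtain ⟨h, hh, h_half, h_horizon⟩ := exists_nnreal_sq_eq_half_div hT hN
  have h_full : T / N = 2 * (h ^ 2 : ℝ≥0) := by linarith
  rw [← hh] at hW
  rw [h_half] at hXf₁ hXf₂ hXa₁ hXa₂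
  rw [h_full] at hXc₁
  refine (hC (.ofHalfStepNoise h_horizon hW (fun b => cond b Xa Xf) Xc
    (Bool.forall_bool.2 ⟨hW.isMilsteinPath_fine hXf hXf₁ hXf₂,
      hW.isMilsteinPath_fine hXa hXa₁ hXa₂⟩) (hW.isMilsteinPath_coarse hXc hXc₁))).trans ?_
  gcongr
  change ((h ^ 2 : ℝ≥0) : ℝ) ≤ _
  linarith [(h ^ 2).coe_nonneg]

/-- in the antithetic Milstein setting (fine path `Xf` on the fine grid of
spacing `Δt/2`, with `Xf (2n)` the value at coarse time `n Δt`; antithetic path `Xa` with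
the two half-step Brownian increments swapped in each coarse step; `X̄_n = ½(Xf_n + Xa_n)`),
for every `p ≥ 2` there is a constant `K_p`, depending only on `p, T, f, g`, with
`E[max_{0≤n≤N} ‖X̄_n − Xc_n‖^p] ≤ K_p Δt^p` for every `N ≥ 1`, `Δt = T/N`. -/
theorem antithetic_milstein_average_coarse_difference
    {d m : ℕ} (hd : 0 < d) (hm : 0 < m) (T : ℝ) (hT : 0 < T)
    (f : (Fin d → ℝ) → Fin d → ℝ) (g : (Fin d → ℝ) → Fin d → Fin m → ℝ)
    (hf : ContDiff ℝ 2 f) (hg : ContDiff ℝ 2 g) (Cfg : ℝ)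
    (hf1 : ∀ x, ‖fderiv ℝ f x‖ ≤ Cfg) (hf2 : ∀ x, ‖iteratedFDeriv ℝ 2 f x‖ ≤ Cfg)
    (hg1 : ∀ x, ‖fderiv ℝ g x‖ ≤ Cfg) (hg2 : ∀ x, ‖iteratedFDeriv ℝ 2 g x‖ ≤ Cfg)
    (x₀ : Fin d → ℝ) (p : ℝ) (hp : 2 ≤ p) :
    ∃ K : ℝ, ∀ N : ℕ, 1 ≤ N →
      ∀ (Ω : Type) (_ : MeasurableSpace Ω) (μ : Measure Ω), IsProbabilityMeasure μ →
      ∀ (W : Fin N → Bool → Ω → Fin m → ℝ) (Xf Xa Xc : ℕ → Ω → Fin d → ℝ),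
        (∀ n b j, Measurable fun ω => W n b ω j) →
        (∀ n b j, μ.map (fun ω => W n b ω j) = gaussianReal 0 (Real.toNNReal (T / N / 2))) →
        iIndepFun
          (fun q : Fin N × Bool × Fin m => fun ω => W q.1 q.2.1 ω q.2.2) μ →
        (∀ ω, Xf 0 ω = x₀) → (∀ ω, Xa 0 ω = x₀) → (∀ ω, Xc 0 ω = x₀) →
        (∀ (n : Fin N) ω, Xf (2 * (n : ℕ) + 1) ω
            = milsteinStep f g (T / N / 2) (Xf (2 * (n : ℕ)) ω) (W n false ω)) →
        (∀ (n : Fin N) ω, Xf (2 * (n : ℕ) + 2) ω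
            = milsteinStep f g (T / N / 2) (Xf (2 * (n : ℕ) + 1) ω) (W n true ω)) →
        (∀ (n : Fin N) ω, Xa (2 * (n : ℕ) + 1) ω
            = milsteinStep f g (T / N / 2) (Xa (2 * (n : ℕ)) ω) (W n true ω)) →
        (∀ (n : Fin N) ω, Xa (2 * (n : ℕ) + 2) ω
            = milsteinStep f g (T / N / 2) (Xa (2 * (n : ℕ) + 1) ω) (W n false ω)) →
        (∀ (n : Fin N) ω, Xc ((n : ℕ) + 1) ω
            = milsteinStep f g (T / N) (Xc (n : ℕ) ω) (W n false ω + W n true ω)) →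
        (∫ ω, (Finset.range (N + 1)).sup'
            (Finset.nonempty_range_iff.mpr (Nat.succ_ne_zero N))
            (fun n => ‖(2⁻¹ : ℝ) • (Xf (2 * n) ω + Xa (2 * n) ω) - Xc n ω‖ ^ p) ∂μ)
          ≤ K * (T / N) ^ p := by
  have hf_C11 := AntitheticMilstein.IsC11.of_contDiff hf hf1 hf2
  have hg_C11 := AntitheticMilstein.IsC11.of_contDiff hg hg1 hg2
  obtain ⟨K, hK⟩ := antithetic_milstein_average_coarse_difference_general hT.le hf_C11
    hg_C11.column x₀ (two_pos.trans_le hp)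
  simp only [← AntitheticMilstein.milsteinStep_eq_milsteinMap
    fun j => (hg_C11.column j).differentiable] at hK
  exact ⟨K, fun N hN Ω _ μ _ W Xf Xa Xc hW_meas hW_law hW_indep =>
    hK N hN Ω _ μ inferInstance W Xf Xa Xc ⟨hW_meas, hW_law, hW_indep⟩⟩
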